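/- Let A* be a block-nondegenerate globally optimal solution, i.e., a block-nondegenerate maximizer of f over the feasible set. Then there exists δ > 0 such that every greedy HOOI sequence {A^k}_{k≥0} with ‖A⁰ − A*‖_F ≤ δ converges (blockwise in Frobenius norm) to a feasible point Ā that is a globally optimal solution, i.e., f(Ā) equals the maximum of f over all feasible points. -/

import Mathlib

open Matrix BigOperators Filter

def froSq {ι κ : Type*} [Fintype ι] [Fintype κ] (M : Matrix ι κ ℝ) : ℝ :=
  ∑ i, ∑ j, (M i j) ^ 2

noncomputable def fro {ι κ : Type*} [Fintype ι] [Fintype κ] (M : Matrix ι κ ℝ) : ℝ :=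
  Real.sqrt (froSq M)

noncomputable def eigList {m : ℕ} {κ : Type*} [Fintype κ] (Y : Matrix (Fin m) κ ℝ) : List ℝ :=
  ((((Finset.univ : Finset (Fin m)).val.map
      (fun j => (Matrix.isHermitian_mul_conjTranspose_self Y).eigenvalues j)).sort (· ≤ ·)).reverse)

noncomputable def sval {m : ℕ} {κ : Type*} [Fintype κ] (Y : Matrix (Fin m) κ ℝ) (i : ℕ) : ℝ :=
  Real.sqrt ((eigList Y).getD (i - 1) 0)

/-- Feasibility: every factor matrix has orthonormal columns. -/
def TFeas {N : ℕ} {I r : Fin N → ℕ}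
    (A : (n : Fin N) → Matrix (Fin (I n)) (Fin (r n)) ℝ) : Prop :=
  ∀ n, (A n)ᵀ * A n = 1

/-- `Gₙ(A) = unfoldₙ(X ×₁ A₁ᵀ ⋯ ×_{n−1} A_{n−1}ᵀ ×_{n+1} A_{n+1}ᵀ ⋯ ×_N A_Nᵀ)`. -/
noncomputable def Gmat {N : ℕ} {I r : Fin N → ℕ} (X : ((n : Fin N) → Fin (I n)) → ℝ)
    (A : (n : Fin N) → Matrix (Fin (I n)) (Fin (r n)) ℝ) (n : Fin N) :
    Matrix (Fin (I n)) ((m : {m : Fin N // m ≠ n}) → Fin (r m.1)) ℝ :=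
  fun j c => ∑ idx : ((m : {m : Fin N // m ≠ n}) → Fin (I m.1)),
    X (fun i => if h : i = n then Fin.cast (by rw [h]) j else idx ⟨i, h⟩) *
      ∏ m : {m : Fin N // m ≠ n}, A m.1 (idx m) (c m)

/-- `f(A) = ‖X ×₁ A₁ᵀ ⋯ ×_N A_Nᵀ‖_F²`. -/
noncomputable def fval {N : ℕ} {I r : Fin N → ℕ} (X : ((n : Fin N) → Fin (I n)) → ℝ)
    (A : (n : Fin N) → Matrix (Fin (I n)) (Fin (r n)) ℝ) : ℝ :=
  ∑ c : ((n : Fin N) → Fin (r n)),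
    (∑ idx : ((n : Fin N) → Fin (I n)), X idx * ∏ n, A n (idx n) (c n)) ^ 2

/-- A critical point: `Gₙ(A)Gₙ(A)ᵀAₙ = AₙAₙᵀGₙ(A)Gₙ(A)ᵀAₙ` for all `n`. -/
def Critical {N : ℕ} {I r : Fin N → ℕ} (X : ((n : Fin N) → Fin (I n)) → ℝ)
    (A : (n : Fin N) → Matrix (Fin (I n)) (Fin (r n)) ℝ) : Prop :=
  ∀ n, Gmat X A n * (Gmat X A n)ᵀ * A n =
    A n * (A n)ᵀ * (Gmat X A n * (Gmat X A n)ᵀ * A n)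

/-- A block-wise maximizer. -/
def BlockMax {N : ℕ} {I r : Fin N → ℕ} (X : ((n : Fin N) → Fin (I n)) → ℝ)
    (A : (n : Fin N) → Matrix (Fin (I n)) (Fin (r n)) ℝ) : Prop :=
  ∀ n, ∀ B : Matrix (Fin (I n)) (Fin (r n)) ℝ, Bᵀ * B = 1 →
    froSq (Bᵀ * Gmat X A n) ≤ froSq ((A n)ᵀ * Gmat X A n)

/-- Block-nondegeneracy: `σ_{rₙ}(Gₙ(A)) > σ_{rₙ+1}(Gₙ(A))` for all `n`. -/
def NonDeg {N : ℕ} {I r : Fin N → ℕ} (X : ((n : Fin N) → Fin (I n)) → ℝ)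
    (A : (n : Fin N) → Matrix (Fin (I n)) (Fin (r n)) ℝ) : Prop :=
  ∀ n, sval (Gmat X A n) (r n + 1) < sval (Gmat X A n) (r n)

/-- The hybrid tuple used in HOOI: the already-updated blocks `i < n` come from
`Anew`, the rest from `Aold`. -/
def hyb {N : ℕ} {I r : Fin N → ℕ}
    (Aold Anew : (n : Fin N) → Matrix (Fin (I n)) (Fin (r n)) ℝ) (n : Fin N) :
    (i : Fin N) → Matrix (Fin (I i)) (Fin (r i)) ℝ :=
  fun i => if i < n then Anew i else Aold i

/-- `Gₙ^k = unfoldₙ(X ×₁ (A₁^{k+1})ᵀ ⋯ ×_{n−1} (A_{n−1}^{k+1})ᵀ ×_{n+1} (A_{n+1}^k)ᵀ ⋯ ×_N (A_N^k)ᵀ)`. -/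
noncomputable def Gseq {N : ℕ} {I r : Fin N → ℕ} (X : ((n : Fin N) → Fin (I n)) → ℝ)
    (A : ℕ → (n : Fin N) → Matrix (Fin (I n)) (Fin (r n)) ℝ) (k : ℕ) (n : Fin N) :
    Matrix (Fin (I n)) ((m : {m : Fin N // m ≠ n}) → Fin (r m.1)) ℝ :=
  Gmat X (hyb (A k) (A (k + 1)) n) n

/-- A HOOI sequence. -/
def IsHOOI {N : ℕ} {I r : Fin N → ℕ} (X : ((n : Fin N) → Fin (I n)) → ℝ)
    (A : ℕ → (n : Fin N) → Matrix (Fin (I n)) (Fin (r n)) ℝ) : Prop :=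
  (∀ k, TFeas (A k)) ∧
  ∀ k (n : Fin N), ∀ B : Matrix (Fin (I n)) (Fin (r n)) ℝ, Bᵀ * B = 1 →
    froSq (Bᵀ * Gseq X A k n) ≤ froSq ((A (k + 1) n)ᵀ * Gseq X A k n)

/-- A greedy HOOI sequence. -/
def IsGreedyHOOI {N : ℕ} {I r : Fin N → ℕ} (X : ((n : Fin N) → Fin (I n)) → ℝ)
    (A : ℕ → (n : Fin N) → Matrix (Fin (I n)) (Fin (r n)) ℝ) : Prop :=
  IsHOOI X A ∧
  ∀ k (n : Fin N), ∀ B : Matrix (Fin (I n)) (Fin (r n)) ℝ, Bᵀ * B = 1 →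
    (∀ C : Matrix (Fin (I n)) (Fin (r n)) ℝ, Cᵀ * C = 1 →
      froSq (Cᵀ * Gseq X A k n) ≤ froSq (Bᵀ * Gseq X A k n)) →
    fro (A (k + 1) n - A k n) ≤ fro (B - A k n)

/-- `Ā` is a limit point of the sequence `{A^k}` (blockwise in Frobenius norm). -/
def IsLimitPt {N : ℕ} {I r : Fin N → ℕ}
    (A : ℕ → (n : Fin N) → Matrix (Fin (I n)) (Fin (r n)) ℝ)
    (Abar : (n : Fin N) → Matrix (Fin (I n)) (Fin (r n)) ℝ) : Prop :=
  ∃ φ : ℕ → ℕ, StrictMono φ ∧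
    ∀ n, Tendsto (fun k => fro (A (φ k) n - Abar n)) atTop (nhds 0)

/-- `‖A − B‖_F = √(∑ₙ ‖Aₙ − Bₙ‖_F²)` on tuples. -/
noncomputable def tdist {N : ℕ} {I r : Fin N → ℕ}
    (A B : (n : Fin N) → Matrix (Fin (I n)) (Fin (r n)) ℝ) : ℝ :=
  Real.sqrt (∑ n, froSq (A n - B n))

/-- A local maximizer of `f` over the feasible set. -/
def LocalMax {N : ℕ} {I r : Fin N → ℕ} (X : ((n : Fin N) → Fin (I n)) → ℝ)
    (A : (n : Fin N) → Matrix (Fin (I n)) (Fin (r n)) ℝ) : Prop :=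
  TFeas A ∧ ∃ ε > (0 : ℝ), ∀ B : (n : Fin N) → Matrix (Fin (I n)) (Fin (r n)) ℝ,
    TFeas B → tdist B A ≤ ε → fval X B ≤ fval X A

/-- A globally optimal solution. -/
def GlobalMax {N : ℕ} {I r : Fin N → ℕ} (X : ((n : Fin N) → Fin (I n)) → ℝ)
    (A : (n : Fin N) → Matrix (Fin (I n)) (Fin (r n)) ℝ) : Prop :=
  TFeas A ∧ ∀ B : (n : Fin N) → Matrix (Fin (I n)) (Fin (r n)) ℝ,
    TFeas B → fval X B ≤ fval X A


section Chunk1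
open Matrix BigOperators Filter

namespace QE
open Polynomial

theorem adj_left (p : ℝ[X]) (A : Finset ℝ) (hA : ∀ a, p.derivative.eval a = 0 → a ∈ A)
    (x : ℝ) (hx : x ∉ A) (hp : 0 < p.eval x) (hd : 0 < p.derivative.eval x) :
    ∃ w, w < x ∧ (∀ a ∈ A, ¬ (w < a ∧ a < x)) ∧ (w ∈ A ∨ p.eval w = 0) ∧ 0 ≤ p.eval w := by
  classical
  have hcont : Continuous fun z => p.eval z := p.continuous
  have hdcont : Continuous fun z => p.derivative.eval z := p.derivative.continuous
  by_cases hne : (A.filter (· < x)).Nonempty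
  · set a := (A.filter (· < x)).max' hne with ha
    have ham := Finset.max'_mem _ hne
    rw [← ha, Finset.mem_filter] at ham
    have hmax : ∀ b ∈ A, b < x → b ≤ a := fun b hb hbx =>
      Finset.le_max' _ _ (Finset.mem_filter.2 ⟨hb, hbx⟩)
    by_cases hpa : 0 ≤ p.eval a
    · exact ⟨a, ham.2, fun b hb h => absurd (hmax b hb h.2) (not_le.2 h.1), Or.inl ham.1, hpa⟩
    · push Not at hpa
      obtain ⟨w, hw, hw0⟩ := intermediate_value_Icc ham.2.le hcont.continuousOn
        (show (0:ℝ) ∈ Set.Icc (p.eval a) (p.eval x) from ⟨hpa.le, hp.le⟩)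
      simp only at hw0
      have hwx : w < x := lt_of_le_of_ne hw.2 (by rintro rfl; linarith)
      have haw : a < w := lt_of_le_of_ne hw.1 (by intro h; rw [← h] at hw0; linarith)
      exact ⟨w, hwx, fun b hb h => absurd (hmax b hb h.2) (not_le.2 (haw.trans h.1)),
        Or.inr hw0, hw0.ge⟩
  · have hno : ∀ b ∈ A, ¬ b < x := fun b hb hbx => hne ⟨b, Finset.mem_filter.2 ⟨hb, hbx⟩⟩
    suffices h : ∃ w < x, p.eval w = 0 by
      obtain ⟨w, hw, h0⟩ := h
      exact ⟨w, hw, fun b hb h => hno b hb h.2, Or.inr h0, h0.ge⟩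
    by_contra hcon
    push Not at hcon
    -- p' > 0 on (-∞, x]
    have hd' : ∀ z ≤ x, 0 < p.derivative.eval z := by
      intro z hz
      by_contra hz0
      push Not at hz0
      obtain ⟨w, hw, hw0⟩ := intermediate_value_Icc hz hdcont.continuousOn
        (show (0:ℝ) ∈ Set.Icc (p.derivative.eval z) (p.derivative.eval x) from ⟨hz0, hd.le⟩)
      have := hA w hw0
      rcases hw.2.lt_or_eq with h | h
      · exact hno w this h
      · exact hx (h ▸ this)
    have hmono : StrictMonoOn (fun z => p.eval z) (Set.Iic x) := by
      apply strictMonoOn_of_deriv_pos (convex_Iic x) hcont.continuousOn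
      intro z hz
      rw [interior_Iic] at hz
      rw [Polynomial.deriv]
      exact hd' z hz.le
    have hpos : ∀ z ≤ x, 0 < p.eval z := by
      intro z hz
      by_contra hz0
      push Not at hz0
      obtain ⟨w, hw, hw0⟩ := intermediate_value_Icc hz hcont.continuousOn
        (show (0:ℝ) ∈ Set.Icc (p.eval z) (p.eval x) from ⟨hz0, hp.le⟩)
      rcases hw.2.lt_or_eq with h | h
      · exact hcon w h hw0
      · subst h; simp only at hw0; linarith
    set q := p.comp (-X) with hq
    have hqe : ∀ z, q.eval z = p.eval (-z) := by intro z; simp [hq]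
    have hdeg : 0 < q.degree := by
      by_contra hdeg
      push Not at hdeg
      have := Polynomial.eq_C_of_degree_le_zero hdeg
      have h1 := hqe (-x)
      have h2 := hqe (-(x-1))
      rw [this] at h1 h2
      simp only [eval_C, neg_neg] at h1 h2
      have := hmono (show x - 1 ∈ Set.Iic x by simp) (show x ∈ Set.Iic x by simp) (by linarith)
      simp only at this
      linarith
    have ht := q.abs_tendsto_atTop hdeg
    obtain ⟨z, hz1, hz2⟩ := ((ht.eventually_gt_atTop (p.eval x)).and
      (eventually_ge_atTop (-x))).exists
    rw [hqe, abs_of_pos (hpos _ (by linarith))] at hz1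
    have := hmono.monotoneOn (show -z ∈ Set.Iic x by simp; linarith) (show x ∈ Set.Iic x by simp)
      (by linarith)
    linarith

theorem adj (p : ℝ[X]) (A : Finset ℝ) (hA : ∀ a, p.derivative.eval a = 0 → a ∈ A)
    (x : ℝ) (hx : x ∉ A) (hp : p.eval x ≠ 0) :
    ∃ w, (∀ a ∈ A, ¬ (w < a ∧ a < x) ∧ ¬ (x < a ∧ a < w)) ∧ (w ∈ A ∨ p.eval w = 0) ∧
      0 ≤ p.eval w * p.eval x ∧ 0 < (x - w) * (p.eval x * p.derivative.eval x) := by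
  classical
  have hd : p.derivative.eval x ≠ 0 := fun h => hx (hA x h)
  -- left cases
  have key : ∀ (p : ℝ[X]) (A : Finset ℝ) (hA : ∀ a, p.derivative.eval a = 0 → a ∈ A)
    (x : ℝ) (hx : x ∉ A) (hp : p.eval x ≠ 0), 0 < p.eval x * p.derivative.eval x →
    ∃ w, w < x ∧ (∀ a ∈ A, ¬ (w < a ∧ a < x)) ∧ (w ∈ A ∨ p.eval w = 0) ∧
      0 ≤ p.eval w * p.eval x := by
    intro p A hA x hx hp h
    rcases lt_or_gt_of_ne hp with h0 | h0
    · have hd : p.derivative.eval x < 0 := by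
        by_contra hh; push Not at hh; nlinarith
      obtain ⟨w, h1, h2, h3, h4⟩ := adj_left (-p) A (by intro a ha; apply hA; simpa using ha) x hx
        (by simpa using h0) (by simpa using hd)
      simp only [eval_neg, neg_eq_zero] at h3 h4
      exact ⟨w, h1, h2, h3, mul_nonneg_of_nonpos_of_nonpos (by linarith) h0.le⟩
    · have hd : 0 < p.derivative.eval x := (mul_pos_iff_of_pos_left h0).1 h
      obtain ⟨w, h1, h2, h3, h4⟩ := adj_left p A hA x hx h0 hd
      exact ⟨w, h1, h2, h3, mul_nonneg h4 h0.le⟩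
  rcases lt_or_gt_of_ne (mul_ne_zero hp hd) with h | h
  · have hqe : ∀ z, (p.comp (-X)).eval z = p.eval (-z) := by intro z; simp
    have hqd : ∀ z, (p.comp (-X)).derivative.eval z = - p.derivative.eval (-z) := by
      intro z; simp [derivative_comp]
    obtain ⟨w, h1, h2, h3, h4⟩ := key (p.comp (-X)) (A.image (fun z => -z))
      (by intro a ha; rw [hqd] at ha; rw [Finset.mem_image]; exact ⟨-a, hA _ (by linarith), by simp⟩)
      (-x) (by rw [Finset.mem_image]; rintro ⟨a, ha, hax⟩; rw [neg_inj.1 hax] at ha; exact hx ha)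
      (by rw [hqe]; simpa using hp) (by rw [hqe, hqd]; simp; linarith)
    rw [hqe, hqe, neg_neg] at h4
    rw [hqe] at h3
    refine ⟨-w, ?_, ?_, h4, ?_⟩
    · intro a ha
      refine ⟨fun hh => by linarith, fun hh => h2 (-a) (Finset.mem_image_of_mem _ ha)
        ⟨by linarith, by linarith⟩⟩
    · rcases h3 with h3 | h3
      · left
        obtain ⟨a, ha, rfl⟩ := Finset.mem_image.1 h3
        simpa using ha
      · exact Or.inr h3
    · exact mul_pos_of_neg_of_neg (by linarith) h
  · obtain ⟨w, h1, h2, h3, h4⟩ := key p A hA x hx hp h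
    exact ⟨w, fun a ha => ⟨h2 a ha, fun hh => by linarith⟩, h3, h4, mul_pos (by linarith) h⟩

/-- no element of `A` strictly between, polynomial derivative has roots in `A` -/
theorem deriv_sign_between (p : ℝ[X]) (A : Finset ℝ)
    (hA : ∀ a, p.derivative.eval a = 0 → a ∈ A) (x w : ℝ) (hx : x ∉ A)
    (h : ∀ a ∈ A, ¬ (w < a ∧ a < x) ∧ ¬ (x < a ∧ a < w)) (hxw : x ≠ w) :
    0 < (p.eval x - p.eval w) * ((x - w) * p.derivative.eval x) := by
  have hd : p.derivative.eval x ≠ 0 := fun h => hx (hA x h)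
  have hcont : Continuous fun z => p.eval z := p.continuous
  have hdcont : Continuous fun z => p.derivative.eval z := p.derivative.continuous
  -- sign
  have hs : ∀ ξ, ((w < ξ ∧ ξ < x) ∨ (x < ξ ∧ ξ < w)) →
      0 < p.derivative.eval ξ * p.derivative.eval x := by
    intro ξ hξ
    by_contra hcon
    push Not at hcon
    have : ∃ z ∈ Set.uIcc ξ x, p.derivative.eval z = 0 := by
      have := intermediate_value_uIcc (hdcont.continuousOn (s := Set.uIcc ξ x))
      have h0 : (0:ℝ) ∈ Set.uIcc (p.derivative.eval ξ) (p.derivative.eval x) := by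
        rw [Set.mem_uIcc]
        rcases le_total (p.derivative.eval ξ) 0 with h1 | h1 <;>
        rcases le_total (p.derivative.eval x) 0 with h2 | h2
        · have : p.derivative.eval ξ * p.derivative.eval x = 0 := le_antisymm hcon (mul_nonneg_of_nonpos_of_nonpos h1 h2)
          rcases mul_eq_zero.1 this with h | h
          · right; exact ⟨h2, h.ge⟩
          · left; exact ⟨h1, h.ge⟩
        · left; exact ⟨h1, h2⟩
        · right; exact ⟨h2, h1⟩
        · have : p.derivative.eval ξ * p.derivative.eval x = 0 := le_antisymm hcon (mul_nonneg h1 h2)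
          rcases mul_eq_zero.1 this with h | h
          · left; exact ⟨h.le, h2⟩
          · right; exact ⟨h.le, h1⟩
      obtain ⟨z, hz, hz0⟩ := this h0
      exact ⟨z, hz, hz0⟩
    obtain ⟨z, hz, hz0⟩ := this
    have hzA := hA z hz0
    have hzx : z ≠ x := by rintro rfl; exact hx hzA
    rw [Set.mem_uIcc] at hz
    have := h z hzA
    rcases hξ with hξ | hξ <;> rcases hz with hz | hz
    · exact this.1 ⟨by linarith, lt_of_le_of_ne hz.2 hzx⟩
    · linarith
    · linarith
    · exact this.2 ⟨lt_of_le_of_ne hz.1 hzx.symm, by linarith⟩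
  rcases lt_or_gt_of_ne hxw with h1 | h1
  · obtain ⟨ξ, hξ, he⟩ := exists_deriv_eq_slope (fun z => p.eval z) h1 hcont.continuousOn
      p.differentiable.differentiableOn
    rw [Polynomial.deriv, eq_div_iff (by linarith)] at he
    have h2 := hs ξ (Or.inr hξ)
    have h3 : 0 < (w - x) ^ 2 := by apply pow_pos; linarith
    have : (p.eval x - p.eval w) * ((x - w) * p.derivative.eval x) =
      (w - x) ^ 2 * (p.derivative.eval ξ * p.derivative.eval x) := by
      linear_combination ((w - x) * p.derivative.eval x) * (-he)
    rw [this]; positivity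
  · obtain ⟨ξ, hξ, he⟩ := exists_deriv_eq_slope (fun z => p.eval z) h1 hcont.continuousOn
      p.differentiable.differentiableOn
    rw [Polynomial.deriv, eq_div_iff (by linarith)] at he
    have h2 := hs ξ (Or.inl hξ)
    have h3 : 0 < (w - x) ^ 2 := by rw [sq]; exact mul_pos_of_neg_of_neg (by linarith) (by linarith)
    have : (p.eval x - p.eval w) * ((x - w) * p.derivative.eval x) =
      (w - x) ^ 2 * (p.derivative.eval ξ * p.derivative.eval x) := by
      linear_combination ((w - x) * p.derivative.eval x) * (he)
    rw [this]; positivity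

/-- extension of strictly monotone finite maps to order isos -/
theorem exists_iso (C : Finset ℝ) : ∀ (φ : ℝ → ℝ), StrictMonoOn φ C →
    ∃ ψ : ℝ ≃o ℝ, ∀ c ∈ C, ψ c = φ c := by
  classical
  induction C using Finset.induction_on_max with
  | empty => intro φ _; exact ⟨OrderIso.refl ℝ, by simp⟩
  | insert m s hm ih =>
    intro φ hφ
    obtain ⟨ψ, hψ⟩ := ih φ (hφ.mono (by simp))
    rcases s.eq_empty_or_nonempty with rfl | hne
    · refine ⟨OrderIso.addRight (φ m - m), ?_⟩
      simp
    · set b := s.max' hne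
      have hb : b ∈ s := s.max'_mem hne
      have hbm : φ b < φ m := hφ (by simp [hb]) (by simp) (hm b hb)
      have hbm' : ψ b < ψ m := ψ.strictMono (hm b hb)
      rw [hψ b hb] at hbm'
      set k := (φ m - φ b) / (ψ m - φ b) with hk
      have hkpos : 0 < k := div_pos (by linarith) (by linarith)
      set θ : ℝ → ℝ := fun x => if x ≤ φ b then x else φ b + (x - φ b) * k with hθ
      have hmono : StrictMono θ := by
        intro x y hxy
        simp only [hθ]
        split_ifs with h1 h2 h2
        · exact hxy
        · push Not at h2
          have : 0 < (y - φ b) * k := mul_pos (by linarith) hkpos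
          linarith
        · linarith
        · nlinarith
      have hsurj : Function.Surjective θ := by
        intro y
        by_cases h : y ≤ φ b
        · exact ⟨y, by simp [hθ, h]⟩
        · push Not at h
          refine ⟨φ b + (y - φ b) / k, ?_⟩
          have : 0 < (y - φ b) / k := div_pos (by linarith) hkpos
          simp only [hθ]
          rw [if_neg (by linarith)]
          field_simp
          ring
      refine ⟨ψ.trans (hmono.orderIsoOfSurjective θ hsurj), ?_⟩
      intro c hc
      simp only [OrderIso.trans_apply, StrictMono.coe_orderIsoOfSurjective]
      rcases Finset.mem_insert.1 hc with rfl | hc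
      · simp only [hθ]
        rw [if_neg (by linarith), hk]
        have : ψ c - φ b ≠ 0 := by linarith
        field_simp
        ring
      · rw [hψ c hc]
        have : φ c ≤ φ b := hφ.monotoneOn (by simp [hc]) (by simp [hb]) (s.le_max' c hc)
        simp [hθ, this]

/-- The relation: no element of `A` weakly between `x` and `w`. -/
def Near (A : Finset ℝ) (x w : ℝ) : Prop :=
  ∀ a ∈ A, (a < x ↔ a < w) ∧ (x < a ↔ w < a)

theorem match_root (p q : ℝ[X]) (A B : Finset ℝ) (ψ : ℝ ≃o ℝ)
    (hAB : ∀ a, ψ a ∈ B ↔ a ∈ A)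
    (hA : ∀ a, p.derivative.eval a = 0 → a ∈ A)
    (hB : ∀ a, q.derivative.eval a = 0 → a ∈ B)
    (hd : ∀ x, SignType.sign (p.derivative.eval x) = SignType.sign (q.derivative.eval (ψ x)))
    (hs : ∀ a ∈ A, SignType.sign (p.eval a) = SignType.sign (q.eval (ψ a)))
    (c : ℝ) (hc : c ∉ A) (hc0 : p.eval c = 0) :
    ∃ c', q.eval c' = 0 ∧ c' ∉ B ∧ Near B (ψ c) c' := by
  have hψc : ψ c ∉ B := by rwa [hAB]
  by_cases hq : q.eval (ψ c) = 0
  · exact ⟨ψ c, hq, hψc, fun a _ => ⟨Iff.rfl, Iff.rfl⟩⟩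
  obtain ⟨w, h1, h2, h3, h4⟩ := adj q B hB (ψ c) hψc hq
  have hwB : w ∉ B := by
    intro hw
    obtain ⟨a, rfl⟩ := ψ.surjective w
    have ha : a ∈ A := (hAB a).1 hw
    have hne : c ≠ a := by rintro rfl; exact hc ha
    have hgap : ∀ b ∈ A, ¬ (a < b ∧ b < c) ∧ ¬ (c < b ∧ b < a) := by
      intro b hb
      have := h1 (ψ b) ((hAB b).2 hb)
      simpa using this
    have h5 := deriv_sign_between p A hA c a hc hgap hne
    rw [hc0] at h5
    have h6 := hs a ha
    have h7 := hd c
    have hdc : p.derivative.eval c ≠ 0 := fun h => hc (hA c h)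
    have hqc : q.derivative.eval (ψ c) ≠ 0 := fun h => hψc (hB _ h)
    rcases lt_or_gt_of_ne hne with h8 | h8
    · have h9 : ψ c < ψ a := ψ.strictMono h8
      rcases lt_or_gt_of_ne hdc with h10 | h10
      · rw [sign_neg h10, eq_comm, sign_eq_neg_one_iff] at h7
        have : p.eval a < 0 := by
          have := mul_pos_of_neg_of_neg (sub_neg.2 h8) h10
          nlinarith
        rw [sign_neg this, eq_comm, sign_eq_neg_one_iff] at h6
        have h11 : q.eval (ψ c) ≤ 0 := by nlinarith
        have h12 : 0 ≤ q.eval (ψ c) * q.derivative.eval (ψ c) := by nlinarith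
        nlinarith
      · rw [sign_pos h10, eq_comm, sign_eq_one_iff] at h7
        have : 0 < p.eval a := by
          have := mul_neg_of_neg_of_pos (sub_neg.2 h8) h10
          nlinarith
        rw [sign_pos this, eq_comm, sign_eq_one_iff] at h6
        have h11 : 0 ≤ q.eval (ψ c) := by nlinarith
        have h12 : 0 ≤ q.eval (ψ c) * q.derivative.eval (ψ c) := by nlinarith
        nlinarith
    · have h9 : ψ a < ψ c := ψ.strictMono h8
      rcases lt_or_gt_of_ne hdc with h10 | h10
      · rw [sign_neg h10, eq_comm, sign_eq_neg_one_iff] at h7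
        have : 0 < p.eval a := by
          have := mul_neg_of_pos_of_neg (sub_pos.2 h8) h10
          nlinarith
        rw [sign_pos this, eq_comm, sign_eq_one_iff] at h6
        have h11 : 0 ≤ q.eval (ψ c) := by nlinarith
        have h12 : q.eval (ψ c) * q.derivative.eval (ψ c) ≤ 0 := by nlinarith
        nlinarith
      · rw [sign_pos h10, eq_comm, sign_eq_one_iff] at h7
        have : p.eval a < 0 := by
          have := mul_pos (sub_pos.2 h8) h10
          nlinarith
        rw [sign_neg this, eq_comm, sign_eq_neg_one_iff] at h6
        have h11 : q.eval (ψ c) ≤ 0 := by nlinarith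
        have h12 : q.eval (ψ c) * q.derivative.eval (ψ c) ≤ 0 := by nlinarith
        nlinarith
  refine ⟨w, h2.resolve_left hwB, hwB, ?_⟩
  intro a ha
  have hac : a ≠ ψ c := by rintro rfl; exact hψc ha
  have haw : a ≠ w := by rintro rfl; exact hwB ha
  have h5 := h1 a ha
  constructor
  · constructor
    · intro h
      by_contra hh
      exact h5.1 ⟨lt_of_le_of_ne (not_lt.1 hh) haw.symm, h⟩
    · intro h
      by_contra hh
      exact h5.2 ⟨lt_of_le_of_ne (not_lt.1 hh) hac.symm, h⟩
  · constructor
    · intro h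
      by_contra hh
      exact h5.2 ⟨h, lt_of_le_of_ne (not_lt.1 hh) haw⟩
    · intro h
      by_contra hh
      exact h5.1 ⟨h, lt_of_le_of_ne (not_lt.1 hh) hac⟩

theorem near_iso (A B : Finset ℝ) (ψ ψ' : ℝ ≃o ℝ) (hAB : ∀ a, ψ a ∈ B ↔ a ∈ A)
    (h : ∀ a ∈ A, ψ' a = ψ a) (x : ℝ) : Near B (ψ x) (ψ' x) := by
  intro b hb
  obtain ⟨a, rfl⟩ := ψ.surjective b
  have ha := (hAB a).1 hb
  constructor
  · rw [ψ.lt_iff_lt, ← h a ha, ψ'.lt_iff_lt]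
  · rw [ψ.lt_iff_lt, ← h a ha, ψ'.lt_iff_lt]

theorem sign_near (q : ℝ[X]) (B : Finset ℝ) (hB : ∀ a, q.eval a = 0 → a ∈ B) (x w : ℝ)
    (hx : x ∉ B) (hw : w ∉ B) (hnear : Near B x w) :
    SignType.sign (q.eval x) = SignType.sign (q.eval w) := by
  by_contra hne
  have hcont : Continuous fun z => q.eval z := q.continuous
  have h0 : (0:ℝ) ∈ Set.uIcc (q.eval x) (q.eval w) := by
    rw [Set.mem_uIcc]
    rcases lt_trichotomy (q.eval x) 0 with h | h | h <;>
    rcases lt_trichotomy (q.eval w) 0 with h' | h' | h' <;>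
    first
      | (left; constructor <;> linarith)
      | (right; constructor <;> linarith)
      | (exfalso; apply hne; simp [sign_neg, sign_pos, h, h'])
  obtain ⟨z, hz, hz0⟩ := intermediate_value_uIcc (hcont.continuousOn (s := Set.uIcc x w)) h0
  have hzB := hB z hz0
  have h7 := hnear z hzB
  have h8 : z ≠ x := by rintro rfl; exact hx hzB
  have h9 : z ≠ w := by rintro rfl; exact hw hzB
  rw [Set.mem_uIcc] at hz
  rcases hz with hz | hz
  · have := h7.2.1 (lt_of_le_of_ne hz.1 h8.symm); linarith
  · have := h7.1.1 (lt_of_le_of_ne hz.2 h8); linarith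

theorem step (p q : ℝ[X]) (A B : Finset ℝ) (ψ : ℝ ≃o ℝ)
    (hAB : ∀ a, ψ a ∈ B ↔ a ∈ A)
    (hA : ∀ a, p.derivative.eval a = 0 → a ∈ A)
    (hB : ∀ a, q.derivative.eval a = 0 → a ∈ B)
    (hd : ∀ x, SignType.sign (p.derivative.eval x) = SignType.sign (q.derivative.eval (ψ x)))
    (hs : ∀ a ∈ A, SignType.sign (p.eval a) = SignType.sign (q.eval (ψ a))) (hp : p ≠ 0) :
    ∃ ψ' : ℝ ≃o ℝ, (∀ a ∈ A, ψ' a = ψ a) ∧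
      ∀ x, SignType.sign (p.eval x) = SignType.sign (q.eval (ψ' x)) := by
  classical
  have hm := match_root p q A B ψ hAB hA hB hd hs
  choose m hm0 hmB hmN using hm
  set φ : ℝ → ℝ := fun x => if h : x ∉ A ∧ p.eval x = 0 then m x h.1 h.2 else ψ x with hφ
  have hφA : ∀ a ∈ A, φ a = ψ a := by
    intro a ha; simp only [hφ]; rw [dif_neg]; exact fun h => h.1 ha
  have hφm : ∀ c (h : c ∉ A) (h0 : p.eval c = 0), φ c = m c h h0 := by
    intro c h h0; simp only [hφ]; rw [dif_pos ⟨h, h0⟩]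
  have hφN : ∀ c, c ∉ A → p.eval c = 0 → Near B (ψ c) (φ c) := by
    intro c h h0; rw [hφm c h h0]; exact hmN c h h0
  have hmono : StrictMonoOn φ (A ∪ p.roots.toFinset : Finset ℝ) := by
    intro x hx y hy hxy
    have hroot : ∀ z ∈ (A ∪ p.roots.toFinset : Finset ℝ), z ∉ A → p.eval z = 0 := by
      intro z hz hzA
      rcases Finset.mem_union.1 hz with h | h
      · exact absurd h hzA
      · rw [Multiset.mem_toFinset] at h
        exact (Polynomial.mem_roots'.1 h).2
    have hψ : ψ x < ψ y := ψ.strictMono hxy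
    by_cases hxA : x ∈ A <;> by_cases hyA : y ∈ A
    · rw [hφA x hxA, hφA y hyA]; exact hψ
    · rw [hφA x hxA]
      exact (hφN y hyA (hroot y hy hyA) (ψ x) ((hAB x).2 hxA)).1.1 hψ
    · rw [hφA y hyA]
      exact (hφN x hxA (hroot x hx hxA) (ψ y) ((hAB y).2 hyA)).2.1 hψ
    · have hx0 := hroot x hx hxA
      have hy0 := hroot y hy hyA
      obtain ⟨z, hz, hz0⟩ := exists_deriv_eq_zero (f := fun z => p.eval z) hxy
        p.continuous.continuousOn (by simp [hx0, hy0])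
      rw [Polynomial.deriv] at hz0
      have hzA := hA z hz0
      have h1 := (hφN x hxA hx0 (ψ z) ((hAB z).2 hzA)).2.1 (ψ.strictMono hz.1)
      have h2 := (hφN y hyA hy0 (ψ z) ((hAB z).2 hzA)).1.1 (ψ.strictMono hz.2)
      exact h1.trans h2
  obtain ⟨ψ', hψ'⟩ := exists_iso _ φ hmono
  have hψ'A : ∀ a ∈ A, ψ' a = ψ a := by
    intro a ha; rw [hψ' a (Finset.mem_union_left _ ha), hφA a ha]
  refine ⟨ψ', hψ'A, ?_⟩
  have hAB' : ∀ a, ψ' a ∈ B ↔ a ∈ A := by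
    intro a
    constructor
    · intro h
      obtain ⟨b, hb⟩ := ψ.surjective (ψ' a)
      have hbA : b ∈ A := (hAB b).1 (hb ▸ h)
      rw [← hψ'A b hbA] at hb
      exact (ψ'.injective hb) ▸ hbA
    · intro h; rw [hψ'A a h]; exact (hAB a).2 h
  -- signs on C
  have hC : ∀ c, (c ∈ A ∨ p.eval c = 0) → SignType.sign (p.eval c) = SignType.sign (q.eval (ψ' c)) := by
    intro c hc
    by_cases hcA : c ∈ A
    · rw [hψ'A c hcA]; exact hs c hcA
    · have h0 := hc.resolve_left hcA
      rw [hψ' c (Finset.mem_union_right _ (Multiset.mem_toFinset.2 (Polynomial.mem_roots'.2 ⟨hp, h0⟩))),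
        hφm c hcA h0, hm0, h0]
  intro x
  by_cases hx : x ∈ A ∨ p.eval x = 0
  · exact hC x hx
  push Not at hx
  obtain ⟨hxA, hx0⟩ := hx
  obtain ⟨w, h1, h2, h3, h4⟩ := adj p A hA x hxA hx0
  have hw := hC w h2
  have hxw : x ≠ w := by rintro rfl; simp at h4
  have hxB : ψ' x ∉ B := by rwa [hAB']
  have h5 := deriv_sign_between q B hB (ψ' x) (ψ' w) hxB (by
    intro b hb
    obtain ⟨a, rfl⟩ := ψ'.surjective b
    have := h1 a ((hAB' a).1 hb)
    simpa using this) (by simpa using hxw)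
  -- derivative sign at ψ' x
  have hd' : SignType.sign (p.derivative.eval x) = SignType.sign (q.derivative.eval (ψ' x)) := by
    rw [hd x]
    exact sign_near _ B hB _ _ (by rwa [hAB]) hxB (near_iso A B ψ ψ' hAB hψ'A x)
  have hdx : p.derivative.eval x ≠ 0 := fun h => hxA (hA x h)
  have hmn : (x < w ∧ ψ' x < ψ' w) ∨ (w < x ∧ ψ' w < ψ' x) := by
    rcases lt_or_gt_of_ne hxw with h | h
    · exact Or.inl ⟨h, ψ'.strictMono h⟩
    · exact Or.inr ⟨h, ψ'.strictMono h⟩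
  -- sign p x determines everything
  rcases lt_or_gt_of_ne hx0 with hpx | hpx
  · have hpw : p.eval w ≤ 0 := by nlinarith
    have hqw : q.eval (ψ' w) ≤ 0 := by
      by_contra hh; push Not at hh
      rw [sign_pos hh, sign_eq_one_iff] at hw; linarith
    rw [sign_neg hpx, eq_comm, sign_eq_neg_one_iff]
    have h6 : (x - w) * p.derivative.eval x < 0 := by nlinarith
    have h7 : (ψ' x - ψ' w) * q.derivative.eval (ψ' x) < 0 := by
      rcases lt_or_gt_of_ne hdx with h | h
      · rw [sign_neg h, eq_comm, sign_eq_neg_one_iff] at hd'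
        rcases hmn with hh | hh <;> nlinarith
      · rw [sign_pos h, eq_comm, sign_eq_one_iff] at hd'
        rcases hmn with hh | hh <;> nlinarith
    nlinarith
  · have hpw : 0 ≤ p.eval w := by nlinarith
    have hqw : 0 ≤ q.eval (ψ' w) := by
      by_contra hh; push Not at hh
      rw [sign_neg hh, sign_eq_neg_one_iff] at hw; linarith
    rw [sign_pos hpx, eq_comm, sign_eq_one_iff]
    have h6 : 0 < (x - w) * p.derivative.eval x := by nlinarith
    have h7 : 0 < (ψ' x - ψ' w) * q.derivative.eval (ψ' x) := by
      rcases lt_or_gt_of_ne hdx with h | h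
      · rw [sign_neg h, eq_comm, sign_eq_neg_one_iff] at hd'
        rcases hmn with hh | hh <;> nlinarith
      · rw [sign_pos h, eq_comm, sign_eq_one_iff] at hd'
        rcases hmn with hh | hh <;> nlinarith
    nlinarith

end QE

end Chunk1

section Chunk2
open Matrix BigOperators Filter

namespace QE
open Polynomial

theorem prem {R : Type*} [CommRing R] [IsDomain R] (q : R[X]) (hq : 1 ≤ q.natDegree) :
    ∀ (n : ℕ) (p : R[X]), p.natDegree ≤ n → ∃ (k : ℕ) (r s : R[X]),
      C q.leadingCoeff ^ k * p = s * q + r ∧ r.natDegree < q.natDegree := by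
  intro n
  induction n with
  | zero =>
    intro p hp
    exact ⟨0, p, 0, by simp, by omega⟩
  | succ n ih =>
    intro p hp
    by_cases h : p.natDegree < q.natDegree
    · exact ⟨0, p, 0, by simp, h⟩
    push Not at h
    have hq0 : q ≠ 0 := by rintro rfl; simp at hq
    have hp0 : p ≠ 0 := by rintro rfl; simp at h; omega
    have hlq : q.leadingCoeff ≠ 0 := leadingCoeff_ne_zero.2 hq0
    have hlp : p.leadingCoeff ≠ 0 := leadingCoeff_ne_zero.2 hp0
    set p1 := C q.leadingCoeff * p - C p.leadingCoeff * X ^ (p.natDegree - q.natDegree) * q with hp1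
    have hdeg : p1.natDegree ≤ n := by
      have h1 : (C q.leadingCoeff * p).degree = p.degree := degree_C_mul hlq
      have h2 : (C p.leadingCoeff * X ^ (p.natDegree - q.natDegree) * q).degree = p.degree := by
        rw [mul_assoc, degree_C_mul hlp, degree_mul, degree_X_pow, degree_eq_natDegree hq0,
          degree_eq_natDegree hp0]
        norm_cast
        omega
      have h3 : p1.degree < (C q.leadingCoeff * p).degree := by
        apply degree_sub_lt_left (h1.trans h2.symm)
        · exact mul_ne_zero (by simpa using hlq) hp0
        · rw [leadingCoeff_mul, leadingCoeff_mul, leadingCoeff_mul, leadingCoeff_C, leadingCoeff_C,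
            leadingCoeff_X_pow]
          ring
      rw [h1] at h3
      by_cases hp10 : p1 = 0
      · rw [hp10]; simp
      · have := natDegree_lt_natDegree hp10 h3
        omega
    obtain ⟨k, r, s, h1, h2⟩ := ih p1 hdeg
    refine ⟨k + 1, r, s + C q.leadingCoeff ^ k * C p.leadingCoeff * X ^ (p.natDegree - q.natDegree), ?_, h2⟩
    rw [hp1] at h1
    linear_combination h1

variable {ι : Type}

noncomputable def spec (y : ι → ℝ) (p : Polynomial (MvPolynomial ι ℝ)) : ℝ[X] :=
  p.map (MvPolynomial.eval y)

theorem coeff_spec (y : ι → ℝ) (p : Polynomial (MvPolynomial ι ℝ)) (n : ℕ) :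
    (spec y p).coeff n = MvPolynomial.eval y (p.coeff n) := by simp [spec]

noncomputable def trunc (q : Polynomial (MvPolynomial ι ℝ)) (n : ℕ) :
    Polynomial (MvPolynomial ι ℝ) := ∑ i ∈ Finset.range (n+1), monomial i (q.coeff i)

theorem coeff_trunc (q : Polynomial (MvPolynomial ι ℝ)) (n i : ℕ) :
    (trunc q n).coeff i = if i ≤ n then q.coeff i else 0 := by
  simp [trunc, finset_sum_coeff, coeff_monomial, Nat.lt_succ_iff]

theorem trunc_natDegree_le (q : Polynomial (MvPolynomial ι ℝ)) (n : ℕ) :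
    (trunc q n).natDegree ≤ n := by
  rw [natDegree_le_iff_coeff_eq_zero]
  intro i hi
  rw [coeff_trunc, if_neg (by omega)]

def Agree (Q : Finset (MvPolynomial ι ℝ)) (y y' : ι → ℝ) : Prop :=
  ∀ q ∈ Q, SignType.sign (MvPolynomial.eval y q) = SignType.sign (MvPolynomial.eval y' q)

theorem Agree.mono {Q Q' : Finset (MvPolynomial ι ℝ)} (h : Q ⊆ Q') {y y' : ι → ℝ}
    (ha : Agree Q' y y') : Agree Q y y' := fun q hq => ha q (h hq)

theorem Agree.symm {Q : Finset (MvPolynomial ι ℝ)} {y y' : ι → ℝ}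
    (ha : Agree Q y y') : Agree Q y' y := fun q hq => (ha q hq).symm

def Det (F : Finset (Polynomial (MvPolynomial ι ℝ))) : Prop :=
  ∃ Q : Finset (MvPolynomial ι ℝ), ∀ y y', Agree Q y y' →
    ∃ ψ : ℝ ≃o ℝ, ∀ p ∈ F, ∀ x,
      SignType.sign ((spec y p).eval x) = SignType.sign ((spec y' p).eval (ψ x))

theorem Det.mono {F F' : Finset (Polynomial (MvPolynomial ι ℝ))} (h : F ⊆ F') (hF : Det F') :
    Det F := by
  obtain ⟨Q, hQ⟩ := hF
  refine ⟨Q, fun y y' ha => ?_⟩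
  obtain ⟨ψ, hψ⟩ := hQ y y' ha
  exact ⟨ψ, fun p hp => hψ p (h hp)⟩

theorem sign_zero_iff {a b : ℝ} (h : SignType.sign a = SignType.sign b) : a = 0 ↔ b = 0 := by
  rw [← sign_eq_zero_iff, h, sign_eq_zero_iff]

theorem sign_cancel {a b c d : ℝ} (ha : a ≠ 0) (hab : SignType.sign a = SignType.sign b) (k : ℕ)
    (h : SignType.sign (a ^ k * c) = SignType.sign (b ^ k * d)) :
    SignType.sign c = SignType.sign d := by
  have hb : b ≠ 0 := fun hb => ha ((sign_zero_iff hab).2 hb)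
  rw [sign_mul, sign_mul, sign_pow, sign_pow, hab] at h
  have : SignType.sign b ^ k ≠ 0 := pow_ne_zero _ (by rwa [Ne, sign_eq_zero_iff])
  exact mul_left_cancel₀ this h

/-- the remainder of `p` modulo truncations of `q` -/
theorem exists_rem (p q : Polynomial (MvPolynomial ι ℝ)) (n : ℕ) :
    ∃ (r : Polynomial (MvPolynomial ι ℝ)) (k : ℕ), (1 ≤ n → r.natDegree < n) ∧
      ∀ y, 1 ≤ n → MvPolynomial.eval y (q.coeff n) ≠ 0 → spec y q = spec y (trunc q n) →
        ∀ a, (spec y q).eval a = 0 →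
          MvPolynomial.eval y (q.coeff n) ^ k * (spec y p).eval a = (spec y r).eval a := by
  by_cases hn : 1 ≤ n ∧ q.coeff n ≠ 0
  · have hdeg : (trunc q n).natDegree = n := by
      apply le_antisymm (trunc_natDegree_le q n)
      apply le_natDegree_of_ne_zero
      rw [coeff_trunc, if_pos le_rfl]; exact hn.2
    obtain ⟨k, r, s, h1, h2⟩ := prem (trunc q n) (by omega) _ p le_rfl
    have hl : (trunc q n).leadingCoeff = q.coeff n := by
      rw [leadingCoeff, hdeg, coeff_trunc, if_pos le_rfl]
    rw [hl] at h1
    refine ⟨r, k, fun _ => by omega, ?_⟩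
    intro y _ _ hs a ha
    have := congrArg (fun t => (spec y t).eval a) h1
    rw [hs] at ha
    simp only [spec, Polynomial.map_mul, Polynomial.map_add, Polynomial.map_pow, Polynomial.map_C,
      eval_mul, eval_add, eval_pow, eval_C] at this ha ⊢
    rw [ha] at this
    simpa using this
  · refine ⟨0, 0, fun h => by simp; omega, ?_⟩
    intro y h1 h2 
    exfalso
    apply hn
    refine ⟨h1, ?_⟩
    rintro h; rw [h] at h2; simp at h2

theorem spec_trunc (y : ι → ℝ) (q : Polynomial (MvPolynomial ι ℝ)) :
    spec y q = spec y (trunc q (spec y q).natDegree) := by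
  ext i
  rw [coeff_spec, coeff_spec, coeff_trunc]
  split_ifs with h
  · rfl
  · rw [← coeff_spec, coeff_eq_zero_of_natDegree_lt (by omega)]; simp

theorem det_step [DecidableEq (Polynomial (MvPolynomial ι ℝ))]
    (p : Polynomial (MvPolynomial ι ℝ)) (F : Finset (Polynomial (MvPolynomial ι ℝ)))
    (hpF : derivative p ∈ F) (d : ℕ) (hd : ∀ q ∈ F, q.natDegree ≤ d)
    (H : ∀ G : Finset (Polynomial (MvPolynomial ι ℝ)), (∀ r ∈ G, r.natDegree < d) → Det (F ∪ G)) :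
    Det (insert p F) := by
  classical
  choose rem k hrem1 hrem2 using fun q n => exists_rem p q n
  set G := F.biUnion (fun q => (Finset.Icc 1 q.natDegree).image (fun n => rem q n)) with hG
  obtain ⟨Q, hQ⟩ := H G (by
    intro r hr
    simp only [hG, Finset.mem_biUnion, Finset.mem_image, Finset.mem_Icc] at hr
    obtain ⟨q, hq, n, hn, rfl⟩ := hr
    have := hrem1 q n hn.1
    have := hd q hq
    omega)
  set Q' := Q ∪ (insert p F).biUnion (fun q => (Finset.range (q.natDegree + 1)).image q.coeff) with hQ'
  refine ⟨Q', ?_⟩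
  intro y y' ha
  obtain ⟨ψ, hψ⟩ := hQ y y' (ha.mono Finset.subset_union_left)
  have hcoef : ∀ q ∈ insert p F, ∀ n, SignType.sign (MvPolynomial.eval y (q.coeff n)) =
      SignType.sign (MvPolynomial.eval y' (q.coeff n)) := by
    intro q hq n
    by_cases hn : n ≤ q.natDegree
    · apply ha
      apply Finset.mem_union_right
      rw [Finset.mem_biUnion]
      exact ⟨q, hq, Finset.mem_image_of_mem _ (Finset.mem_range.2 (by omega))⟩
    · rw [coeff_eq_zero_of_natDegree_lt (by omega)]; simp
  have hzero : ∀ q ∈ insert p F, spec y q = 0 ↔ spec y' q = 0 := by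
    intro q hq
    simp only [Polynomial.ext_iff, coeff_spec, coeff_zero]
    exact forall_congr' fun n => sign_zero_iff (hcoef q hq n)
  have hψF : ∀ q ∈ F, ∀ x, SignType.sign ((spec y q).eval x) = SignType.sign ((spec y' q).eval (ψ x)) :=
    fun q hq => hψ q (Finset.mem_union_left _ hq)
  have hderiv : ∀ y, (spec y p).derivative = spec y (derivative p) := by
    intro y; simp [spec, derivative_map]
  by_cases hp' : spec y (derivative p) = 0
  · have hp'' := (hzero _ (Finset.mem_insert_of_mem hpF)).1 hp'
    refine ⟨ψ, ?_⟩
    intro q hq x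
    rcases Finset.mem_insert.1 hq with rfl | hq
    · rw [← hderiv] at hp' hp''
      rw [eq_C_of_derivative_eq_zero hp', eq_C_of_derivative_eq_zero hp'', eval_C, eval_C,
        coeff_spec, coeff_spec]
      exact hcoef _ hq 0
    · exact hψF q hq x
  have hp'' : spec y' (derivative p) ≠ 0 := fun h => hp' ((hzero _ (Finset.mem_insert_of_mem hpF)).2 h)
  set A := F.biUnion (fun q => (spec y q).roots.toFinset) with hA
  set B := F.biUnion (fun q => (spec y' q).roots.toFinset) with hB
  have hmemA : ∀ a, a ∈ A ↔ ∃ q ∈ F, spec y q ≠ 0 ∧ (spec y q).eval a = 0 := by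
    intro a; simp [hA, Finset.mem_biUnion]
  have hmemB : ∀ a, a ∈ B ↔ ∃ q ∈ F, spec y' q ≠ 0 ∧ (spec y' q).eval a = 0 := by
    intro a; simp [hB, Finset.mem_biUnion]
  have hAB : ∀ a, ψ a ∈ B ↔ a ∈ A := by
    intro a
    rw [hmemA, hmemB]
    apply exists_congr
    intro q
    apply and_congr_right
    intro hq
    rw [Ne, Ne, hzero q (Finset.mem_insert_of_mem hq), sign_zero_iff (hψF q hq a)]
  obtain ⟨ψ', h1, h2⟩ := step (spec y p) (spec y' p) A B ψ hAB
    (by intro a ha; rw [hderiv] at ha; rw [hmemA]; exact ⟨_, hpF, hp', ha⟩)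
    (by intro a ha; rw [hderiv] at ha; rw [hmemB]; exact ⟨_, hpF, hp'', ha⟩)
    (by intro x; rw [hderiv, hderiv]; exact hψF _ hpF x)
    (by
      intro a ha
      obtain ⟨q, hq, hq0, hqa⟩ := (hmemA a).1 ha
      set n := (spec y q).natDegree with hn
      have hn' : (spec y' q).natDegree = n := by
        apply le_antisymm
        · rw [natDegree_le_iff_coeff_eq_zero]
          intro i hi
          rw [coeff_spec, ← sign_zero_iff (hcoef q (Finset.mem_insert_of_mem hq) i), ← coeff_spec]
          exact coeff_eq_zero_of_natDegree_lt hi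
        · apply le_natDegree_of_ne_zero
          rw [coeff_spec, Ne, ← sign_zero_iff (hcoef q (Finset.mem_insert_of_mem hq) n), ← coeff_spec]
          exact leadingCoeff_ne_zero.2 hq0
      have hlc : MvPolynomial.eval y (q.coeff n) ≠ 0 := by
        rw [← coeff_spec]; exact leadingCoeff_ne_zero.2 hq0
      have hlc' : MvPolynomial.eval y' (q.coeff n) ≠ 0 := by
        rw [Ne, ← sign_zero_iff (hcoef q (Finset.mem_insert_of_mem hq) n)]; exact hlc
      have hn1 : 1 ≤ n := by
        by_contra hh
        have h0 : (spec y q).natDegree = 0 := by omega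
        have h3 := eq_C_of_natDegree_eq_zero h0
        rw [h3, eval_C] at hqa
        rw [hqa] at h3
        exact hq0 (by simpa using h3)
      have hqn : n ≤ q.natDegree := natDegree_map_le
      have hqa' : (spec y' q).eval (ψ a) = 0 := (sign_zero_iff (hψF q hq a)).1 hqa
      have e1 := hrem2 q n y hn1 hlc (spec_trunc y q) a hqa
      have e2 := hrem2 q n y' hn1 hlc' (by conv_lhs => rw [spec_trunc y' q, hn']) (ψ a) hqa'
      have e3 := hψ (rem q n) (Finset.mem_union_right _ (by
        rw [hG, Finset.mem_biUnion]
        exact ⟨q, hq, Finset.mem_image_of_mem _ (Finset.mem_Icc.2 ⟨hn1, hqn⟩)⟩)) a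
      rw [← e1, ← e2] at e3
      exact sign_cancel hlc (hcoef q (Finset.mem_insert_of_mem hq) n) _ e3)
    (by rintro h; rw [← hderiv, h] at hp'; simp at hp')
  refine ⟨ψ', ?_⟩
  intro q hq x
  rcases Finset.mem_insert.1 hq with rfl | hqF
  · exact h2 x
  by_cases hq0 : spec y q = 0
  · rw [hq0, (hzero q hq).1 hq0]; simp
  by_cases hx : x ∈ A
  · rw [h1 x hx]; exact hψF q hqF x
  · rw [hψF q hqF x]
    apply sign_near _ B _ _ _ _ _ (near_iso A B ψ ψ' hAB h1 x)
    · intro a ha; rw [hmemB]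
      exact ⟨q, hqF, fun h => hq0 ((hzero q hq).2 h), ha⟩
    · rwa [hAB]
    · intro h
      obtain ⟨b, hb⟩ := ψ.surjective (ψ' x)
      have hbA : b ∈ A := (hAB b).1 (hb ▸ h)
      rw [← h1 b hbA] at hb
      exact hx ((ψ'.injective hb) ▸ hbA)

theorem det_all : ∀ (d n : ℕ) (F : Finset (Polynomial (MvPolynomial ι ℝ))),
    (∀ p ∈ F, p.natDegree ≤ d) → (F.filter (fun p => p.natDegree = d)).card ≤ n → Det F := by
  classical
  intro d
  induction d with
  | zero =>
    intro n F hF _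
    refine ⟨F.image (fun p => p.coeff 0), ?_⟩
    intro y y' ha
    refine ⟨OrderIso.refl ℝ, ?_⟩
    intro p hp x
    have h0 : p.natDegree = 0 := by have := hF p hp; omega
    rw [eq_C_of_natDegree_eq_zero h0]
    simp only [spec, Polynomial.map_C, eval_C]
    exact ha _ (Finset.mem_image_of_mem _ hp)
  | succ d ihd =>
    intro n
    induction n with
    | zero =>
      intro F hF hc
      apply ihd _ F _ le_rfl
      intro p hp
      by_contra h
      have : p ∈ F.filter (fun p => p.natDegree = d + 1) :=
        Finset.mem_filter.2 ⟨hp, by have := hF p hp; omega⟩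
      rw [Finset.card_eq_zero.1 (Nat.le_zero.1 hc)] at this
      simp at this
    | succ n ihn =>
      intro F hF hc
      by_cases hex : ∃ p ∈ F, p.natDegree = d + 1
      · obtain ⟨p, hp, hpd⟩ := hex
        have hder : (derivative p).natDegree < d + 1 := by
          rw [← hpd]; apply natDegree_derivative_lt; omega
        have hbig : ∀ q ∈ insert (derivative p) (F.erase p), q.natDegree ≤ d + 1 := by
          intro q hq
          rcases Finset.mem_insert.1 hq with rfl | hq
          · omega
          · exact hF q (Finset.mem_of_mem_erase hq)
        apply Det.mono (F' := insert p (insert (derivative p) (F.erase p)))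
        · intro q hq
          by_cases h : q = p
          · simp [h]
          · simp [h, hq]
        apply det_step p _ (Finset.mem_insert_self _ _) (d + 1) hbig
        intro G hG
        apply ihn
        · intro q hq
          rcases Finset.mem_union.1 hq with hq | hq
          · exact hbig q hq
          · exact (hG q hq).le
        · have hsub : (insert (derivative p) (F.erase p) ∪ G).filter (fun p => p.natDegree = d + 1) ⊆
            (F.filter (fun p => p.natDegree = d + 1)).erase p := by
            intro q hq
            rw [Finset.mem_filter] at hq
            obtain ⟨hq, hqd⟩ := hq
            rcases Finset.mem_union.1 hq with hq | hq
            · rcases Finset.mem_insert.1 hq with rfl | hq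
              · omega
              · rw [Finset.mem_erase] at hq ⊢
                exact ⟨hq.1, Finset.mem_filter.2 ⟨hq.2, hqd⟩⟩
            · have := hG q hq; omega
          have h1 := Finset.card_le_card hsub
          rw [Finset.card_erase_of_mem (Finset.mem_filter.2 ⟨hp, hpd⟩)] at h1
          omega
      · apply ihn F hF
        rw [Finset.filter_false_of_mem]
        · simp
        · intro p hp h; exact hex ⟨p, hp, h⟩

theorem det (F : Finset (Polynomial (MvPolynomial ι ℝ))) : Det F :=
  det_all (F.sup natDegree) _ F (fun _ hp => Finset.le_sup hp) le_rfl

end QE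

end Chunk2

section Chunk3
open Matrix BigOperators Filter

namespace QE

def SA {ι : Type} (S : Set (ι → ℝ)) : Prop :=
  ∃ P : Finset (MvPolynomial ι ℝ), ∀ z z', Agree P z z' → z ∈ S → z' ∈ S

def PolyFun {ι : Type} (F : (ι → ℝ) → ℝ) : Prop :=
  ∃ p : MvPolynomial ι ℝ, ∀ x, F x = MvPolynomial.eval x p

section basics
variable {ι κ : Type}

theorem PolyFun.const (c : ℝ) : PolyFun (fun _ : ι → ℝ => c) := ⟨MvPolynomial.C c, by simp⟩
theorem PolyFun.coord (i : ι) : PolyFun (fun x : ι → ℝ => x i) := ⟨MvPolynomial.X i, by simp⟩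
theorem PolyFun.add {F G : (ι → ℝ) → ℝ} (hF : PolyFun F) (hG : PolyFun G) :
    PolyFun (fun x => F x + G x) := by
  obtain ⟨p, hp⟩ := hF; obtain ⟨q, hq⟩ := hG
  exact ⟨p + q, fun x => by simp [hp, hq]⟩
theorem PolyFun.mul {F G : (ι → ℝ) → ℝ} (hF : PolyFun F) (hG : PolyFun G) :
    PolyFun (fun x => F x * G x) := by
  obtain ⟨p, hp⟩ := hF; obtain ⟨q, hq⟩ := hG
  exact ⟨p * q, fun x => by simp [hp, hq]⟩
theorem PolyFun.sub {F G : (ι → ℝ) → ℝ} (hF : PolyFun F) (hG : PolyFun G) :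
    PolyFun (fun x => F x - G x) := by
  obtain ⟨p, hp⟩ := hF; obtain ⟨q, hq⟩ := hG
  exact ⟨p - q, fun x => by simp [hp, hq]⟩
theorem PolyFun.pow {F : (ι → ℝ) → ℝ} (hF : PolyFun F) (n : ℕ) :
    PolyFun (fun x => F x ^ n) := by
  obtain ⟨p, hp⟩ := hF
  exact ⟨p ^ n, fun x => by simp [hp]⟩
theorem PolyFun.sum {α : Type*} (s : Finset α) {F : α → (ι → ℝ) → ℝ} (hF : ∀ a ∈ s, PolyFun (F a)) :
    PolyFun (fun x => ∑ a ∈ s, F a x) := by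
  classical
  choose! p hp using hF
  refine ⟨∑ a ∈ s, p a, fun x => ?_⟩
  rw [map_sum]; exact Finset.sum_congr rfl fun a ha => hp a ha x
theorem PolyFun.prod {α : Type*} (s : Finset α) {F : α → (ι → ℝ) → ℝ} (hF : ∀ a ∈ s, PolyFun (F a)) :
    PolyFun (fun x => ∏ a ∈ s, F a x) := by
  classical
  choose! p hp using hF
  refine ⟨∏ a ∈ s, p a, fun x => ?_⟩
  rw [map_prod]; exact Finset.prod_congr rfl fun a ha => hp a ha x
theorem PolyFun.comp {F : (κ → ℝ) → ℝ} (hF : PolyFun F) {G : (ι → ℝ) → (κ → ℝ)}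
    (hG : ∀ k, PolyFun (fun x => G x k)) : PolyFun (fun x => F (G x)) := by
  obtain ⟨p, hp⟩ := hF
  choose q hq using hG
  refine ⟨MvPolynomial.bind₁ q p, fun x => ?_⟩
  simp only [hp]
  have : G x = fun k => MvPolynomial.eval x (q k) := funext fun k => hq k x
  rw [this]
  have h2 := MvPolynomial.eval₂Hom_bind₁ (RingHom.id ℝ) x q p
  exact h2.symm
theorem PolyFun.comap {F : (κ → ℝ) → ℝ} (hF : PolyFun F) (e : κ → ι) :
    PolyFun (fun x : ι → ℝ => F (x ∘ e)) :=
  hF.comp (G := fun x => x ∘ e) fun k => PolyFun.coord (e k)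
theorem PolyFun.contDiff [Fintype ι] {F : (ι → ℝ) → ℝ} (hF : PolyFun F) : ContDiff ℝ 1 F := by
  obtain ⟨p, hp⟩ := hF
  have : F = fun x => MvPolynomial.eval x p := funext hp
  rw [this]; clear this hp
  induction p using MvPolynomial.induction_on with
  | C a => simp only [MvPolynomial.eval_C]; exact contDiff_const
  | add p q hp hq => simp only [map_add]; exact hp.add hq
  | mul_X p i hp => simp only [map_mul, MvPolynomial.eval_X]; exact hp.mul (contDiff_apply ℝ ℝ i)
theorem PolyFun.continuous [Fintype ι] {F : (ι → ℝ) → ℝ} (hF : PolyFun F) : Continuous F :=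
  hF.contDiff.continuous

theorem SA.pos {F : (ι → ℝ) → ℝ} (hF : PolyFun F) : SA {x | 0 < F x} := by
  obtain ⟨p, hp⟩ := hF
  refine ⟨{p}, fun z z' h hz => ?_⟩
  have := h p (by simp)
  simp only [Set.mem_ofPred_eq, hp] at hz ⊢
  rw [← sign_eq_one_iff] at hz ⊢
  rw [← this, hz]
theorem SA.compl {S : Set (ι → ℝ)} (h : SA S) : SA Sᶜ := by
  obtain ⟨P, hP⟩ := h
  exact ⟨P, fun z z' h hz hz' => hz (hP z' z h.symm hz')⟩
theorem SA.inter {S T : Set (ι → ℝ)} (hS : SA S) (hT : SA T) : SA (S ∩ T) := by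
  classical
  obtain ⟨P, hP⟩ := hS
  obtain ⟨Q, hQ⟩ := hT
  exact ⟨P ∪ Q, fun z z' h hz => ⟨hP z z' (h.mono Finset.subset_union_left) hz.1,
    hQ z z' (h.mono Finset.subset_union_right) hz.2⟩⟩
theorem SA.congr {S T : Set (ι → ℝ)} (hS : SA S) (h : ∀ x, x ∈ T ↔ x ∈ S) : SA T := by
  have : T = S := Set.ext h
  rwa [this]
theorem SA.not {p : (ι → ℝ) → Prop} (h : SA {x | p x}) : SA {x | ¬ p x} := h.compl
theorem SA.and {p q : (ι → ℝ) → Prop} (h : SA {x | p x}) (h' : SA {x | q x}) :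
    SA {x | p x ∧ q x} := h.inter h'
theorem SA.imp {p q : (ι → ℝ) → Prop} (h : SA {x | p x}) (h' : SA {x | q x}) :
    SA {x | p x → q x} := (h.and h'.not).not.congr fun x => by simp
theorem SA.lt {F G : (ι → ℝ) → ℝ} (hF : PolyFun F) (hG : PolyFun G) : SA {x | F x < G x} :=
  (SA.pos (hG.sub hF)).congr fun x => by simp
theorem SA.le {F G : (ι → ℝ) → ℝ} (hF : PolyFun F) (hG : PolyFun G) : SA {x | F x ≤ G x} :=
  (SA.lt hG hF).not.congr fun x => by simp
theorem SA.eq {F G : (ι → ℝ) → ℝ} (hF : PolyFun F) (hG : PolyFun G) : SA {x | F x = G x} :=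
  ((SA.le hF hG).and (SA.le hG hF)).congr fun x => by simp [le_antisymm_iff]
theorem SA.univ : SA (Set.univ : Set (ι → ℝ)) := ⟨∅, fun _ _ _ _ => trivial⟩
theorem SA.forall_fin {α : Type*} (s : Finset α) {p : α → (ι → ℝ) → Prop}
    (h : ∀ a, SA {x | p a x}) : SA {x | ∀ a ∈ s, p a x} := by
  classical
  induction s using Finset.induction_on with
  | empty => exact SA.univ.congr fun x => by simp
  | insert a s ha ih => exact ((h a).and ih).congr fun x => by simp
theorem SA.comp {S : Set (κ → ℝ)} (hS : SA S) {G : (ι → ℝ) → (κ → ℝ)}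
    (hG : ∀ k, PolyFun (fun x => G x k)) : SA {x | G x ∈ S} := by
  classical
  obtain ⟨P, hP⟩ := hS
  have : ∀ p : MvPolynomial κ ℝ, ∃ q : MvPolynomial ι ℝ, ∀ x,
      MvPolynomial.eval (G x) p = MvPolynomial.eval x q := fun p =>
    PolyFun.comp (F := fun z => MvPolynomial.eval z p) ⟨p, fun _ => rfl⟩ hG
  choose q hq using this
  refine ⟨P.image q, fun z z' h hz => hP _ _ ?_ hz⟩
  intro p hp
  rw [hq, hq]
  exact h _ (Finset.mem_image_of_mem _ hp)
theorem SA.comap {S : Set (κ → ℝ)} (hS : SA S) (e : κ → ι) : SA {x : ι → ℝ | x ∘ e ∈ S} :=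
  hS.comp (G := fun x => x ∘ e) fun k => PolyFun.coord (e k)

def cons (t : ℝ) (x : ι → ℝ) : Option ι → ℝ := fun o => Option.elim o t x

theorem eval_cons (t : ℝ) (x : ι → ℝ) (p : MvPolynomial (Option ι) ℝ) :
    MvPolynomial.eval (cons t x) p = (spec x (MvPolynomial.optionEquivLeft ℝ ι p)).eval t :=
  MvPolynomial.optionEquivLeft_elim_eval _ _ x t p

theorem SA.proj_option {S : Set (Option ι → ℝ)} (hS : SA S) :
    SA {x : ι → ℝ | ∃ t, cons t x ∈ S} := by
  classical
  obtain ⟨P, hP⟩ := hS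
  obtain ⟨Q, hQ⟩ := det (P.image (MvPolynomial.optionEquivLeft ℝ ι))
  refine ⟨Q, ?_⟩
  rintro x x' h ⟨t, ht⟩
  obtain ⟨ψ, hψ⟩ := hQ x x' h
  refine ⟨ψ t, hP _ _ ?_ ht⟩
  intro p hp
  rw [eval_cons, eval_cons]
  exact hψ _ (Finset.mem_image_of_mem _ hp) t

theorem SA.proj_aux (κ : Type) [Finite κ] : ∀ (ι : Type) (S : Set (ι ⊕ κ → ℝ)), SA S →
    SA {x : ι → ℝ | ∃ y : κ → ℝ, Sum.elim x y ∈ S} := by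
  induction κ using Finite.induction_empty_option with
  | of_equiv e ih =>
    intro ι S hS
    refine (ih ι _ (hS.comap (Sum.map id e.symm))).congr fun x => ?_
    constructor
    · rintro ⟨y, hy⟩
      refine ⟨y ∘ e, ?_⟩
      simp only [Set.mem_ofPred_eq]
      convert hy using 1
      ext k; rcases k with k | k <;> simp
    · rintro ⟨y, hy⟩
      refine ⟨y ∘ e.symm, ?_⟩
      simp only [Set.mem_ofPred_eq] at hy
      convert hy using 1
      ext k; rcases k with k | k <;> simp
  | h_empty =>
    intro ι S hS
    refine (hS.comap (Sum.elim id PEmpty.elim)).congr fun x => ?_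
    constructor
    · rintro ⟨y, hy⟩
      simp only [Set.mem_ofPred_eq]
      convert hy using 1
      ext k; rcases k with k | k
      · simp
      · exact k.elim
    · intro hy
      refine ⟨fun k => k.elim, ?_⟩
      simp only [Set.mem_ofPred_eq] at hy
      convert hy using 1
      ext k; rcases k with k | k
      · simp
      · exact k.elim
  | @h_option κ _ ih =>
    intro ι S hS
    let e : ι ⊕ Option κ → Option (ι ⊕ κ) :=
      Sum.elim (fun i => some (Sum.inl i)) (fun o => Option.elim o none (fun k => some (Sum.inr k)))
    refine (ih ι _ (hS.comap e).proj_option).congr fun x => ?_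
    constructor
    · rintro ⟨y, hy⟩
      refine ⟨fun k => y (some k), y none, ?_⟩
      simp only [Set.mem_ofPred_eq]
      convert hy using 1
      ext k; rcases k with k | k | k <;> simp [e, cons]
    · rintro ⟨y, t, hy⟩
      refine ⟨fun o => Option.elim o t y, ?_⟩
      simp only [Set.mem_ofPred_eq] at hy
      convert hy using 1
      ext k; rcases k with k | k | k <;> simp [e, cons]

theorem SA.exists_ [Finite κ] {R : (ι → ℝ) → (κ → ℝ) → Prop}
    (h : SA {z : ι ⊕ κ → ℝ | R (z ∘ Sum.inl) (z ∘ Sum.inr)}) : SA {x | ∃ y, R x y} :=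
  (SA.proj_aux κ ι _ h).congr fun x => by simp

theorem SA.forall_ [Finite κ] {R : (ι → ℝ) → (κ → ℝ) → Prop}
    (h : SA {z : ι ⊕ κ → ℝ | R (z ∘ Sum.inl) (z ∘ Sum.inr)}) : SA {x | ∀ y, R x y} :=
  (SA.exists_ (R := fun x y => ¬ R x y) h.not).not.congr fun x => by simp

end basics

theorem poly_sign_const (p : Polynomial ℝ) {s t : ℝ} (hst : s < t)
    (h : ∀ a ∈ Set.Icc s t, p.eval a ≠ 0) :
    SignType.sign (p.eval s) = SignType.sign (p.eval t) := by
  have hc : ContinuousOn (fun x => p.eval x) (Set.Icc s t) := p.continuous.continuousOn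
  have hs := h s ⟨le_rfl, hst.le⟩
  have ht := h t ⟨hst.le, le_rfl⟩
  rcases lt_or_gt_of_ne hs with hs | hs <;> rcases lt_or_gt_of_ne ht with ht | ht
  · rw [sign_neg hs, sign_neg ht]
  · obtain ⟨a, ha, h0⟩ := intermediate_value_Icc hst.le hc ⟨hs.le, ht.le⟩
    exact absurd h0 (h a ha)
  · obtain ⟨a, ha, h0⟩ := intermediate_value_Icc' hst.le hc ⟨ht.le, hs.le⟩
    exact absurd h0 (h a ha)
  · rw [sign_pos hs, sign_pos ht]

theorem SA.finite_changes {ι : Type} {S : Set (Option ι → ℝ)} (hS : SA S) :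
    ∃ M : ℕ, ∀ c : ι → ℝ, ∃ Z : Finset ℝ, Z.card ≤ M ∧ ∀ s t, s < t → (∀ z ∈ Z, z ∉ Set.Icc s t) →
      (cons s c ∈ S ↔ cons t c ∈ S) := by
  classical
  obtain ⟨P, hP⟩ := hS
  refine ⟨∑ p ∈ P, (MvPolynomial.optionEquivLeft ℝ ι p).natDegree, fun c => ?_⟩
  refine ⟨P.biUnion fun p => (spec c (MvPolynomial.optionEquivLeft ℝ ι p)).roots.toFinset, ?_, ?_⟩
  · refine Finset.card_biUnion_le.trans (Finset.sum_le_sum fun p _ => ?_)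
    exact (Multiset.toFinset_card_le _).trans ((Polynomial.card_roots' _).trans
      Polynomial.natDegree_map_le)
  · intro s t hst h
    have : Agree P (cons s c) (cons t c) := by
      intro p hp
      rw [eval_cons, eval_cons]
      by_cases h0 : spec c (MvPolynomial.optionEquivLeft ℝ ι p) = 0
      · simp [h0]
      · apply poly_sign_const _ hst
        intro a ha h1
        apply h a _ ha
        rw [Finset.mem_biUnion]
        exact ⟨p, hp, by simp [h0, h1]⟩
    exact ⟨hP _ _ this, hP _ _ this.symm⟩

theorem SA.germ {ι : Type} {S : Set (Option ι → ℝ)} (hS : SA S) (c : ι → ℝ) :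
    ∃ ε > 0, (∀ t, 0 < t → t < ε → cons t c ∈ S) ∨ (∀ t, 0 < t → t < ε → cons t c ∉ S) := by
  classical
  obtain ⟨M, hM⟩ := hS.finite_changes
  obtain ⟨Z, -, hZ⟩ := hM c
  obtain ⟨ε, hε, hZε⟩ : ∃ ε > 0, ∀ z ∈ Z, 0 < z → ε ≤ z := by
    clear hZ
    induction Z using Finset.induction_on with
    | empty => exact ⟨1, one_pos, by simp⟩
    | insert a Z ha ih =>
      obtain ⟨ε, hε, h⟩ := ih
      by_cases h0 : 0 < a
      · refine ⟨min ε a, lt_min hε h0, fun z hz hz0 => ?_⟩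
        rcases Finset.mem_insert.1 hz with rfl | hz
        · exact min_le_right _ _
        · exact (min_le_left _ _).trans (h z hz hz0)
      · refine ⟨ε, hε, fun z hz hz0 => ?_⟩
        rcases Finset.mem_insert.1 hz with rfl | hz
        · exact absurd hz0 h0
        · exact h z hz hz0
  have key : ∀ s t, 0 < s → s < t → t < ε → (cons s c ∈ S ↔ cons t c ∈ S) := by
    intro s t h0 hst hte
    apply hZ s t hst
    intro z hz hzI
    have := hZε z hz (h0.trans_le hzI.1)
    linarith [hzI.2]
  have key2 : ∀ s t, 0 < s → s < ε → 0 < t → t < ε → (cons s c ∈ S ↔ cons t c ∈ S) := by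
    intro s t h0 h1 h2 h3
    rcases lt_trichotomy s t with h | h | h
    · exact key s t h0 h h3
    · rw [h]
    · exact (key t s h2 h h1).symm
  refine ⟨ε, hε, ?_⟩
  by_cases h : cons (ε/2) c ∈ S
  · left; intro t h0 h1
    exact (key2 (ε/2) t (by linarith) (by linarith) h0 h1).1 h
  · right; intro t h0 h1 h2
    exact h ((key2 (ε/2) t (by linarith) (by linarith) h0 h1).2 h2)

open MeasureTheory in
theorem bv_of_changes (u : ℝ → ℝ) (T : Set ℝ) (R : ℝ) (hR : ∀ t ∈ T, |u t| ≤ R) (M : ℕ)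
    (hM : ∀ c : ℝ, ∃ Z : Finset ℝ, Z.card ≤ M ∧ ∀ s ∈ T, ∀ t ∈ T, s < t →
      (∀ z ∈ Z, z ∉ Set.Icc s t) → (c < u s ↔ c < u t)) :
    BoundedVariationOn u T := by
  classical
  have bound : eVariationOn u T ≤ (2 * M : ENNReal) * ENNReal.ofReal (R - (-R)) := by
    apply iSup_le
    rintro ⟨n, ⟨w, hw, hwT⟩⟩
    simp only
    set J : ℕ → Set ℝ := fun j => Set.Ico (min (u (w j)) (u (w (j+1)))) (max (u (w j)) (u (w (j+1))))
      with hJ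
    have hvol : ∀ j, edist (u (w (j+1))) (u (w j)) = ∫⁻ c, (J j).indicator 1 c := by
      intro j
      rw [lintegral_indicator_one measurableSet_Ico, Real.volume_Ico, edist_dist, Real.dist_eq,
        max_sub_min_eq_abs']
      congr 1; rw [abs_sub_comm]
    have hcount : ∀ c, ∑ j ∈ Finset.range n, (J j).indicator (1 : ℝ → ENNReal) c ≤ 
        (Set.Icc (-R) R).indicator (fun _ => (2 * M : ENNReal)) c := by
      intro c
      by_cases hc : c ∈ Set.Icc (-R) R
      · rw [Set.indicator_of_mem hc]
        obtain ⟨Z, hZM, hZ⟩ := hM c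
        set K := (Finset.range n).filter (fun j => c ∈ J j) with hK
        have h1 : ∑ j ∈ Finset.range n, (J j).indicator (1 : ℝ → ENNReal) c = K.card := by
          rw [hK, Finset.card_filter]
          push_cast
          apply Finset.sum_congr rfl
          intro j _
          by_cases h : c ∈ J j <;> simp [h]
        rw [h1]
        have hne : ∀ j ∈ K, w j < w (j+1) := by
          intro j hj
          have hj := (Finset.mem_filter.1 hj).2
          rcases (hw (Nat.le_succ j)).lt_or_eq with h | h
          · exact h
          · simp only [hJ, Set.mem_Ico] at hj
            rw [show w (j+1) = w j from h.symm] at hj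
            simp at hj
            linarith
        have hz : ∀ j ∈ K, ∃ z ∈ Z, z ∈ Set.Icc (w j) (w (j+1)) := by
          intro j hj
          by_contra hcon
          push Not at hcon
          have := hZ _ (hwT j) _ (hwT (j+1)) (hne j hj) hcon
          have hj := (Finset.mem_filter.1 hj).2
          simp only [hJ, Set.mem_Ico, min_le_iff, lt_max_iff] at hj
          rcases hj with ⟨h1 | h1, h2 | h2⟩
          · linarith
          · have := this.2 h2; linarith
          · have := this.1 h2; linarith
          · linarith
        choose! z hzZ hzI using hz
        have hcard : K.card ≤ (Z ×ˢ (Finset.univ : Finset Bool)).card := by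
          apply Finset.card_le_card_of_injOn (fun j => (z j, decide (z j = w (j+1))))
          · intro j hj
            simp only [Finset.coe_product, Set.mem_prod, Finset.mem_coe, Finset.mem_univ, and_true]
            exact hzZ j hj
          · have main : ∀ j ∈ K, ∀ j' ∈ K, j < j' → z j = z j' →
                decide (z j = w (j+1)) = decide (z j' = w (j'+1)) → False := by
              intro j hj j' hj' hlt h1 h2
              have e1 := (hzI j hj).2
              have e2 := (hzI j' hj').1
              have e3 : w (j+1) ≤ w j' := hw hlt
              have e4 := hne j' hj'
              have e5 : z j = w (j+1) := by linarith
              have e6 : z j' ≠ w (j'+1) := by intro h; linarith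
              simp [e5, e6] at h2
            intro j hj j' hj' heq
            simp only [Prod.mk.injEq] at heq
            rcases lt_trichotomy j j' with h | h | h
            · exact (main j hj j' hj' h heq.1 heq.2).elim
            · exact h
            · exact (main j' hj' j hj h heq.1.symm heq.2.symm).elim
        rw [Finset.card_product] at hcard
        simp at hcard
        have : K.card ≤ 2 * M := by omega
        exact_mod_cast this
      · rw [Set.indicator_of_notMem hc, nonpos_iff_eq_zero]
        apply Finset.sum_eq_zero
        intro j _
        apply Set.indicator_of_notMem
        intro hcJ
        apply hc
        have h1 := abs_le.1 (hR _ (hwT j))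
        have h2 := abs_le.1 (hR _ (hwT (j+1)))
        simp only [hJ, Set.mem_Ico] at hcJ
        exact ⟨(le_min h1.1 h2.1).trans hcJ.1, hcJ.2.le.trans (max_le h1.2 h2.2)⟩
    calc ∑ j ∈ Finset.range n, edist (u (w (j+1))) (u (w j))
        = ∑ j ∈ Finset.range n, ∫⁻ c, (J j).indicator 1 c := Finset.sum_congr rfl fun j _ => hvol j
      _ = ∫⁻ c, ∑ j ∈ Finset.range n, (J j).indicator 1 c := by
          rw [lintegral_finsetSum]
          intro j _
          exact measurable_one.indicator measurableSet_Ico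
      _ ≤ ∫⁻ c, (Set.Icc (-R) R).indicator (fun _ => (2 * M : ENNReal)) c := lintegral_mono hcount
      _ = _ := by
          rw [lintegral_indicator measurableSet_Icc, setLIntegral_const, Real.volume_Icc]
  refine ne_top_of_le_ne_top ?_ bound
  exact ENNReal.mul_ne_top (ENNReal.mul_ne_top (by simp) (by simp)) ENNReal.ofReal_ne_top

end QE

end Chunk3

section Chunk4
open Matrix BigOperators Filter

namespace QE

theorem bv_mono (u : ℝ → ℝ) (T : Set ℝ) (hu : BoundedVariationOn u T) :
    ∃ V : ℝ → ℝ, Monotone V ∧ (∀ t, 0 ≤ V t) ∧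
      ∀ s ∈ T, ∀ t ∈ T, s ≤ t → |u t - u s| ≤ V t - V s := by
  have hfin : ∀ t, eVariationOn u (T ∩ Set.Iic t) ≠ ⊤ := fun t =>
    ne_top_of_le_ne_top hu (eVariationOn.mono u Set.inter_subset_left)
  refine ⟨fun t => (eVariationOn u (T ∩ Set.Iic t)).toReal, ?_, fun t => ENNReal.toReal_nonneg, ?_⟩
  · intro s t hst
    exact ENNReal.toReal_mono (hfin t) (eVariationOn.mono u
      (Set.inter_subset_inter_right _ (Set.Iic_subset_Iic.2 hst)))
  · intro s hs t ht hst
    have h1 := eVariationOn.add_le_union u (s := T ∩ Set.Iic s) (t := T ∩ Set.Icc s t)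
      (fun x hx y hy => hx.2.trans hy.2.1)
    have h2 : eVariationOn u ((T ∩ Set.Iic s) ∪ (T ∩ Set.Icc s t)) ≤ eVariationOn u (T ∩ Set.Iic t) := by
      apply eVariationOn.mono
      rintro x (hx | hx)
      · exact ⟨hx.1, le_trans hx.2 hst⟩
      · exact ⟨hx.1, hx.2.2⟩
    have h3 : edist (u t) (u s) ≤ eVariationOn u (T ∩ Set.Icc s t) :=
      eVariationOn.edist_le u ⟨ht, hst, le_rfl⟩ ⟨hs, le_rfl, hst⟩
    have h4 : eVariationOn u (T ∩ Set.Iic s) + edist (u t) (u s) ≤ eVariationOn u (T ∩ Set.Iic t) :=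
      (add_le_add le_rfl h3).trans (h1.trans h2)
    have h5 := ENNReal.toReal_mono (hfin t) h4
    rw [ENNReal.toReal_add (hfin s) (edist_ne_top _ _), edist_dist, Real.dist_eq,
      ENNReal.toReal_ofReal (abs_nonneg _)] at h5
    linarith

section curve
variable {J : Type} [Fintype J]

structure Good (M : Set (J → ℝ)) (g : (J → ℝ) → ℝ) (Z : Set (J → ℝ)) : Prop where
  sub : Z ⊆ M
  sa : SA Z
  cpt : ∀ t, IsCompact (Z ∩ {x | g x = t})
  ex : ∀ x ∈ M, ∃ y ∈ Z, g y = g x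

theorem good_min {M : Set (J → ℝ)} {g q : (J → ℝ) → ℝ} (hg : PolyFun g) (hq : PolyFun q)
    {Z : Set (J → ℝ)} (hZ : Good M g Z) :
    ∃ Z', Z' ⊆ Z ∧ Good M g Z' ∧ ∀ x ∈ Z', ∀ y ∈ Z, g y = g x → q x ≤ q y := by
  refine ⟨{x | x ∈ Z ∧ ∀ y, y ∈ Z → g y = g x → q x ≤ q y}, fun x hx => hx.1, ⟨?_, ?_, ?_, ?_⟩, fun x hx => hx.2⟩
  · exact fun x hx => hZ.sub hx.1
  · apply SA.and hZ.sa
    apply SA.forall_ (κ := J)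
    apply SA.imp (hZ.sa.comap _)
    apply SA.imp (SA.eq (hg.comap _) (hg.comap _))
    exact SA.le (hq.comap _) (hq.comap _)
  · intro t
    have : {x | x ∈ Z ∧ ∀ y, y ∈ Z → g y = g x → q x ≤ q y} ∩ {x | g x = t} =
        (Z ∩ {x | g x = t}) ∩ ⋂ y ∈ Z ∩ {x | g x = t}, {x | q x ≤ q y} := by
      ext x
      simp only [Set.mem_inter_iff, Set.mem_ofPred_eq, Set.mem_iInter]
      constructor
      · rintro ⟨⟨h1, h2⟩, h3⟩
        exact ⟨⟨h1, h3⟩, fun y hy => h2 y hy.1 (hy.2.trans h3.symm)⟩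
      · rintro ⟨⟨h1, h2⟩, h3⟩
        exact ⟨⟨h1, fun y hy hyx => h3 y ⟨hy, hyx.trans h2⟩⟩, h2⟩
    rw [this]
    apply (hZ.cpt t).inter_right
    apply isClosed_biInter
    intro y _
    exact isClosed_le hq.continuous continuous_const
  · intro x hx
    obtain ⟨y, hy, hyx⟩ := hZ.ex x hx
    obtain ⟨w, hw, hmin⟩ := (hZ.cpt (g x)).exists_isMinOn ⟨y, hy, hyx⟩ hq.continuous.continuousOn
    refine ⟨w, ⟨hw.1, fun y hy hyw => ?_⟩, hw.2⟩
    exact hmin (show y ∈ Z ∩ {z | g z = g x} from ⟨hy, hyw.trans hw.2⟩)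

theorem good_coords {M : Set (J → ℝ)} {g : (J → ℝ) → ℝ} (hg : PolyFun g)
    {Z : Set (J → ℝ)} (hZ : Good M g Z) (s : Finset J) :
    ∃ Z', Z' ⊆ Z ∧ Good M g Z' ∧ ∀ a ∈ s, ∀ x ∈ Z', ∀ y ∈ Z', g x = g y → x a = y a := by
  classical
  induction s using Finset.induction_on with
  | empty => exact ⟨Z, subset_rfl, hZ, by simp⟩
  | insert a s ha ih =>
    obtain ⟨Z1, h1, h2, h3⟩ := ih
    obtain ⟨Z2, h4, h5, h6⟩ := good_min hg (PolyFun.coord a) h2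
    refine ⟨Z2, h4.trans h1, h5, ?_⟩
    intro b hb x hx y hy hxy
    rcases Finset.mem_insert.1 hb with rfl | hb
    · exact le_antisymm (h6 x hx y (h4 hy) hxy.symm) (h6 y hy x (h4 hx) hxy)
    · exact h3 b hb x (h4 hx) y (h4 hy) hxy

theorem exists_curve {M : Set (J → ℝ)} (hMc : IsCompact M) (hMs : SA M) {g h : (J → ℝ) → ℝ}
    (hg : PolyFun g) (hh : PolyFun h) :
    ∃ (X : ℝ → J → ℝ) (L : ℝ → ℝ), Monotone L ∧ (∀ t, 0 ≤ L t) ∧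
      (∀ x ∈ M, X (g x) ∈ M ∧ g (X (g x)) = g x ∧ h (X (g x)) ≤ h x) ∧
      ∀ x ∈ M, ∀ y ∈ M, g y ≤ g x → ‖X (g y) - X (g x)‖ ≤ L (g x) - L (g y) := by
  classical
  have hM : Good M g M := ⟨subset_rfl, hMs,
    fun t => hMc.inter_right (isClosed_eq hg.continuous continuous_const), fun x hx => ⟨x, hx, rfl⟩⟩
  obtain ⟨Z1, h11, h12, h13⟩ := good_min hg hh hM
  obtain ⟨Z, h21, h22, h23⟩ := good_coords hg h12 Finset.univ
  have hinj : ∀ x ∈ Z, ∀ y ∈ Z, g x = g y → x = y := fun x hx y hy hxy =>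
    funext fun a => h23 a (Finset.mem_univ a) x hx y hy hxy
  have : ∀ t, ∃ x, t ∈ g '' M → x ∈ Z ∧ g x = t := by
    intro t
    by_cases ht : t ∈ g '' M
    · obtain ⟨x, hx, rfl⟩ := ht
      obtain ⟨y, hy, hyx⟩ := h22.ex x hx
      exact ⟨y, fun _ => ⟨hy, hyx⟩⟩
    · exact ⟨0, fun h => absurd h ht⟩
  choose X hX using this
  obtain ⟨R, hR⟩ := hMc.isBounded.exists_norm_le
  have hbv : ∀ a : J, BoundedVariationOn (fun t => X t a) (g '' M) := by
    intro a
    have hS : SA {z : Option Unit → ℝ | ∃ x : J → ℝ, x ∈ Z ∧ g x = z none ∧ z (some ()) < x a} := by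
      apply SA.exists_ (κ := J) (R := fun z x => x ∈ Z ∧ g x = z none ∧ z (some ()) < x a)
      apply SA.and (h22.sa.comap _)
      apply SA.and (SA.eq (hg.comap _) (PolyFun.coord _))
      exact SA.lt (PolyFun.coord _) (PolyFun.coord _)
    obtain ⟨K, hK⟩ := hS.finite_changes
    apply bv_of_changes _ _ R _ K
    · intro c
      obtain ⟨W, hW1, hW2⟩ := hK (fun _ => c)
      refine ⟨W, hW1, ?_⟩
      have key : ∀ t ∈ g '' M, (cons t (fun _ => c) ∈ {z : Option Unit → ℝ | ∃ x : J → ℝ, x ∈ Z ∧ g x = z none ∧ z (some ()) < x a}) ↔ c < X t a := by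
        intro t ht
        constructor
        · rintro ⟨x, hx, hxt, hc⟩
          have : x = X t := hinj x hx _ (hX t ht).1 (hxt.trans (hX t ht).2.symm)
          rw [← this]; exact hc
        · intro hc
          exact ⟨X t, (hX t ht).1, (hX t ht).2, hc⟩
      intro s hs t ht hst hW
      rw [← key s hs, ← key t ht]
      exact hW2 s t hst hW
    · intro t ht
      exact (norm_le_pi_norm (X t) a).trans (hR _ (h22.sub (hX t ht).1))
  choose V hV1 hV2 hV3 using fun a => bv_mono _ _ (hbv a)
  refine ⟨X, fun t => ∑ a, V a t, ?_, ?_, ?_, ?_⟩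
  · intro s t hst
    exact Finset.sum_le_sum fun a _ => hV1 a hst
  · intro t; exact Finset.sum_nonneg fun a _ => hV2 a t
  · intro x hx
    have := hX (g x) ⟨x, hx, rfl⟩
    exact ⟨h22.sub this.1, this.2, h13 _ (h21 this.1) x hx this.2.symm⟩
  · intro x hx y hy hxy
    have hnn : ∀ a, 0 ≤ V a (g x) - V a (g y) := fun a => sub_nonneg.2 (hV1 a hxy)
    rw [← Finset.sum_sub_distrib]
    rw [pi_norm_le_iff_of_nonneg (Finset.sum_nonneg fun a _ => hnn a)]
    intro a
    rw [Pi.sub_apply, Real.norm_eq_abs, abs_sub_comm]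
    exact (hV3 a _ ⟨y, hy, rfl⟩ _ ⟨x, hx, rfl⟩ hxy).trans
      (Finset.single_le_sum (f := fun a => V a (g x) - V a (g y)) (fun a _ => hnn a) (Finset.mem_univ a))

theorem KL {M : Set (J → ℝ)} (hMc : IsCompact M) (hMs : SA M) {g h : (J → ℝ) → ℝ}
    (hg : PolyFun g) (hh : PolyFun h) (hg0 : ∀ x ∈ M, 0 ≤ g x) (hh0 : ∀ x ∈ M, 0 ≤ h x)
    (C : ℝ) (hC : 0 < C) 
    (hstar : ∀ x ∈ M, ∀ y ∈ M, |g x - g y| ≤ C * (Real.sqrt (h x) * ‖x - y‖ + ‖x - y‖ ^ 2))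
    (c C₁ : ℝ) (hc : 0 < c) (hC₁ : 0 < C₁) :
    ∃ (L : ℝ → ℝ) (τ C₂ : ℝ), 0 < τ ∧ 0 < C₂ ∧ (∀ t, 0 ≤ L t) ∧
      (∀ ε > 0, ∃ η > 0, ∀ t, t < η → L t < ε) ∧
      (∀ x ∈ M, ∀ y ∈ M, ∀ d, 0 ≤ d → g y ≤ g x → c * d ^ 2 ≤ g x - g y → Real.sqrt (h y) ≤ C₁ * d →
        d ≤ C₂ * (L (g x) - L (g y))) ∧
      (∀ x ∈ M, 0 < g x → g x < τ → 0 < h x) := by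
  classical
  obtain ⟨X, L, hL1, hL2, hX, hXL⟩ := exists_curve hMc hMs hg hh
  -- key estimate along the curve
  have curve : ∀ x ∈ M, ∀ y ∈ M, g y ≤ g x → g x - g y ≤
      C * (Real.sqrt (h y) * (L (g x) - L (g y)) + (L (g x) - L (g y)) ^ 2) := by
    intro x hx y hy hxy
    obtain ⟨a1, a2, a3⟩ := hX x hx
    obtain ⟨b1, b2, b3⟩ := hX y hy
    have h1 := hstar _ b1 _ a1
    rw [a2, b2] at h1
    have h2 := hXL x hx y hy hxy
    have h3 := (neg_le_abs (g y - g x)).trans h1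
    have h4 : Real.sqrt (h (X (g y))) ≤ Real.sqrt (h y) := Real.sqrt_le_sqrt b3
    have h5 : Real.sqrt (h (X (g y))) * ‖X (g y) - X (g x)‖ + ‖X (g y) - X (g x)‖ ^ 2 ≤
        Real.sqrt (h y) * (L (g x) - L (g y)) + (L (g x) - L (g y)) ^ 2 := by gcongr
    have h6 := mul_le_mul_of_nonneg_left h5 hC.le
    linarith
  obtain ⟨τ, hτ, hb⟩ : ∃ τ > 0, ∀ x ∈ M, 0 < g x → g x < τ → 0 < h x := by
    have hS : SA {z : Option Empty → ℝ | ∃ x : J → ℝ, x ∈ M ∧ g x = z none ∧ h x = 0} := by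
      apply SA.exists_ (κ := J) (R := fun z x => x ∈ M ∧ g x = z none ∧ h x = 0)
      apply SA.and (hMs.comap _)
      apply SA.and (SA.eq (hg.comap _) (PolyFun.coord _))
      exact SA.eq (hh.comap _) (PolyFun.const _)
    obtain ⟨ε, hε, H | H⟩ := hS.germ (fun e => e.elim)
    · exfalso
      have step : ∀ s t, 0 < s → s ≤ t → t < ε → t - s ≤ C * (L t - L s) ^ 2 := by
        intro s t hs hst ht
        obtain ⟨x, hx, hxt, _⟩ := H t (hs.trans_le hst) ht
        obtain ⟨y, hy, hys, hy0⟩ := H s hs (hst.trans_lt ht)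
        have hxt : g x = t := hxt
        have hys : g y = s := hys
        have := curve x hx y hy (by rw [hxt, hys]; exact hst)
        rw [hxt, hys, hy0] at this
        simpa using this
      obtain ⟨n, hn⟩ := exists_nat_gt (4 * C * (L (ε/2) - L (ε/4)) ^ 2 / ε)
      have hn0 : (0 : ℝ) < n := lt_of_le_of_lt (by positivity) hn
      have hn0' : 0 < n := by exact_mod_cast hn0
      set w := Real.sqrt ((ε / (4 * n)) / C) with hw
      have hw0 : 0 ≤ w := Real.sqrt_nonneg _
      have hw2 : w ^ 2 = (ε / (4 * n)) / C := Real.sq_sqrt (by positivity)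
      have hind : ∀ k : ℕ, k ≤ n → k * w ≤ L (ε/4 + k * (ε / (4 * n))) - L (ε/4) := by
        intro k
        induction k with
        | zero => simp
        | succ k ih =>
          intro hk
          have h1 := ih (by omega)
          have hkn : ((k + 1 : ℕ) : ℝ) ≤ n := by exact_mod_cast hk
          have h2 : ((k + 1 : ℕ) : ℝ) * (ε / (4 * n)) ≤ ε / 4 := by
            calc ((k + 1 : ℕ) : ℝ) * (ε / (4 * n)) ≤ n * (ε / (4 * n)) := by gcongr
              _ = ε / 4 := by field_simp
          have h3 : 0 < ε / (4 * n) := by positivity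
          have h4 : ε/4 + k * (ε / (4 * n)) ≤ ε/4 + (k + 1 : ℕ) * (ε / (4 * n)) := by
            push_cast; linarith
          have h5 := step (ε/4 + k * (ε / (4 * n))) (ε/4 + (k + 1 : ℕ) * (ε / (4 * n)))
            (by positivity) h4 (by linarith)
          have h6 : w ≤ L (ε/4 + (k + 1 : ℕ) * (ε / (4 * n))) - L (ε/4 + k * (ε / (4 * n))) := by
            apply Real.sqrt_le_iff.2
            refine ⟨sub_nonneg.2 (hL1 h4), ?_⟩
            rw [div_le_iff₀ hC]
            push_cast at h5 ⊢
            linarith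
          push_cast at h6 ⊢
          linarith
      have h1 := hind n le_rfl
      have h2 : ε/4 + n * (ε / (4 * n)) = ε / 2 := by field_simp; norm_num
      rw [h2] at h1
      have h3 : (n * w) ^ 2 ≤ (L (ε/2) - L (ε/4)) ^ 2 := by gcongr
      rw [mul_pow, hw2] at h3
      rw [div_lt_iff₀ hε] at hn
      have h4 : (n:ℝ) ^ 2 * (ε / (4 * n) / C) = n * ε / (4 * C) := by field_simp
      rw [h4, div_le_iff₀ (by positivity)] at h3
      linarith
    · refine ⟨ε, hε, fun x hx h0 h1 => ?_⟩
      refine lt_of_le_of_ne (hh0 x hx) fun h2 => H (g x) h0 h1 ⟨x, hx, rfl, h2.symm⟩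
  set ℓ := sInf (L '' Set.Ioi 0) with hℓ
  have hbdd : BddBelow (L '' Set.Ioi 0) := ⟨0, by rintro _ ⟨t, _, rfl⟩; exact hL2 t⟩
  have hℓle : ∀ t, 0 < t → ℓ ≤ L t := fun t ht => csInf_le hbdd ⟨t, ht, rfl⟩
  set K := C * C₁ / c + C / c + 1 with hK
  have hKpos : 0 < K := by positivity
  refine ⟨fun t => if t ≤ 0 then 0 else L t - ℓ + Real.sqrt t, τ, K + 1 / Real.sqrt c, hτ, by positivity,
    ?_, ?_, ?_, hb⟩
  · intro t
    simp only
    split_ifs with ht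
    · rfl
    · have := hℓle t (by linarith); have := Real.sqrt_nonneg t; linarith
  · intro ε hε
    obtain ⟨_, ⟨t, ht, rfl⟩, hlt⟩ := exists_lt_of_csInf_lt (⟨L 1, 1, by simp, rfl⟩ : (L '' Set.Ioi 0).Nonempty)
      (show sInf (L '' Set.Ioi 0) < ℓ + ε / 2 by linarith)
    have ht : 0 < t := ht
    refine ⟨min t ((ε/2)^2), lt_min ht (by positivity), fun s hs => ?_⟩
    simp only
    split_ifs with h0
    · exact hε
    · have h1 := hL1 (hs.le.trans (min_le_left _ _))
      have h2 : Real.sqrt s < ε / 2 := by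
        rw [Real.sqrt_lt' (by positivity)]
        exact hs.trans_le (min_le_right _ _)
      linarith
  · intro x hx y hy d hd hxy hcd hhy
    have hsc : 0 < Real.sqrt c := Real.sqrt_pos.2 hc
    simp only
    by_cases hy0 : g y ≤ 0
    · rw [if_pos hy0]
      have hy0' : g y = 0 := le_antisymm hy0 (hg0 y hy)
      by_cases hx0 : g x ≤ 0
      · rw [if_pos hx0]
        have : d ^ 2 ≤ 0 := by
          by_contra hcon
          have : 0 < c * d ^ 2 := mul_pos hc (not_le.1 hcon)
          linarith
        have : d = 0 := by nlinarith
        simp [this]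
      · rw [if_neg hx0]
        have h1 := hℓle (g x) (by linarith)
        have h2 : d ≤ 1 / Real.sqrt c * Real.sqrt (g x) := by
          rw [one_div_mul_eq_div, le_div_iff₀ hsc]
          apply Real.le_sqrt_of_sq_le
          rw [mul_pow, Real.sq_sqrt hc.le]
          linarith
        have h3 := Real.sqrt_nonneg (g x)
        have h4 : 0 < 1 / Real.sqrt c := by positivity
        nlinarith [mul_nonneg hKpos.le (sub_nonneg.2 h1), mul_nonneg hKpos.le h3,
          mul_nonneg h4.le (sub_nonneg.2 h1)]
    · rw [if_neg hy0, if_neg (by linarith)]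
      set Δ := L (g x) - L (g y) with hΔ
      have hΔ0 : 0 ≤ Δ := sub_nonneg.2 (hL1 hxy)
      have h1 := curve x hx y hy hxy
      rw [← hΔ] at h1
      have h2 : Real.sqrt (h y) * Δ ≤ C₁ * d * Δ := by gcongr
      have h3 : c * d ^ 2 ≤ C * (C₁ * d * Δ + Δ ^ 2) := by
        have := mul_le_mul_of_nonneg_left (add_le_add_left h2 (Δ^2)) hC.le
        linarith
      have h4 : d ≤ K * Δ := by
        by_contra hcon
        push Not at hcon
        have hK1 : 1 ≤ K := by
          rw [hK]; have : 0 ≤ C * C₁ / c + C / c := by positivity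
          linarith
        have hΔd : Δ ≤ d := by nlinarith
        have hdpos : 0 < d := lt_of_le_of_lt (by positivity) hcon
        have h5 : c * d ^ 2 ≤ (C * C₁ + C) * Δ * d := by
          have : C * Δ ^ 2 ≤ C * (Δ * d) := by rw [pow_two]; gcongr
          linarith
        have h6 : c * d ≤ (C * C₁ + C) * Δ := by
          have : c * d * d ≤ (C * C₁ + C) * Δ * d := by linarith
          exact le_of_mul_le_mul_right this hdpos
        have h7 : c * K = C * C₁ + C + c := by rw [hK]; field_simp
        have h8 : c * (K * Δ) < c * d := by gcongr
        have : c * (K * Δ) = (C * C₁ + C + c) * Δ := by rw [← h7]; ring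
        nlinarith
      have h5 : Real.sqrt (g y) ≤ Real.sqrt (g x) := Real.sqrt_le_sqrt hxy
      have h6 : Δ ≤ L (g x) - ℓ + Real.sqrt (g x) - (L (g y) - ℓ + Real.sqrt (g y)) := by
        rw [hΔ]; linarith
      calc d ≤ K * Δ := h4
        _ ≤ (K + 1 / Real.sqrt c) * Δ := by
          have : 0 ≤ 1 / Real.sqrt c * Δ := by positivity
          linarith
        _ ≤ _ := by gcongr

end curve
end QE

end Chunk4

section Chunk5
open Matrix BigOperators Filter

namespace QE

theorem KL_conv {J : Type} [Fintype J] {M : Set (J → ℝ)} (hMc : IsCompact M) (hMs : SA M)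
    {g h : (J → ℝ) → ℝ}
    (hg : PolyFun g) (hh : PolyFun h) (hg0 : ∀ x ∈ M, 0 ≤ g x) (hh0 : ∀ x ∈ M, 0 ≤ h x)
    (C : ℝ) (hC : 0 < C) 
    (hstar : ∀ x ∈ M, ∀ y ∈ M, |g x - g y| ≤ C * (Real.sqrt (h x) * ‖x - y‖ + ‖x - y‖ ^ 2))
    (c C₁ ρ η : ℝ) (hc : 0 < c) (hC₁ : 0 < C₁) (hρ : 0 < ρ) (hη : 0 < η)
    (xs : J → ℝ) (hgxs : g xs = 0) :
    ∃ δ > 0, ∀ x : ℕ → J → ℝ, (∀ k, x k ∈ M) → ‖x 0 - xs‖ ≤ δ →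
      (∀ k, ‖x k - xs‖ ≤ ρ → g (x k) ≤ η → c * ‖x (k+1) - x k‖ ^ 2 ≤ g (x k) - g (x (k+1))) →
      (∀ k, Real.sqrt (h (x (k+1))) ≤ C₁ * ‖x (k+1) - x k‖) →
      ∃ xb ∈ M, Tendsto x atTop (nhds xb) ∧ g xb = 0 := by
  obtain ⟨L, τ, C₂, hτ, hC₂, hL0, hL1, hKL, hcrit⟩ :=
    KL hMc hMs hg hh hg0 hh0 C hC hstar c C₁ hc hC₁
  obtain ⟨η₁, hη₁, hLη₁⟩ := hL1 (ρ / (2 * C₂)) (by positivity)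
  have hcont : ∀ᶠ x in nhds xs, g x < min η₁ (min τ η) := by
    have : Tendsto g (nhds xs) (nhds (g xs)) := hg.continuous.continuousAt
    rw [hgxs] at this
    exact this.eventually_lt_const (lt_min hη₁ (lt_min hτ hη))
  obtain ⟨δ₀, hδ₀, hball⟩ := Metric.eventually_nhds_iff.1 hcont
  refine ⟨min (δ₀ / 2) (ρ / 2), by positivity, ?_⟩
  intro x hxM hx0 hdesc hgrad
  have hg1 : g (x 0) < min η₁ (min τ η) := by
    apply hball
    rw [dist_eq_norm]
    linarith [hx0.trans (min_le_left _ _)]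
  have hL : C₂ * L (g (x 0)) ≤ ρ / 2 := by
    have := hLη₁ _ (hg1.trans_le (min_le_left _ _))
    rw [lt_div_iff₀ (by positivity)] at this
    linarith
  have hgη : g (x 0) < η := hg1.trans_le ((min_le_right _ _).trans (min_le_right _ _))
  have hgτ : g (x 0) < τ := hg1.trans_le ((min_le_right _ _).trans (min_le_left _ _))
  have hx0ρ : ‖x 0 - xs‖ ≤ ρ / 2 := hx0.trans (min_le_right _ _)
  have hstep : ∀ k, ‖x k - xs‖ ≤ ρ → g (x k) ≤ η → g (x (k+1)) ≤ g (x k) ∧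
      ‖x (k+1) - x k‖ ≤ C₂ * (L (g (x k)) - L (g (x (k+1)))) := by
    intro k h1 h2
    have h3 := hdesc k h1 h2
    have h4 : g (x (k+1)) ≤ g (x k) := by
      have : 0 ≤ c * ‖x (k+1) - x k‖ ^ 2 := by positivity
      linarith
    exact ⟨h4, hKL _ (hxM k) _ (hxM (k+1)) _ (norm_nonneg _) h4 h3 (hgrad k)⟩
  have hind : ∀ k, g (x k) ≤ g (x 0) ∧
      ∑ j ∈ Finset.range k, ‖x (j+1) - x j‖ ≤ C₂ * (L (g (x 0)) - L (g (x k))) ∧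
      ‖x k - x 0‖ ≤ ∑ j ∈ Finset.range k, ‖x (j+1) - x j‖ := by
    intro k
    induction k with
    | zero => simp
    | succ k ih =>
      obtain ⟨h1, h2, h3⟩ := ih
      have h4 : ‖x k - xs‖ ≤ ρ := by
        have := norm_add_le (x k - x 0) (x 0 - xs)
        rw [sub_add_sub_cancel] at this
        have := mul_nonneg hC₂.le (hL0 (g (x k)))
        linarith
      obtain ⟨h5, h6⟩ := hstep k h4 (h1.trans hgη.le)
      refine ⟨h5.trans h1, ?_, ?_⟩
      · rw [Finset.sum_range_succ]; linarith
      · rw [Finset.sum_range_succ]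
        have := norm_add_le (x (k+1) - x k) (x k - x 0)
        rw [sub_add_sub_cancel] at this
        linarith
  have hsum : Summable (fun j => ‖x (j+1) - x j‖) := by
    apply summable_of_sum_range_le (c := ρ / 2) (fun _ => norm_nonneg _)
    intro k
    have := (hind k).2.1
    have := mul_nonneg hC₂.le (hL0 (g (x k)))
    linarith
  have hcau : CauchySeq x := by
    apply cauchySeq_of_summable_dist
    refine hsum.congr fun j => ?_
    rw [dist_eq_norm, norm_sub_rev]
  obtain ⟨xb, hxb⟩ := cauchySeq_tendsto_of_complete hcau
  have hxbM : xb ∈ M := hMc.isClosed.mem_of_tendsto hxb (Eventually.of_forall hxM)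
  refine ⟨xb, hxbM, hxb, ?_⟩
  have hgb : g xb ≤ g (x 0) :=
    le_of_tendsto' ((hg.continuous.tendsto xb).comp hxb) fun k => (hind k).1
  have hhb : Real.sqrt (h xb) ≤ 0 := by
    have e1 : Tendsto (fun k => Real.sqrt (h (x (k+1)))) atTop (nhds (Real.sqrt (h xb))) :=
      (Real.continuous_sqrt.tendsto _).comp ((hh.continuous.tendsto xb).comp
        ((tendsto_add_atTop_iff_nat 1).2 hxb))
    have e2 : Tendsto (fun k => C₁ * ‖x (k+1) - x k‖) atTop (nhds (C₁ * 0)) :=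
      hsum.tendsto_atTop_zero.const_mul C₁
    rw [mul_zero] at e2
    exact le_of_tendsto_of_tendsto' e1 e2 hgrad
  have hh1 : h xb ≤ 0 := by
    by_contra hcon
    have := Real.sqrt_pos.2 (not_le.1 hcon)
    linarith
  by_contra hne
  have := hcrit xb hxbM (lt_of_le_of_ne (hg0 xb hxbM) (Ne.symm hne)) (hgb.trans_lt hgτ)
  linarith

end QE

end Chunk5

section Chunk6
open Matrix BigOperators Filter

namespace QE

section mat
variable {m k l p : Type} [Fintype m] [Fintype k] [Fintype l] [Fintype p]

theorem froSq_nonneg (M : Matrix m k ℝ) : 0 ≤ froSq M :=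
  Finset.sum_nonneg fun _ _ => Finset.sum_nonneg fun _ _ => sq_nonneg _
theorem fro_nonneg (M : Matrix m k ℝ) : 0 ≤ fro M := Real.sqrt_nonneg _
theorem fro_sq (M : Matrix m k ℝ) : fro M ^ 2 = froSq M := Real.sq_sqrt (froSq_nonneg M)
theorem froSq_trace (M : Matrix m k ℝ) : froSq M = trace (Mᵀ * M) := by
  rw [froSq, Finset.sum_comm]
  simp [trace, Matrix.mul_apply, pow_two]
theorem froSq_trace' (M : Matrix m k ℝ) : froSq M = trace (M * Mᵀ) := by
  rw [froSq_trace, trace_mul_comm]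
theorem froSq_transpose (M : Matrix m k ℝ) : froSq Mᵀ = froSq M := by
  rw [froSq_trace, froSq_trace', transpose_transpose]
theorem fro_transpose (M : Matrix m k ℝ) : fro Mᵀ = fro M := by
  rw [fro, fro, froSq_transpose]

section
attribute [local instance] Matrix.frobeniusNormedAddCommGroup Matrix.frobeniusNormedSpace
theorem fro_eq_norm (M : Matrix m k ℝ) : fro M = ‖M‖ := by
  rw [Matrix.frobenius_norm_def, fro, froSq, Real.sqrt_eq_rpow]
  simp
theorem fro_add_le (A B : Matrix m k ℝ) : fro (A + B) ≤ fro A + fro B := by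
  simp only [fro_eq_norm]; exact norm_add_le _ _
theorem fro_sub_le (A B : Matrix m k ℝ) : fro (A - B) ≤ fro A + fro B := by
  simp only [fro_eq_norm]; exact norm_sub_le _ _
theorem fro_smul (c : ℝ) (B : Matrix m k ℝ) : fro (c • B) = |c| * fro B := by
  simp only [fro_eq_norm]; exact norm_smul _ _
theorem fro_mul_le (A : Matrix m k ℝ) (B : Matrix k l ℝ) : fro (A * B) ≤ fro A * fro B := by
  simp only [fro_eq_norm]; exact Matrix.frobenius_norm_mul _ _
theorem fro_eq_zero {A : Matrix m k ℝ} (h : froSq A ≤ 0) : A = 0 := by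
  have h1 : fro A = 0 := by
    have := fro_sq A; have := fro_nonneg A; nlinarith
  rw [fro_eq_norm] at h1
  exact norm_eq_zero.1 h1
end

theorem abs_trace_le (A B : Matrix m k ℝ) : |trace (Aᵀ * B)| ≤ fro A * fro B := by
  have h : trace (Aᵀ * B) = ∑ x : m × k, A x.1 x.2 * B x.1 x.2 := by
    rw [Fintype.sum_prod_type, Finset.sum_comm]
    simp [trace, Matrix.mul_apply]
  have h2 : ∀ A : Matrix m k ℝ, froSq A = ∑ x : m × k, A x.1 x.2 ^ 2 := by
    intro A; rw [Fintype.sum_prod_type]; rfl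
  apply abs_le_of_sq_le_sq _ (mul_nonneg (fro_nonneg _) (fro_nonneg _))
  rw [mul_pow, fro_sq, fro_sq, h, h2, h2]
  exact Finset.sum_mul_sq_le_sq_mul_sq _ _ _

def phi (S : Matrix m m ℝ) (B : Matrix m k ℝ) : ℝ := trace (Bᵀ * (S * B))

theorem froSq_phi (G : Matrix m l ℝ) (B : Matrix m k ℝ) : froSq (Bᵀ * G) = phi (G * Gᵀ) B := by
  rw [froSq_trace', phi, transpose_mul, transpose_transpose]
  simp only [Matrix.mul_assoc]

theorem abs_phi_le (S : Matrix m m ℝ) (B : Matrix m k ℝ) : |phi S B| ≤ fro S * fro B ^ 2 := by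
  refine (abs_trace_le _ _).trans ?_
  have := mul_le_mul_of_nonneg_left (fro_mul_le S B) (fro_nonneg B)
  linarith [this]

theorem trace_symm (S : Matrix m m ℝ) (hS : Sᵀ = S) (A B : Matrix m k ℝ) :
    trace (Aᵀ * (S * B)) = trace (Bᵀ * (S * A)) := by
  rw [← trace_transpose]
  simp only [transpose_mul, transpose_transpose, hS, Matrix.mul_assoc]

theorem phi_add (S : Matrix m m ℝ) (hS : Sᵀ = S) (A E : Matrix m k ℝ) :
    phi S (A + E) = phi S A + 2 * trace (Eᵀ * (S * A)) + phi S E := by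
  simp only [phi, transpose_add, Matrix.mul_add, Matrix.add_mul, trace_add]
  rw [trace_symm S hS A E]; ring

theorem phi_sub_left (S S' : Matrix m m ℝ) (A : Matrix m k ℝ) :
    phi (S - S') A = phi S A - phi S' A := by
  simp [phi, Matrix.sub_mul, Matrix.mul_sub]

variable [DecidableEq k] [DecidableEq m] [DecidableEq l]

theorem froSq_stiefel {A : Matrix m k ℝ} (hA : Aᵀ * A = 1) : froSq A = Fintype.card k := by
  rw [froSq_trace, hA, trace_one]

theorem star_block {S : Matrix m m ℝ} (hS : Sᵀ = S) {A B : Matrix m k ℝ} (hA : Aᵀ * A = 1)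
    (hB : Bᵀ * B = 1) :
    |phi S B - phi S A| ≤ 2 * fro ((1 - A * Aᵀ) * (S * A)) * fro (B - A) +
      (fro A ^ 2 + 1) * fro S * fro (B - A) ^ 2 := by
  set E := B - A with hE
  have hBE : B = A + E := by rw [hE]; abel
  rw [hBE, phi_add S hS]
  have h0 : Eᵀ * A + Aᵀ * E = - (Eᵀ * E) := by
    have : (A + E)ᵀ * (A + E) = 1 := by rw [← hBE]; exact hB
    simp only [transpose_add, Matrix.mul_add, Matrix.add_mul, hA] at this
    have h2 : Eᵀ * A + Aᵀ * E + Eᵀ * E = 0 := by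
      have h3 : (1 : Matrix k k ℝ) + (Eᵀ * A + Aᵀ * E + Eᵀ * E) = 1 :=
        Eq.trans (by abel) this
      simpa using h3
    exact eq_neg_of_add_eq_zero_left h2
  obtain ⟨K, hK⟩ : ∃ K, K = Aᵀ * (S * A) := ⟨_, rfl⟩
  have hKs : Kᵀ = K := by rw [hK]; simp [transpose_mul, hS, Matrix.mul_assoc]
  have h1 : trace (Eᵀ * (S * A)) = trace (Eᵀ * ((1 - A * Aᵀ) * (S * A))) + trace (Eᵀ * A * K) := by
    rw [← trace_add, hK]
    simp only [Matrix.sub_mul, Matrix.mul_sub, Matrix.one_mul, Matrix.mul_assoc]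
    congr 1; abel
  have h2 : trace (Aᵀ * E * K) = trace (Eᵀ * A * K) := by
    rw [← trace_transpose]
    rw [transpose_mul, transpose_mul Aᵀ E, hKs, transpose_transpose, trace_mul_comm]
  have h3 : 2 * trace (Eᵀ * A * K) = - trace (Eᵀ * (E * K)) := by
    have : trace ((Eᵀ * A + Aᵀ * E) * K) = - trace (Eᵀ * (E * K)) := by
      rw [h0, Matrix.neg_mul, trace_neg, Matrix.mul_assoc]
    rw [Matrix.add_mul, trace_add, h2] at this
    linarith
  have e1 := abs_trace_le E ((1 - A * Aᵀ) * (S * A))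
  have e2 := abs_trace_le E (E * K)
  have e3 := abs_phi_le S E
  have e4 : fro (E * K) ≤ fro E * (fro S * fro A ^ 2) := by
    refine (fro_mul_le _ _).trans (mul_le_mul_of_nonneg_left ?_ (fro_nonneg _))
    rw [hK]
    refine (fro_mul_le _ _).trans ?_
    rw [fro_transpose]
    have := mul_le_mul_of_nonneg_left (fro_mul_le S A) (fro_nonneg A)
    linarith
  have e5 := mul_le_mul_of_nonneg_left e4 (fro_nonneg E)
  have h4 : phi S A + 2 * trace (Eᵀ * (S * A)) + phi S E - phi S A =
      2 * trace (Eᵀ * ((1 - A * Aᵀ) * (S * A))) - trace (Eᵀ * (E * K)) + phi S E := by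
    rw [h1]; linarith
  rw [h4]
  rw [abs_le] at e1 e2 e3 ⊢
  constructor <;> nlinarith

theorem first_order {S : Matrix m m ℝ} (hS : Sᵀ = S) {B : Matrix m k ℝ} (hB : Bᵀ * B = 1)
    (hmax : ∀ C : Matrix m k ℝ, Cᵀ * C = 1 → phi S C ≤ phi S B) :
    (1 - B * Bᵀ) * (S * B) = 0 := by
  obtain ⟨W, hW⟩ : ∃ W, W = (1 - B * Bᵀ) * (S * B) := ⟨_, rfl⟩
  rw [← hW]
  have hBW : Bᵀ * W = 0 := by
    have h : Bᵀ * (1 - B * Bᵀ) = 0 := by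
      rw [Matrix.mul_sub, Matrix.mul_one, ← Matrix.mul_assoc, hB, Matrix.one_mul, sub_self]
    rw [hW, ← Matrix.mul_assoc, h, Matrix.zero_mul]
  have hWB : Wᵀ * B = 0 := by
    rw [← transpose_transpose B, ← transpose_mul, hBW, transpose_zero]
  have hWS : Wᵀ * (S * B) = Wᵀ * W := by
    have h : W = S * B - B * (Bᵀ * (S * B)) := by
      rw [hW, Matrix.sub_mul, Matrix.one_mul, Matrix.mul_assoc]
    have h2 : Wᵀ * W = Wᵀ * (S * B - B * (Bᵀ * (S * B))) := congrArg (fun Q => Wᵀ * Q) h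
    rw [h2, Matrix.mul_sub, ← Matrix.mul_assoc Wᵀ B, hWB, Matrix.zero_mul, sub_zero]
  set Ω := W * Bᵀ - B * Wᵀ with hΩ
  have hΩt : Ωᵀ = - Ω := by rw [hΩ]; simp
  have hΩB : Ω * B = W := by
    rw [hΩ, Matrix.sub_mul, Matrix.mul_assoc W, hB, Matrix.mul_assoc B, hWB]; simp
  set Kc := 4 * fro Ω ^ 2 * fro B * fro (S * B) + 4 * fro S * fro Ω ^ 2 * fro B ^ 2 with hKc
  have hKc0 : 0 ≤ Kc := by
    have := fro_nonneg B; have := fro_nonneg (S * B); have := fro_nonneg S; positivity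
  have key : ∀ ε > 0, 4 * froSq W ≤ ε * Kc := by
    intro ε hε
    set R := 1 - ε • Ω with hR
    have hRt : Rᵀ = 1 + ε • Ω := by rw [hR]; simp [hΩt]
    have hcomm : R * Rᵀ = Rᵀ * R := by
      rw [hRt, hR]; simp only [Matrix.sub_mul, Matrix.mul_add, Matrix.add_mul, Matrix.mul_sub, Matrix.one_mul, Matrix.mul_one]
      abel
    have hpd : (Rᵀ * R).PosDef := by
      have : Rᵀ * R = 1 + (ε • Ω)ᴴ * (ε • Ω) := by
        rw [conjTranspose_eq_transpose_of_trivial, transpose_smul, hΩt, hRt, hR]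
        simp only [Matrix.sub_mul, Matrix.mul_add, Matrix.add_mul, Matrix.mul_sub, Matrix.one_mul, Matrix.mul_one, smul_neg, Matrix.neg_mul]
        abel
      rw [this]
      exact PosDef.one.add_posSemidef (posSemidef_conjTranspose_mul_self _)
    have hdet : IsUnit R.det := by
      have h1 : IsUnit (Rᵀ * R).det := (Matrix.isUnit_iff_isUnit_det _).1 hpd.isUnit
      rw [det_mul] at h1
      exact isUnit_of_mul_isUnit_right h1
    have hdett : IsUnit (Rᵀ).det := by rwa [det_transpose]
    obtain ⟨Y, hY⟩ : ∃ Y, Y = R⁻¹ * (Rᵀ * B) := ⟨_, rfl⟩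
    have hRY : R * Y = Rᵀ * B := by rw [hY, ← Matrix.mul_assoc, mul_nonsing_inv _ hdet, Matrix.one_mul]
    have hYY : Yᵀ * Y = 1 := by
      have h1 : Yᵀ = Bᵀ * (R * (Rᵀ)⁻¹) := by
        rw [hY]; simp [transpose_mul, transpose_nonsing_inv, Matrix.mul_assoc]
      have h2 : R * (Rᵀ)⁻¹ * R⁻¹ * Rᵀ = 1 := by
        have h3 : (Rᵀ)⁻¹ * R⁻¹ = R⁻¹ * (Rᵀ)⁻¹ := by
          rw [← Matrix.mul_inv_rev, ← Matrix.mul_inv_rev, hcomm]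
        rw [Matrix.mul_assoc R, h3, ← Matrix.mul_assoc, mul_nonsing_inv _ hdet, Matrix.one_mul,
          nonsing_inv_mul _ hdett]
      rw [h1, hY]
      calc Bᵀ * (R * (Rᵀ)⁻¹) * (R⁻¹ * (Rᵀ * B)) = Bᵀ * (R * (Rᵀ)⁻¹ * R⁻¹ * Rᵀ) * B := by
            simp only [Matrix.mul_assoc]
        _ = 1 := by rw [h2, Matrix.mul_one, hB]
    set E := Y - B with hE
    have hYBE : Y = B + E := by rw [hE]; abel
    have hE1 : E = ε • (Ω * (Y + B)) := by
      rw [hRt, hR, Matrix.sub_mul, Matrix.add_mul, Matrix.one_mul, Matrix.one_mul] at hRY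
      rw [hE, Matrix.mul_add, smul_add, ← smul_mul, ← smul_mul]
      rw [sub_eq_iff_eq_add] at hRY ⊢
      conv_lhs => rw [hRY]
      abel
    have hE2 : E = (2 * ε) • W + ε • (Ω * E) := by
      conv_lhs => rw [hE1]
      rw [show Y + B = B + B + E by rw [hE]; abel, Matrix.mul_add, Matrix.mul_add, hΩB, ← two_smul ℝ W,
        smul_add, smul_smul, mul_comm]
    have hfY : fro Y = fro B := by rw [fro, fro, froSq_stiefel hYY, froSq_stiefel hB]
    have hfE : fro E ≤ ε * (fro Ω * (2 * fro B)) := by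
      rw [hE1, fro_smul, abs_of_pos hε]
      apply mul_le_mul_of_nonneg_left _ hε.le
      refine (fro_mul_le _ _).trans (mul_le_mul_of_nonneg_left ?_ (fro_nonneg _))
      have := fro_add_le Y B
      linarith
    have h1 := hmax Y hYY
    rw [hYBE, phi_add S hS] at h1
    have h2 : trace (Eᵀ * (S * B)) = 2 * ε * froSq W + ε * trace ((Ω * E)ᵀ * (S * B)) := by
      conv_lhs => rw [hE2]
      rw [transpose_add, transpose_smul, transpose_smul, Matrix.add_mul, trace_add, smul_mul, smul_mul,
        trace_smul, trace_smul, hWS, ← froSq_trace, smul_eq_mul, smul_eq_mul]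
    have h3 := (abs_le.1 (abs_trace_le (Ω * E) (S * B))).1
    have h4 := (abs_le.1 (abs_phi_le S E)).1
    have h5 : fro (Ω * E) * fro (S * B) ≤ fro Ω * (ε * (fro Ω * (2 * fro B))) * fro (S * B) := by
      apply mul_le_mul_of_nonneg_right _ (fro_nonneg _)
      exact (fro_mul_le _ _).trans (mul_le_mul_of_nonneg_left hfE (fro_nonneg _))
    have h6 : fro S * fro E ^ 2 ≤ fro S * (ε * (fro Ω * (2 * fro B))) ^ 2 := by
      apply mul_le_mul_of_nonneg_left _ (fro_nonneg _)
      exact pow_le_pow_left₀ (fro_nonneg _) hfE 2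
    have h7 : ε * (4 * froSq W) ≤ ε * (ε * Kc) := by
      rw [h2] at h1
      have h8 := mul_le_mul_of_nonneg_left (h5) hε.le
      have h9 := mul_le_mul_of_nonneg_left (h3) hε.le
      rw [hKc]
      nlinarith
    exact le_of_mul_le_mul_left h7 hε
  apply fro_eq_zero
  by_contra hcon
  push Not at hcon
  have h1 := key (froSq W / (Kc + 1)) (by positivity)
  rw [div_mul_eq_mul_div, le_div_iff₀ (by positivity)] at h1
  nlinarith

end mat
end QE

end Chunk6

section Chunk7
open Matrix BigOperators Filter

namespace QE

section gap
variable {m k l p : Type} [Fintype m] [Fintype k] [Fintype l] [Fintype p]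
variable [DecidableEq k] [DecidableEq m]

structure GapData (S : Matrix m m ℝ) (B : Matrix m k ℝ) (lam mu : ℝ) : Prop where
  st : Bᵀ * B = 1
  sym : Sᵀ = S
  inv : (1 - B * Bᵀ) * (S * B) = 0
  lo : ∀ v : Matrix k m ℝ, lam * froSq v ≤ phi (Bᵀ * (S * B)) v
  hi : ∀ u : Matrix m k ℝ, Bᵀ * u = 0 → phi S u ≤ mu * froSq u

theorem froSq_eq_phi_one (A : Matrix m l ℝ) : froSq A = phi 1 A := by
  rw [froSq_trace, phi, Matrix.one_mul]

theorem phi_mul (S : Matrix m m ℝ) (V : Matrix m k ℝ) (Y : Matrix k l ℝ) :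
    phi S (V * Y) = phi (Vᵀ * (S * V)) Y := by
  simp only [phi, transpose_mul, Matrix.mul_assoc]

theorem proj_perp {V : Matrix m k ℝ} (hV : Vᵀ * V = 1) (A : Matrix m l ℝ) :
    Vᵀ * (A - V * (Vᵀ * A)) = 0 := by
  rw [Matrix.mul_sub, ← Matrix.mul_assoc Vᵀ V, hV, Matrix.one_mul, sub_self]

theorem phi_decomp {S : Matrix m m ℝ} {V : Matrix m k ℝ} (hV : Vᵀ * V = 1) (hS : Sᵀ = S)
    (hinv : (1 - V * Vᵀ) * (S * V) = 0) (A : Matrix m l ℝ) :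
    phi S A = phi (Vᵀ * (S * V)) (Vᵀ * A) + phi S (A - V * (Vᵀ * A)) := by
  obtain ⟨W, hW⟩ : ∃ W, W = A - V * (Vᵀ * A) := ⟨_, rfl⟩
  have hVW : Vᵀ * W = 0 := by rw [hW]; exact proj_perp hV A
  have hWV : Wᵀ * V = 0 := by rw [← transpose_transpose V, ← transpose_mul, hVW, transpose_zero]
  have hSV : S * V = V * (Vᵀ * (S * V)) := by
    rw [Matrix.sub_mul, Matrix.one_mul, sub_eq_zero, Matrix.mul_assoc] at hinv
    exact hinv
  have hA : A = V * (Vᵀ * A) + W := by rw [hW]; abel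
  have h0 : trace (Wᵀ * (S * (V * (Vᵀ * A)))) = 0 := by
    rw [← Matrix.mul_assoc S, hSV, Matrix.mul_assoc V, ← Matrix.mul_assoc Wᵀ, hWV, Matrix.zero_mul,
      trace_zero]
  rw [← hW]
  conv_lhs => rw [hA, phi_add S hS, h0, phi_mul]
  ring

theorem froSq_decomp {V : Matrix m k ℝ} (hV : Vᵀ * V = 1) (A : Matrix m l ℝ) :
    froSq A = froSq (Vᵀ * A) + froSq (A - V * (Vᵀ * A)) := by
  have := phi_decomp (S := 1) hV transpose_one (by
    rw [Matrix.one_mul, Matrix.sub_mul, Matrix.one_mul, Matrix.mul_assoc, hV, Matrix.mul_one, sub_self]) A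
  rw [froSq_eq_phi_one, this, froSq_eq_phi_one (A - _), Matrix.one_mul, hV, froSq_eq_phi_one (Vᵀ * A)]

theorem froSq_mul_le (A : Matrix m k ℝ) (B : Matrix k l ℝ) : froSq (A * B) ≤ froSq A * froSq B := by
  rw [← fro_sq, ← fro_sq, ← fro_sq, ← mul_pow]
  exact pow_le_pow_left₀ (fro_nonneg _) (fro_mul_le _ _) 2

theorem froSq_swap (A B : Matrix m k ℝ) : froSq (Aᵀ * B) = froSq (Bᵀ * A) := by
  rw [← froSq_transpose, transpose_mul, transpose_transpose]

theorem trace_phi (K : Matrix k k ℝ) : phi K (1 : Matrix k k ℝ) = trace K := by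
  simp [phi]

theorem theta_nonneg {A B : Matrix m k ℝ} (hA : Aᵀ * A = 1) (hB : Bᵀ * B = 1) :
    0 ≤ (Fintype.card k : ℝ) - froSq (Bᵀ * A) := by
  have := froSq_decomp hB A
  rw [froSq_stiefel hA] at this
  have := froSq_nonneg (A - B * (Bᵀ * A))
  linarith

theorem theta_eq {A B : Matrix m k ℝ} (hA : Aᵀ * A = 1) (hB : Bᵀ * B = 1) :
    froSq (A - B * (Bᵀ * A)) = (Fintype.card k : ℝ) - froSq (Bᵀ * A) := by
  have := froSq_decomp hB A
  rw [froSq_stiefel hA] at this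
  linarith

theorem gap_growth {S : Matrix m m ℝ} {B : Matrix m k ℝ} {lam mu : ℝ} (h : GapData S B lam mu)
    {A : Matrix m k ℝ} (hA : Aᵀ * A = 1) :
    (lam - mu) * (Fintype.card k - froSq (Bᵀ * A)) ≤ phi S B - phi S A := by
  have h1 := phi_decomp h.st h.sym h.inv A
  have h2 := h.hi _ (proj_perp h.st A)
  rw [theta_eq hA h.st] at h2
  obtain ⟨Z, hZ⟩ : ∃ Z, Z = B - A * (Aᵀ * B) := ⟨_, rfl⟩
  obtain ⟨K, hK⟩ : ∃ K, K = Bᵀ * (S * B) := ⟨_, rfl⟩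
  have h3 := h.lo Zᵀ
  rw [froSq_transpose, hZ, theta_eq h.st hA, ← hZ, ← hK, froSq_swap] at h3
  have h4 : phi K Zᵀ = phi S B - phi K (Bᵀ * A) := by
    have hAZ : Aᵀ * Z = 0 := by rw [hZ]; exact proj_perp hA B
    have hZZ : Zᵀ * Z = 1 - Bᵀ * A * (Bᵀ * A)ᵀ := by
      have e1 : Zᵀ * Z = Bᵀ * Z := by
        have : Zᵀ = Bᵀ - Bᵀ * A * Aᵀ := by rw [hZ]; simp [transpose_mul, Matrix.mul_assoc]
        rw [this, Matrix.sub_mul, Matrix.mul_assoc, hAZ, Matrix.mul_zero, sub_zero]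
      rw [e1, hZ, Matrix.mul_sub, h.st, transpose_mul, transpose_transpose, Matrix.mul_assoc]
    have e2 : phi K Zᵀ = trace (K * (Zᵀ * Z)) := by
      rw [phi, transpose_transpose, trace_mul_comm, Matrix.mul_assoc]
    have e3 : phi K (Bᵀ * A) = trace (K * (Bᵀ * A * (Bᵀ * A)ᵀ)) := by
      rw [phi, trace_mul_comm, Matrix.mul_assoc]
    rw [e2, e3, hZZ, Matrix.mul_sub, Matrix.mul_one, trace_sub, hK, phi]
  rw [← hK] at h1
  linarith

theorem stiefel_fro {A : Matrix m k ℝ} (hA : Aᵀ * A = 1) : fro A ^ 2 = Fintype.card k := by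
  rw [fro_sq, froSq_stiefel hA]

theorem robust {S₀ : Matrix m m ℝ} {V : Matrix m k ℝ} {lam mu : ℝ} (h : GapData S₀ V lam mu)
    (hlm : mu < lam) (hmu : 0 ≤ mu) (hpsd : ∀ u : Matrix m m ℝ, 0 ≤ phi S₀ u) :
    ∃ ρ > 0, ∃ γ > 0, ∀ S : Matrix m m ℝ, Sᵀ = S → fro (S - S₀) ≤ ρ → ∀ B : Matrix m k ℝ,
      Bᵀ * B = 1 → (∀ C : Matrix m k ℝ, Cᵀ * C = 1 → phi S C ≤ phi S B) →
      ∀ A : Matrix m k ℝ, Aᵀ * A = 1 →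
        γ * (Fintype.card k - froSq (Bᵀ * A)) ≤ phi S B - phi S A := by
  set r : ℝ := ((Fintype.card k : ℕ) : ℝ) with hr
  have hr0 : 0 ≤ r := by positivity
  set κ := fro (Vᵀ * (S₀ * V)) with hκ
  have hκ0 : 0 ≤ κ := fro_nonneg _
  set γ := lam - mu with hγ
  have hγ0 : 0 < γ := sub_pos.2 hlm
  set D := (lam + κ) * (2 * r / γ) + 2 with hD
  have hl0 : 0 < lam := hmu.trans_lt hlm
  have hD0 : 0 < D := by positivity
  refine ⟨γ / 2 / D, by positivity, γ / 2, by positivity, ?_⟩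
  intro S hS hρ B hB hmax A hA
  set ρ := γ / 2 / D with hρd
  have hρ0 : 0 < ρ := by positivity
  have hρD : ρ * D = γ / 2 := by rw [hρd]; field_simp
  have hdiff : ∀ (q : Type) [Fintype q] (u : Matrix m q ℝ), |phi S u - phi S₀ u| ≤ ρ * froSq u := by
    intro q _ u
    rw [← phi_sub_left, ← fro_sq]
    exact (abs_phi_le _ _).trans (mul_le_mul_of_nonneg_right hρ (sq_nonneg _))
  set θ := r - froSq (Vᵀ * B) with hθ
  have hθ0 : 0 ≤ θ := theta_nonneg hB h.st
  have hθ1 : γ * θ ≤ 2 * r * ρ := by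
    have g1 := gap_growth h hB
    have g2 := hmax V h.st
    have g3 := abs_le.1 (hdiff _ V)
    have g4 := abs_le.1 (hdiff _ B)
    rw [froSq_stiefel h.st] at g3
    rw [froSq_stiefel hB] at g4
    linarith [g3.1, g3.2, g4.1, g4.2]
  have hθ2 : θ ≤ ρ * (2 * r / γ) := by
    rw [mul_div_assoc', le_div_iff₀ hγ0]; linarith
  have t1 : froSq (B - V * (Vᵀ * B)) = θ := theta_eq hB h.st
  have t2 : froSq (V - B * (Bᵀ * V)) = θ := by rw [theta_eq h.st hB, froSq_swap]
  have hG : GapData S B (lam * (1 - θ) - ρ) (mu + κ * θ + ρ) := by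
    refine ⟨hB, hS, first_order hS hB hmax, ?_, ?_⟩
    · intro v
      rw [← phi_mul]
      have a1 := (abs_le.1 (hdiff _ (B * v))).1
      have a2 : froSq (B * v) = froSq v := by
        rw [froSq_eq_phi_one, phi_mul, Matrix.one_mul, hB, ← froSq_eq_phi_one]
      have a3 := phi_decomp h.st h.sym h.inv (B * v)
      have a4 := hpsd (B * v - V * (Vᵀ * (B * v)))
      have a5 := h.lo (Vᵀ * (B * v))
      have a6 := froSq_decomp h.st (B * v)
      have a7 : B * v - V * (Vᵀ * (B * v)) = (B - V * (Vᵀ * B)) * v := by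
        simp only [Matrix.sub_mul, Matrix.mul_assoc]
      have a8 := froSq_mul_le (B - V * (Vᵀ * B)) v
      rw [← a7, t1] at a8
      have a9 : lam * ((1 - θ) * froSq v) ≤ lam * froSq (Vᵀ * (B * v)) :=
        mul_le_mul_of_nonneg_left (by linarith) hl0.le
      rw [a2] at a1
      linarith
    · intro u hu
      have a1 := (abs_le.1 (hdiff _ u)).2
      have a3 := phi_decomp h.st h.sym h.inv u
      have a4 := h.hi _ (proj_perp h.st u)
      have a5 := (abs_le.1 (abs_phi_le (Vᵀ * (S₀ * V)) (Vᵀ * u))).2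
      rw [fro_sq, ← hκ] at a5
      have a6 := froSq_decomp h.st u
      have a7 : Vᵀ * u = (V - B * (Bᵀ * V))ᵀ * u := by
        rw [transpose_sub, Matrix.sub_mul, transpose_mul, Matrix.mul_assoc, hu, Matrix.mul_zero, sub_zero]
      have a8 := froSq_mul_le (V - B * (Bᵀ * V))ᵀ u
      rw [← a7, froSq_transpose, t2] at a8
      have a9 := mul_le_mul_of_nonneg_left a8 hκ0
      have a10 : mu * froSq (u - V * (Vᵀ * u)) ≤ mu * froSq u :=
        mul_le_mul_of_nonneg_left (by linarith [froSq_nonneg (Vᵀ * u)]) hmu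
      linarith
  refine le_trans (mul_le_mul_of_nonneg_right ?_ (theta_nonneg hA hB)) (gap_growth hG hA)
  have : (lam + κ) * θ ≤ (lam + κ) * (ρ * (2 * r / γ)) :=
    mul_le_mul_of_nonneg_left hθ2 (by positivity)
  have e : ρ * D = (lam + κ) * (ρ * (2 * r / γ)) + 2 * ρ := by rw [hD]; ring
  linarith

end gap
end QE

end Chunk7

section Chunk8
open Matrix BigOperators Filter

namespace QE

theorem phi_diag {k l : Type} [Fintype k] [Fintype l] [DecidableEq k] (d : k → ℝ) (Q : Matrix k l ℝ) :
    phi (diagonal d) Q = ∑ i, ∑ j, d i * Q i j ^ 2 := by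
  rw [phi, Finset.sum_comm]
  simp only [trace, diag_apply]
  refine Finset.sum_congr rfl fun i _ => ?_
  rw [Matrix.mul_apply]
  refine Finset.sum_congr rfl fun j _ => ?_
  rw [diagonal_mul, transpose_apply]; ring

theorem spectral {m : Type} [Fintype m] [DecidableEq m] {S : Matrix m m ℝ} (hS : S.IsHermitian) :
    ∃ U : Matrix m m ℝ, Uᵀ * U = 1 ∧ U * Uᵀ = 1 ∧ S * U = U * diagonal hS.eigenvalues := by
  refine ⟨(hS.eigenvectorUnitary : Matrix m m ℝ), ?_, ?_, ?_⟩
  · have := Unitary.coe_star_mul_self hS.eigenvectorUnitary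
    rwa [star_eq_conjTranspose, conjTranspose_eq_transpose_of_trivial] at this
  · have := Unitary.coe_mul_star_self hS.eigenvectorUnitary
    rwa [Unitary.coe_star, star_eq_conjTranspose, conjTranspose_eq_transpose_of_trivial] at this
  · have h := hS.spectral_theorem
    rw [Unitary.conjStarAlgAut_apply] at h
    have h2 := Unitary.coe_star_mul_self hS.eigenvectorUnitary
    have h3 := congrArg (fun Q => Q * (hS.eigenvectorUnitary : Matrix m m ℝ)) h
    refine h3.trans ?_
    rw [Matrix.mul_assoc, h2, Matrix.mul_one]
    rfl

theorem sorted_list {m : ℕ} (e : Fin m → ℝ) :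
    ∃ σ : Equiv.Perm (Fin m), Antitone (e ∘ σ) ∧
      (((Finset.univ : Finset (Fin m)).val.map e).sort (· ≤ ·)).reverse = List.ofFn (e ∘ σ) := by
  refine ⟨Tuple.sort (fun i => - e i), ?_, ?_⟩
  · intro i j hij
    have := Tuple.monotone_sort (fun i => - e i) hij
    simpa using this
  · apply List.Perm.eq_of_pairwise (le := fun a b => b ≤ a)
    · intro a b _ _ h1 h2; exact le_antisymm h2 h1
    · rw [List.pairwise_reverse]; exact Multiset.pairwise_sort _ _
    · rw [List.pairwise_ofFn]
      intro i j hij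
      have := Tuple.monotone_sort (fun i => - e i) hij.le
      simpa using this
    · refine (List.reverse_perm _).trans (List.Perm.trans ?_ (Equiv.Perm.ofFn_comp_perm _ _).symm)
      rw [← Multiset.coe_eq_coe, Multiset.sort_eq, Fin.univ_val_map]

theorem eig_gap {m r : ℕ} {κ : Type} [Fintype κ] (G : Matrix (Fin m) κ ℝ) (hrm : r ≤ m)
    (hgap : sval G (r + 1) < sval G r) :
    ∃ (V : Matrix (Fin m) (Fin r) ℝ) (lam mu : ℝ), mu < lam ∧ 0 ≤ mu ∧ GapData (G * Gᵀ) V lam mu := by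
  have hH : (G * Gᵀ).IsHermitian := by
    rw [← conjTranspose_eq_transpose_of_trivial]; exact isHermitian_mul_conjTranspose_self G
  set e := hH.eigenvalues with he
  have he' : (isHermitian_mul_conjTranspose_self G).eigenvalues = e := by
    rw [he]; congr 1
  obtain ⟨σ, hσ, hl⟩ := sorted_list e
  have hr : 0 < r := by
    rcases Nat.eq_zero_or_pos r with h | h
    · subst h; simp [sval] at hgap
    · exact h
  have hlist : eigList G = List.ofFn (e ∘ σ) := by
    rw [← hl, eigList, ← he']
  rw [sval, sval, hlist] at hgap
  have hlam : (List.ofFn (e ∘ σ)).getD (r - 1) 0 = e (σ ⟨r - 1, by omega⟩) := by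
    rw [List.getD_eq_getElem _ _ (by rw [List.length_ofFn]; omega)]
    simp
  rw [hlam] at hgap
  set lam := e (σ ⟨r - 1, by omega⟩) with hlamd
  set mu' := (List.ofFn (e ∘ σ)).getD (r + 1 - 1) 0 with hmu'
  have hlp : 0 < lam := Real.sqrt_pos.1 ((Real.sqrt_nonneg _).trans_lt hgap)
  have hml : mu' < lam := by
    by_contra hc
    push Not at hc
    exact absurd (Real.sqrt_le_sqrt hc) (not_le.2 hgap)
  obtain ⟨U, hU1, hU2, hSU⟩ := spectral hH
  rw [← he] at hSU
  set ι : Fin r → Fin m := fun t => σ (Fin.castLE hrm t) with hι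
  have hinj : Function.Injective ι := σ.injective.comp (Fin.castLE_injective hrm)
  have hlo : ∀ t, lam ≤ e (ι t) := by
    intro t
    exact hσ (show Fin.castLE hrm t ≤ ⟨r - 1, by omega⟩ from by
      rw [Fin.le_def]; simp only [Fin.val_castLE]; omega)
  have hhi : ∀ j, (∃ t, ι t = j) ∨ e j ≤ mu' := by
    intro j
    by_cases hj : (σ.symm j).val < r
    · left; exact ⟨⟨_, hj⟩, by simp [hι, Fin.castLE]⟩
    · right
      have hrm' : r < m := lt_of_le_of_lt (not_lt.1 hj) (σ.symm j).isLt
      have : mu' = e (σ ⟨r, hrm'⟩) := by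
        rw [hmu', Nat.add_sub_cancel, List.getD_eq_getElem _ _ (by rw [List.length_ofFn]; omega)]
        simp
      rw [this]
      have h := hσ (show (⟨r, hrm'⟩ : Fin m) ≤ σ.symm j from by
        rw [Fin.le_def]; exact not_lt.1 hj)
      simpa using h
  obtain ⟨S, hSd⟩ : ∃ S, S = G * Gᵀ := ⟨_, rfl⟩
  rw [← hSd] at hSU ⊢
  have hVV : (U.submatrix id ι)ᵀ * U.submatrix id ι = 1 := by
    have : (U.submatrix id ι)ᵀ * U.submatrix id ι = (Uᵀ * U).submatrix ι ι := rfl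
    rw [this, hU1, submatrix_one _ hinj]
  have hSV : S * U.submatrix id ι = U.submatrix id ι * diagonal (e ∘ ι) := by
    have h1 : S * U.submatrix id ι = (S * U).submatrix id ι := rfl
    rw [h1, hSU]
    ext i j
    simp [Matrix.mul_diagonal]
  refine ⟨U.submatrix id ι, lam, max mu' 0, max_lt hml hlp, le_max_right _ _, hVV, ?_, ?_, ?_, ?_⟩
  · rw [hSd, transpose_mul, transpose_transpose]
  · rw [hSV, ← Matrix.mul_assoc, Matrix.sub_mul, Matrix.one_mul, Matrix.mul_assoc (U.submatrix id ι), hVV, Matrix.mul_one,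
      sub_self, Matrix.zero_mul]
  · intro v
    rw [hSV, ← Matrix.mul_assoc, hVV, Matrix.one_mul, phi_diag, froSq, Finset.mul_sum]
    refine Finset.sum_le_sum fun i _ => ?_
    rw [Finset.mul_sum]
    exact Finset.sum_le_sum fun j _ => mul_le_mul_of_nonneg_right (hlo i) (sq_nonneg _)
  · intro u hu
    have h1 : u = U * (Uᵀ * u) := by rw [← Matrix.mul_assoc, hU2, Matrix.one_mul]
    have h2 : phi S u = phi (diagonal e) (Uᵀ * u) := by
      conv_lhs => rw [h1, phi_mul, hSU, ← Matrix.mul_assoc, hU1, Matrix.one_mul]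
    have h3 : froSq u = froSq (Uᵀ * u) := by
      rw [froSq_eq_phi_one, froSq_eq_phi_one (Uᵀ * u)]
      conv_lhs => rw [h1, phi_mul, Matrix.one_mul, hU1]
    rw [h2, h3, phi_diag, froSq, Finset.mul_sum]
    refine Finset.sum_le_sum fun i _ => ?_
    rw [Finset.mul_sum]
    refine Finset.sum_le_sum fun j _ => ?_
    rcases hhi i with ⟨t, ht⟩ | h
    · have : (Uᵀ * u) i j = 0 := by
        rw [← ht]
        exact congrFun (congrFun hu t) j
      rw [this]; simp
    · exact mul_le_mul_of_nonneg_right (h.trans (le_max_left _ _)) (sq_nonneg _)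

end QE

end Chunk8

section Chunk9
open Matrix BigOperators Filter

namespace QE

theorem polar {m k : Type} [Fintype m] [Fintype k] [DecidableEq m] [DecidableEq k]
    {A B : Matrix m k ℝ} (hA : Aᵀ * A = 1) (hB : Bᵀ * B = 1) :
    ∃ O : Matrix k k ℝ, Oᵀ * O = 1 ∧
      froSq (B * O - A) ≤ (4 * Fintype.card k + 2) * (Fintype.card k - froSq (Bᵀ * A)) := by
  obtain ⟨r, hr⟩ : ∃ r : ℝ, r = ((Fintype.card k : ℕ) : ℝ) := ⟨_, rfl⟩
  have hr0 : 0 ≤ r := by rw [hr]; positivity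
  obtain ⟨θ, hθ⟩ : ∃ θ : ℝ, θ = r - froSq (Bᵀ * A) := ⟨_, rfl⟩
  have hθ0 : 0 ≤ θ := by rw [hθ, hr]; exact theta_nonneg hA hB
  rw [← hr, ← hθ]
  have hfA : fro A ^ 2 = r := by rw [stiefel_fro hA, hr]
  have hfB : fro B ^ 2 = r := by rw [stiefel_fro hB, hr]
  rcases le_or_gt 1 θ with h1 | h1
  · refine ⟨1, by simp, ?_⟩
    rw [Matrix.mul_one, ← fro_sq]
    have h2 := pow_le_pow_left₀ (fro_nonneg _) (fro_sub_le B A) 2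
    have h3 : (fro B + fro A) ^ 2 ≤ 4 * r := by nlinarith [sq_nonneg (fro B - fro A)]
    nlinarith
  · obtain ⟨Y, hY⟩ : ∃ Y, Y = Bᵀ * A := ⟨_, rfl⟩
    have hK : (Yᵀ * Y).IsHermitian := by
      rw [← conjTranspose_eq_transpose_of_trivial]; exact isHermitian_conjTranspose_mul_self Y
    obtain ⟨U, hU1, hU2, hKU⟩ := spectral hK
    set e := hK.eigenvalues with he
    obtain ⟨P, hP⟩ : ∃ P, P = Y * U := ⟨_, rfl⟩
    have hPP : Pᵀ * P = diagonal e := by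
      rw [hP, transpose_mul, Matrix.mul_assoc, ← Matrix.mul_assoc Yᵀ, hKU, ← Matrix.mul_assoc, hU1,
        Matrix.one_mul]
    obtain ⟨W, hW⟩ : ∃ W, W = A - B * Y := ⟨_, rfl⟩
    have hWW : Wᵀ * W = 1 - Yᵀ * Y := by
      have hBW : Bᵀ * W = 0 := by rw [hW, hY]; exact proj_perp hB A
      have : Wᵀ * W = Aᵀ * W := by
        have h : Wᵀ = Aᵀ - Yᵀ * Bᵀ := by rw [hW, transpose_sub, transpose_mul]
        rw [h, Matrix.sub_mul, Matrix.mul_assoc, hBW, Matrix.mul_zero, sub_zero]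
      have h2 : Aᵀ * B = Yᵀ := by rw [hY, transpose_mul, transpose_transpose]
      rw [this, hW, Matrix.mul_sub, hA, ← Matrix.mul_assoc, h2]
    have hQQ : (W * U)ᵀ * (W * U) = 1 - diagonal e := by
      rw [transpose_mul, Matrix.mul_assoc, ← Matrix.mul_assoc Wᵀ, hWW, Matrix.sub_mul, Matrix.one_mul,
        hKU, Matrix.mul_sub, hU1, ← Matrix.mul_assoc, hU1, Matrix.one_mul]
    have he1 : ∀ i, e i ≤ 1 := by
      intro i
      have h := congrFun (congrFun hQQ i) i
      rw [Matrix.sub_apply, Matrix.one_apply_eq, diagonal_apply_eq, Matrix.mul_apply] at h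
      have : 0 ≤ ∑ j, (W * U)ᵀ i j * (W * U) j i :=
        Finset.sum_nonneg fun j _ => mul_self_nonneg _
      linarith
    have hsum : ∑ i, (1 - e i) = θ := by
      have h : froSq Y = ∑ i, e i := by
        have e1 : froSq P = froSq Y := by
          rw [hP, froSq_trace', transpose_mul, Matrix.mul_assoc, ← Matrix.mul_assoc U, hU2,
            Matrix.one_mul, ← froSq_trace']
        rw [← e1, froSq_trace, hPP, trace_diagonal]
      rw [Finset.sum_sub_distrib, hθ, ← hY, h, hr]; simp
    have hepos : ∀ i, 0 < e i := by
      intro i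
      have := Finset.single_le_sum (f := fun i => 1 - e i) (fun j _ => sub_nonneg.2 (he1 j)) (Finset.mem_univ i)
      linarith
    obtain ⟨s, hs⟩ : ∃ s : k → ℝ, s = fun i => (Real.sqrt (e i))⁻¹ := ⟨_, rfl⟩
    have hse : ∀ i, s i * e i = Real.sqrt (e i) := by
      intro i
      have h1 := Real.sqrt_pos.2 (hepos i)
      have h2 := Real.mul_self_sqrt (hepos i).le
      rw [hs]; simp only
      rw [inv_mul_eq_div, div_eq_iff h1.ne', h2]
    have hses : ∀ i, s i * (e i * s i) = 1 := by
      intro i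
      have h1 := Real.sqrt_pos.2 (hepos i)
      rw [← mul_assoc, hse, hs]; simp only
      exact mul_inv_cancel₀ h1.ne'
    have hOO : (P * (diagonal s * Uᵀ))ᵀ * (P * (diagonal s * Uᵀ)) = 1 := by
      have : (P * (diagonal s * Uᵀ))ᵀ * (P * (diagonal s * Uᵀ)) =
          U * (diagonal s * ((Pᵀ * P) * diagonal s)) * Uᵀ := by
        simp only [transpose_mul, transpose_transpose, diagonal_transpose, Matrix.mul_assoc]
      rw [this, hPP, diagonal_mul_diagonal, diagonal_mul_diagonal]
      simp only [hses]
      rw [diagonal_one, Matrix.mul_one, hU2]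
    refine ⟨P * (diagonal s * Uᵀ), hOO, ?_⟩
    obtain ⟨O, hO⟩ : ∃ O, O = P * (diagonal s * Uᵀ) := ⟨_, rfl⟩
    rw [← hO] at hOO ⊢
    have htr : trace (Oᵀ * Y) = ∑ i, Real.sqrt (e i) := by
      have : trace (Oᵀ * Y) = trace (diagonal s * (Pᵀ * P)) := by
        rw [hO]
        conv_rhs => rw [hP, ← Matrix.mul_assoc, ← Matrix.mul_assoc, trace_mul_comm, ← hP]
        simp only [transpose_mul, transpose_transpose, diagonal_transpose, Matrix.mul_assoc]
      rw [this, hPP, diagonal_mul_diagonal, trace_diagonal]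
      exact Finset.sum_congr rfl fun i _ => hse i
    have hfro : froSq (B * O - A) = 2 * r - 2 * trace (Oᵀ * Y) := by
      have hBO : (B * O)ᵀ * (B * O) = 1 := by
        rw [transpose_mul, Matrix.mul_assoc, ← Matrix.mul_assoc Bᵀ, hB, Matrix.one_mul, hOO]
      have t1 : Aᵀ * (B * O) = (Oᵀ * Y)ᵀ := by rw [hY]; simp [transpose_mul, Matrix.mul_assoc]
      have t2 : (B * O)ᵀ * A = Oᵀ * Y := by rw [hY]; simp [transpose_mul, Matrix.mul_assoc]
      rw [froSq_trace, transpose_sub, Matrix.sub_mul, Matrix.mul_sub, Matrix.mul_sub, hBO, hA, t1, t2,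
        trace_sub, trace_sub, trace_sub, trace_transpose, trace_one, ← hr]
      ring
    have hge : r - θ ≤ ∑ i, Real.sqrt (e i) := by
      have : r - θ = ∑ i, e i := by rw [← hsum, Finset.sum_sub_distrib, hr]; simp
      rw [this]
      refine Finset.sum_le_sum fun i _ => ?_
      apply Real.le_sqrt_of_sq_le
      nlinarith [he1 i, hepos i]
    rw [hfro, htr]
    nlinarith

theorem block_descent {m r : ℕ} {κ : Type} [Fintype κ] (G : Matrix (Fin m) κ ℝ) (hrm : r ≤ m)
    (hgap : sval G (r + 1) < sval G r) :
    ∃ ρ > 0, ∃ c > 0, ∀ S : Matrix (Fin m) (Fin m) ℝ, Sᵀ = S → fro (S - G * Gᵀ) ≤ ρ →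
      ∀ A B : Matrix (Fin m) (Fin r) ℝ, Aᵀ * A = 1 →
      Bᵀ * B = 1 → (∀ C : Matrix (Fin m) (Fin r) ℝ, Cᵀ * C = 1 → phi S C ≤ phi S B) →
      (∀ D : Matrix (Fin m) (Fin r) ℝ, Dᵀ * D = 1 →
        (∀ C : Matrix (Fin m) (Fin r) ℝ, Cᵀ * C = 1 → phi S C ≤ phi S D) → fro (B - A) ≤ fro (D - A)) →
      c * froSq (B - A) ≤ phi S B - phi S A := by
  obtain ⟨V, lam, mu, h1, h2, hG⟩ := eig_gap G hrm hgap
  obtain ⟨ρ, hρ, γ, hγ, hrob⟩ := robust hG h1 h2 (fun u => by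
    rw [← froSq_phi]; exact froSq_nonneg _)
  refine ⟨ρ, hρ, γ / (4 * Fintype.card (Fin r) + 2), by positivity, ?_⟩
  intro S hS hSρ A B hA hB hmax hgr
  have h3 := hrob S hS hSρ B hB hmax A hA
  obtain ⟨O, hO, hOle⟩ := polar hA hB
  have hBO : (B * O)ᵀ * (B * O) = 1 := by
    rw [transpose_mul, Matrix.mul_assoc, ← Matrix.mul_assoc Bᵀ, hB, Matrix.one_mul, hO]
  have hphi : phi S (B * O) = phi S B := by
    rw [phi_mul, phi, phi, trace_mul_comm, Matrix.mul_assoc, mul_eq_one_comm.1 hO, Matrix.mul_one]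
  have h4 := hgr (B * O) hBO (by intro C hC; rw [hphi]; exact hmax C hC)
  have h5 : froSq (B - A) ≤ froSq (B * O - A) := by
    rw [← fro_sq, ← fro_sq]; exact pow_le_pow_left₀ (fro_nonneg _) h4 2
  refine le_trans ?_ h3
  rw [div_mul_eq_mul_div, div_le_iff₀ (by positivity)]
  calc γ * froSq (B - A) ≤ γ * _ := mul_le_mul_of_nonneg_left (h5.trans hOle) hγ.le
    _ = _ := by ring

end QE

end Chunk9

section Chunk10
open Matrix BigOperators Filter

namespace QE

section hooi
variable {N : ℕ} {I r : Fin N → ℕ}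

theorem Gmat_congr (X : ((n : Fin N) → Fin (I n)) → ℝ)
    {A B : (n : Fin N) → Matrix (Fin (I n)) (Fin (r n)) ℝ} (n : Fin N)
    (h : ∀ i, i ≠ n → A i = B i) : Gmat X A n = Gmat X B n := by
  funext j c
  unfold Gmat
  refine Finset.sum_congr rfl fun idx _ => ?_
  congr 1
  refine Finset.prod_congr rfl fun m _ => ?_
  rw [h m.1 m.2]

theorem fval_eq (X : ((n : Fin N) → Fin (I n)) → ℝ)
    (A : (n : Fin N) → Matrix (Fin (I n)) (Fin (r n)) ℝ) (n : Fin N) :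
    fval X A = froSq ((A n)ᵀ * Gmat X A n) := by
  unfold fval froSq
  rw [← Fintype.sum_prod_type']
  refine Fintype.sum_equiv (Equiv.piSplitAt n (fun n => Fin (r n))) _ _ fun c => ?_
  congr 1
  rw [Matrix.mul_apply]
  unfold Gmat
  simp only [Finset.mul_sum]
  rw [← Fintype.sum_prod_type']
  refine Fintype.sum_equiv (Equiv.piSplitAt n (fun n => Fin (I n))) _ _ fun idx => ?_
  have h1 : (fun i => if h : i = n then
      Fin.cast (by rw [h]) ((Equiv.piSplitAt n (fun n => Fin (I n))) idx).1
      else ((Equiv.piSplitAt n (fun n => Fin (I n))) idx).2 ⟨i, h⟩ : (i : Fin N) → Fin (I i)) = idx := by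
    funext i
    by_cases h : i = n
    · subst h; simp [Equiv.piSplitAt]
    · simp [h, Equiv.piSplitAt]
  rw [h1, Fintype.prod_eq_mul_prod_subtype_ne _ n]
  simp only [Equiv.piSplitAt, Equiv.coe_fn_mk, transpose_apply]
  ring

noncomputable def Sn (X : ((n : Fin N) → Fin (I n)) → ℝ)
    (A : (n : Fin N) → Matrix (Fin (I n)) (Fin (r n)) ℝ) (n : Fin N) :
    Matrix (Fin (I n)) (Fin (I n)) ℝ := Gmat X A n * (Gmat X A n)ᵀ

theorem Sn_symm (X : ((n : Fin N) → Fin (I n)) → ℝ)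
    (A : (n : Fin N) → Matrix (Fin (I n)) (Fin (r n)) ℝ) (n : Fin N) : (Sn X A n)ᵀ = Sn X A n := by
  rw [Sn, transpose_mul, transpose_transpose]

theorem fval_phi (X : ((n : Fin N) → Fin (I n)) → ℝ)
    (A : (n : Fin N) → Matrix (Fin (I n)) (Fin (r n)) ℝ) (n : Fin N) :
    fval X A = phi (Sn X A n) (A n) := by
  rw [fval_eq X A n, froSq_phi, Sn]

theorem telescope (X : ((n : Fin N) → Fin (I n)) → ℝ)
    (A B : (n : Fin N) → Matrix (Fin (I n)) (Fin (r n)) ℝ) :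
    fval X B - fval X A =
      ∑ n, (phi (Sn X (hyb A B n) n) (B n) - phi (Sn X (hyb A B n) n) (A n)) := by
  set H : ℕ → (n : Fin N) → Matrix (Fin (I n)) (Fin (r n)) ℝ :=
    fun k i => if i.val < k then B i else A i with hH
  have h1 : fval X B - fval X A = ∑ k ∈ Finset.range N, (fval X (H (k+1)) - fval X (H k)) := by
    rw [Finset.sum_range_sub (fun k => fval X (H k))]
    have q1 : H N = B := by funext i; simp [hH]
    have q2 : H 0 = A := by funext i; simp [hH]
    rw [q1, q2]
  rw [h1, ← Fin.sum_univ_eq_sum_range (fun k => fval X (H (k+1)) - fval X (H k))]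
  refine Finset.sum_congr rfl fun n _ => ?_
  rw [fval_phi X _ n, fval_phi X (H n) n]
  have e1 : H n = hyb A B n := rfl
  have e2 : Gmat X (H (n + 1)) n = Gmat X (hyb A B n) n := by
    rw [← e1]
    apply Gmat_congr
    intro i hi
    have : i.val ≠ n.val := fun h => hi (Fin.ext h)
    simp only [hH]
    by_cases h : i.val < n.val
    · rw [if_pos h, if_pos (by omega)]
    · rw [if_neg h, if_neg (by omega)]
  have e3 : H (n + 1) n = B n := by simp [hH]
  have e4 : hyb A B n n = A n := by simp [hyb]
  rw [e3, e1, e4]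
  simp only [Sn]
  rw [e2]

/-- index type of all coordinates -/
abbrev JJ (I r : Fin N → ℕ) : Type := Σ n : Fin N, Fin (I n) × Fin (r n)

def flat (A : (n : Fin N) → Matrix (Fin (I n)) (Fin (r n)) ℝ) : JJ I r → ℝ :=
  fun j => A j.1 j.2.1 j.2.2

def unf (x : JJ I r → ℝ) : (n : Fin N) → Matrix (Fin (I n)) (Fin (r n)) ℝ :=
  fun n i t => x ⟨n, (i, t)⟩

theorem unf_flat (A : (n : Fin N) → Matrix (Fin (I n)) (Fin (r n)) ℝ) : unf (flat A) = A := rfl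
theorem flat_unf (x : JJ I r → ℝ) : flat (unf x) = x := rfl

def MM (I r : Fin N → ℕ) : Set (JJ I r → ℝ) := {x | TFeas (unf x)}

theorem poly_unf (n : Fin N) (i : Fin (I n)) (t : Fin (r n)) :
    PolyFun (fun x : JJ I r → ℝ => unf x n i t) := PolyFun.coord _

theorem poly_Gmat (X : ((n : Fin N) → Fin (I n)) → ℝ) (n : Fin N) (i) (c) :
    PolyFun (fun x : JJ I r → ℝ => Gmat X (unf x) n i c) := by
  unfold Gmat
  refine PolyFun.sum _ fun idx _ => (PolyFun.const _).mul (PolyFun.prod _ fun m _ => poly_unf _ _ _)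

theorem poly_Sn (X : ((n : Fin N) → Fin (I n)) → ℝ) (n : Fin N) (i j) :
    PolyFun (fun x : JJ I r → ℝ => Sn X (unf x) n i j) := by
  simp only [Sn, Matrix.mul_apply, transpose_apply]
  exact PolyFun.sum _ fun c _ => (poly_Gmat X n i c).mul (poly_Gmat X n j c)

theorem poly_fval (X : ((n : Fin N) → Fin (I n)) → ℝ) :
    PolyFun (fun x : JJ I r → ℝ => fval X (unf x)) := by
  unfold fval
  exact PolyFun.sum _ fun c _ => (PolyFun.sum _ fun idx _ => (PolyFun.const _).mul
    (PolyFun.prod _ fun m _ => poly_unf _ _ _)).pow 2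

noncomputable def hval (X : ((n : Fin N) → Fin (I n)) → ℝ)
    (A : (n : Fin N) → Matrix (Fin (I n)) (Fin (r n)) ℝ) : ℝ :=
  ∑ n, froSq ((1 - A n * (A n)ᵀ) * (Sn X A n * A n))

theorem poly_mul {ι : Type} {m k l : Type} [Fintype k] {P : (ι → ℝ) → Matrix m k ℝ}
    {Q : (ι → ℝ) → Matrix k l ℝ}
    (hP : ∀ i j, PolyFun (fun x => P x i j)) (hQ : ∀ i j, PolyFun (fun x => Q x i j)) :
    ∀ i j, PolyFun (fun x => (P x * Q x) i j) := by
  intro i j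
  simp only [Matrix.mul_apply]
  exact PolyFun.sum _ fun c _ => (hP i c).mul (hQ c j)

theorem poly_hval (X : ((n : Fin N) → Fin (I n)) → ℝ) :
    PolyFun (fun x : JJ I r → ℝ => hval X (unf x)) := by
  unfold hval froSq
  refine PolyFun.sum _ fun n _ => PolyFun.sum _ fun i _ => PolyFun.sum _ fun j _ => PolyFun.pow ?_ 2
  refine poly_mul ?_ (poly_mul (poly_Sn X n) (poly_unf n)) i j
  intro i j
  simp only [Matrix.sub_apply]
  exact (PolyFun.const _).sub (poly_mul (poly_unf n) (fun i j => poly_unf n j i) i j)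

theorem SA_MM : SA (MM I r) := by
  refine (SA.forall_fin (Finset.univ : Finset (Σ n : Fin N, Fin (r n) × Fin (r n)))
    (p := fun a x => ((unf x a.1)ᵀ * unf x a.1) a.2.1 a.2.2 =
      (1 : Matrix (Fin (r a.1)) (Fin (r a.1)) ℝ) a.2.1 a.2.2) ?_).congr ?_
  · intro a
    exact SA.eq (poly_mul (fun i j => poly_unf a.1 j i) (poly_unf a.1) _ _) (PolyFun.const _)
  · intro x
    simp only [MM, TFeas, Set.mem_ofPred_eq]
    constructor
    · intro h a _; rw [h]
    · intro h n; ext i j; exact h ⟨n, (i, j)⟩ (Finset.mem_univ _)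

theorem MM_ball : MM I r ⊆ Metric.closedBall 0 1 := by
  intro x hx
  rw [mem_closedBall_zero_iff, pi_norm_le_iff_of_nonneg zero_le_one]
  rintro ⟨n, i, t⟩
  have h := congrFun (congrFun (hx n) t) t
  rw [Matrix.one_apply_eq, Matrix.mul_apply] at h
  have h2 := Finset.single_le_sum (f := fun i => (unf x n)ᵀ t i * unf x n i t)
    (fun j _ => mul_self_nonneg _) (Finset.mem_univ i)
  rw [h] at h2
  rw [Real.norm_eq_abs]
  apply abs_le_one_iff_mul_self_le_one.2
  exact h2

theorem MM_compact : IsCompact (MM I r) := by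
  apply (isCompact_closedBall (0 : JJ I r → ℝ) 1).of_isClosed_subset _ MM_ball
  have : MM I r = ⋂ n : Fin N, ⋂ s : Fin (r n), ⋂ t : Fin (r n),
      {x : JJ I r → ℝ | ((unf x n)ᵀ * unf x n) s t = (1 : Matrix (Fin (r n)) (Fin (r n)) ℝ) s t} := by
    ext x
    simp only [MM, TFeas, Set.mem_iInter, Set.mem_ofPred_eq]
    constructor
    · intro h n s t; rw [h]
    · intro h n; ext s t; exact h n s t
  rw [this]
  refine isClosed_iInter fun n => isClosed_iInter fun s => isClosed_iInter fun t => ?_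
  exact isClosed_eq (poly_mul (fun i j => poly_unf n j i) (poly_unf n) s t).continuous continuous_const

theorem poly_lip {J : Type} [Fintype J] {F : (J → ℝ) → ℝ} (hF : PolyFun F) :
    ∃ L : ℝ, 0 ≤ L ∧ ∀ x ∈ Metric.closedBall (0 : J → ℝ) 1, |F x| ≤ L ∧
      ∀ y ∈ Metric.closedBall (0 : J → ℝ) 1, |F x - F y| ≤ L * ‖x - y‖ := by
  have hc := isCompact_closedBall (0 : J → ℝ) 1
  obtain ⟨K, hK⟩ := LocallyLipschitzOn.exists_lipschitzOnWith_of_compact hc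
    (hF.contDiff.locallyLipschitz.locallyLipschitzOn)
  obtain ⟨L, hL⟩ := hc.exists_bound_of_continuousOn hF.continuous.continuousOn
  refine ⟨max K L, le_trans K.2 (le_max_left _ _), fun x hx => ⟨(hL x hx).trans (le_max_right _ _), ?_⟩⟩
  intro y hy
  have := hK.dist_le_mul x hx y hy
  rw [Real.dist_eq, dist_eq_norm] at this
  exact this.trans (mul_le_mul_of_nonneg_right (le_max_left _ _) (norm_nonneg _))

theorem fro_le_entries {m k : Type} [Fintype m] [Fintype k] {Q : Matrix m k ℝ} {b : ℝ}
    (h : ∀ i j, |Q i j| ≤ b) (hb : 0 ≤ b) : fro Q ≤ Fintype.card m * Fintype.card k * b := by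
  apply Real.sqrt_le_iff.2 ⟨by positivity, ?_⟩
  have h1 : froSq Q ≤ ∑ i : m, ∑ j : k, b ^ 2 := by
    refine Finset.sum_le_sum fun i _ => Finset.sum_le_sum fun j _ => ?_
    rw [← sq_abs]; exact pow_le_pow_left₀ (abs_nonneg _) (h i j) 2
  simp only [Finset.sum_const, Finset.card_univ, nsmul_eq_mul] at h1
  refine h1.trans ?_
  have h2 : ((Fintype.card m * Fintype.card k : ℕ) : ℝ) ≤ ((Fintype.card m * Fintype.card k : ℕ) : ℝ) ^ 2 := by
    exact_mod_cast Nat.le_self_pow two_ne_zero _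
  push_cast at h2
  have := mul_le_mul_of_nonneg_right h2 (sq_nonneg b)
  linarith

theorem Sn_lip (X : ((n : Fin N) → Fin (I n)) → ℝ) :
    ∃ L : ℝ, 0 ≤ L ∧ ∀ A : (n : Fin N) → Matrix (Fin (I n)) (Fin (r n)) ℝ, TFeas A → ∀ n,
      fro (Sn X A n) ≤ L ∧ ∀ B : (n : Fin N) → Matrix (Fin (I n)) (Fin (r n)) ℝ, TFeas B →
        fro (Sn X A n - Sn X B n) ≤ L * ‖flat A - flat B‖ := by
  choose L hL0 hL using fun (n : Fin N) (i j : Fin (I n)) => poly_lip (poly_Sn (r := r) X n i j)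
  have hLs : ∀ n i j, L n i j ≤ ∑ n, ∑ i, ∑ j, L n i j := by
    intro n i j
    calc L n i j ≤ ∑ j, L n i j := Finset.single_le_sum (f := fun j => L n i j) (fun _ _ => hL0 _ _ _) (Finset.mem_univ j)
      _ ≤ ∑ i, ∑ j, L n i j := Finset.single_le_sum (f := fun i => ∑ j, L n i j)
          (fun _ _ => Finset.sum_nonneg fun _ _ => hL0 _ _ _) (Finset.mem_univ i)
      _ ≤ _ := Finset.single_le_sum (f := fun n => ∑ i, ∑ j, L n i j)
          (fun _ _ => Finset.sum_nonneg fun _ _ => Finset.sum_nonneg fun _ _ => hL0 _ _ _) (Finset.mem_univ n)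
  set Ls := ∑ n, ∑ i, ∑ j, L n i j with hLsd
  have hLs0 : 0 ≤ Ls := Finset.sum_nonneg fun _ _ => Finset.sum_nonneg fun _ _ =>
    Finset.sum_nonneg fun _ _ => hL0 _ _ _
  have hIs : ∀ n, (I n : ℝ) * I n ≤ ∑ n, (I n : ℝ) * I n := fun n =>
    Finset.single_le_sum (f := fun n => (I n : ℝ) * I n) (fun _ _ => by positivity) (Finset.mem_univ n)
  refine ⟨(∑ n, (I n : ℝ) * I n) * Ls, by positivity, fun A hA n => ⟨?_, fun B hB => ?_⟩⟩
  · have h := fro_le_entries (Q := Sn X A n) (b := Ls)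
      (fun i j => ((hL n i j (flat A) (MM_ball hA)).1).trans (hLs n i j)) hLs0
    simp only [Fintype.card_fin] at h
    exact h.trans (mul_le_mul_of_nonneg_right (hIs n) hLs0)
  · have h := fro_le_entries (Q := Sn X A n - Sn X B n) (b := Ls * ‖flat A - flat B‖)
      (fun i j => ((hL n i j (flat A) (MM_ball hA)).2 (flat B) (MM_ball hB)).trans
        (mul_le_mul_of_nonneg_right (hLs n i j) (norm_nonneg _))) (by positivity)
    simp only [Fintype.card_fin] at h
    refine h.trans ?_
    rw [mul_assoc _ Ls]
    exact mul_le_mul_of_nonneg_right (hIs n) (by positivity)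

end hooi
end QE

end Chunk10

section Chunk11
open Matrix BigOperators Filter

namespace QE

theorem proj_fro_le {m k l : Type} [Fintype m] [Fintype k] [Fintype l] [DecidableEq m] [DecidableEq k]
    {B : Matrix m k ℝ} (hB : Bᵀ * B = 1) (Q : Matrix m l ℝ) : fro ((1 - B * Bᵀ) * Q) ≤ fro Q := by
  apply Real.sqrt_le_sqrt
  have h := froSq_decomp hB Q
  have : (1 - B * Bᵀ) * Q = Q - B * (Bᵀ * Q) := by
    rw [Matrix.sub_mul, Matrix.one_mul, Matrix.mul_assoc]
  rw [this]
  have := froSq_nonneg (Bᵀ * Q)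
  linarith

section hooi
variable {N : ℕ} {I r : Fin N → ℕ}

theorem fro_bound : ∃ R : ℝ, 0 ≤ R ∧ ∀ A : (n : Fin N) → Matrix (Fin (I n)) (Fin (r n)) ℝ,
    TFeas A → ∀ n, fro (A n) ≤ R := by
  refine ⟨1 + ∑ n, (r n : ℝ), by positivity, fun A hA n => ?_⟩
  apply Real.sqrt_le_iff.2 ⟨by positivity, ?_⟩
  rw [froSq_stiefel (hA n), Fintype.card_fin]
  have h : (r n : ℝ) ≤ ∑ n, (r n : ℝ) :=
    Finset.single_le_sum (f := fun n => (r n : ℝ)) (fun _ _ => by positivity) (Finset.mem_univ n)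
  have : 0 ≤ (r n : ℝ) := by positivity
  nlinarith

theorem fro_le_flat : ∃ κ : ℝ, 0 ≤ κ ∧ ∀ A B : (n : Fin N) → Matrix (Fin (I n)) (Fin (r n)) ℝ,
    ∀ n, fro (A n - B n) ≤ κ * ‖flat A - flat B‖ := by
  refine ⟨∑ n, (I n : ℝ) * r n, by positivity, fun A B n => ?_⟩
  have h := fro_le_entries (Q := A n - B n) (b := ‖flat A - flat B‖)
    (fun i j => norm_le_pi_norm (flat A - flat B) ⟨n, (i, j)⟩) (norm_nonneg _)
  simp only [Fintype.card_fin] at h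
  refine h.trans (mul_le_mul_of_nonneg_right ?_ (norm_nonneg _))
  exact Finset.single_le_sum (f := fun n => (I n : ℝ) * r n) (fun _ _ => by positivity) (Finset.mem_univ n)

theorem entry_le_fro {m k : Type} [Fintype m] [Fintype k] (Q : Matrix m k ℝ) (i : m) (j : k) :
    |Q i j| ≤ fro Q := by
  apply Real.abs_le_sqrt
  calc Q i j ^ 2 ≤ ∑ j, Q i j ^ 2 :=
        Finset.single_le_sum (f := fun j => Q i j ^ 2) (fun _ _ => sq_nonneg _) (Finset.mem_univ j)
    _ ≤ _ := Finset.single_le_sum (f := fun i => ∑ j, Q i j ^ 2)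
        (fun _ _ => Finset.sum_nonneg fun _ _ => sq_nonneg _) (Finset.mem_univ i)

theorem flat_le_of_fro {A B : (n : Fin N) → Matrix (Fin (I n)) (Fin (r n)) ℝ} {b : ℝ} (hb : 0 ≤ b)
    (h : ∀ n, fro (A n - B n) ≤ b) : ‖flat A - flat B‖ ≤ b := by
  rw [pi_norm_le_iff_of_nonneg hb]
  rintro ⟨n, i, t⟩
  exact (entry_le_fro (A n - B n) i t).trans (h n)

theorem flat_le_tdist (A B : (n : Fin N) → Matrix (Fin (I n)) (Fin (r n)) ℝ) :
    ‖flat A - flat B‖ ≤ tdist A B := by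
  apply flat_le_of_fro (Real.sqrt_nonneg _)
  intro n
  apply Real.sqrt_le_sqrt
  exact Finset.single_le_sum (f := fun n => froSq (A n - B n)) (fun _ _ => froSq_nonneg _) (Finset.mem_univ n)

theorem hyb_feas {A B : (n : Fin N) → Matrix (Fin (I n)) (Fin (r n)) ℝ} (hA : TFeas A) (hB : TFeas B)
    (n : Fin N) : TFeas (hyb A B n) := by
  intro i
  unfold hyb
  split_ifs
  · exact hB i
  · exact hA i

theorem hyb_dist_left (A B : (n : Fin N) → Matrix (Fin (I n)) (Fin (r n)) ℝ) (n : Fin N) :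
    ‖flat (hyb A B n) - flat A‖ ≤ ‖flat A - flat B‖ := by
  rw [pi_norm_le_iff_of_nonneg (norm_nonneg _)]
  rintro ⟨i, s, t⟩
  rw [Pi.sub_apply, flat, flat, hyb]
  split_ifs
  · rw [norm_sub_rev]; exact norm_le_pi_norm (flat A - flat B) ⟨i, s, t⟩
  · simp

theorem hyb_dist_right (A B : (n : Fin N) → Matrix (Fin (I n)) (Fin (r n)) ℝ) (n : Fin N) :
    ‖flat B - flat (hyb A B n)‖ ≤ ‖flat A - flat B‖ := by
  rw [pi_norm_le_iff_of_nonneg (norm_nonneg _)]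
  rintro ⟨i, s, t⟩
  rw [Pi.sub_apply, flat, flat, hyb]
  split_ifs
  · simp
  · rw [norm_sub_rev]; exact norm_le_pi_norm (flat A - flat B) ⟨i, s, t⟩

theorem hval_nonneg (X : ((n : Fin N) → Fin (I n)) → ℝ)
    (A : (n : Fin N) → Matrix (Fin (I n)) (Fin (r n)) ℝ) : 0 ≤ hval X A :=
  Finset.sum_nonneg fun _ _ => froSq_nonneg _

theorem block_le_sqrt_h (X : ((n : Fin N) → Fin (I n)) → ℝ)
    (A : (n : Fin N) → Matrix (Fin (I n)) (Fin (r n)) ℝ) (n : Fin N) :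
    fro ((1 - A n * (A n)ᵀ) * (Sn X A n * A n)) ≤ Real.sqrt (hval X A) := by
  obtain ⟨F, hF⟩ : ∃ F : Fin N → ℝ, ∀ n, F n = froSq ((1 - A n * (A n)ᵀ) * (Sn X A n * A n)) :=
    ⟨_, fun _ => rfl⟩
  have h : hval X A = ∑ n, F n := by
    rw [hval]; exact Finset.sum_congr rfl fun n _ => (hF n).symm
  rw [fro, ← hF, h]
  apply Real.sqrt_le_sqrt
  exact Finset.single_le_sum (f := F) (fun i _ => by rw [hF]; exact froSq_nonneg _) (Finset.mem_univ n)

theorem star_all (X : ((n : Fin N) → Fin (I n)) → ℝ) :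
    ∃ C > 0, ∀ A B : (n : Fin N) → Matrix (Fin (I n)) (Fin (r n)) ℝ, TFeas A → TFeas B →
      |fval X B - fval X A| ≤
        C * (Real.sqrt (hval X A) * ‖flat A - flat B‖ + ‖flat A - flat B‖ ^ 2) := by
  obtain ⟨L, hL0, hL⟩ := Sn_lip (r := r) X
  obtain ⟨R, hR0, hR⟩ := fro_bound (I := I) (r := r)
  obtain ⟨κ, hκ0, hκ⟩ := fro_le_flat (I := I) (r := r)
  set c := 2 * κ + 2 * (L * R * κ) + (R ^ 2 + 1) * L * κ ^ 2 with hc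
  have hc0 : 0 ≤ c := by positivity
  refine ⟨N * c + 1, by positivity, fun A B hA hB => ?_⟩
  set d := ‖flat A - flat B‖ with hd
  have hd0 : 0 ≤ d := norm_nonneg _
  set q := Real.sqrt (hval X A) with hq
  have hq0 : 0 ≤ q := Real.sqrt_nonneg _
  have hterm : ∀ n, |phi (Sn X (hyb A B n) n) (B n) - phi (Sn X (hyb A B n) n) (A n)| ≤
      c * (q * d + d ^ 2) := by
    intro n
    obtain ⟨S, hS⟩ : ∃ S, S = Sn X (hyb A B n) n := ⟨_, rfl⟩
    have hH := hyb_feas hA hB n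
    have h1 := star_block (Sn_symm X (hyb A B n) n) (hA n) (hB n)
    have hSL : fro S ≤ L := by rw [hS]; exact (hL _ hH n).1
    have hSd : fro (S - Sn X A n) ≤ L * d := by
      rw [hS]
      exact ((hL _ hH n).2 A hA).trans (mul_le_mul_of_nonneg_left (hyb_dist_left A B n) hL0)
    rw [← hS] at h1 ⊢
    have hE : fro (B n - A n) ≤ κ * d := by
      have := hκ B A n; rwa [norm_sub_rev] at this
    have hRn := hR A hA n
    have h2 : fro ((1 - A n * (A n)ᵀ) * (S * A n)) ≤ q + L * d * R := by
      have e : (1 - A n * (A n)ᵀ) * (S * A n) = (1 - A n * (A n)ᵀ) * (Sn X A n * A n) +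
          (1 - A n * (A n)ᵀ) * ((S - Sn X A n) * A n) := by
        rw [← Matrix.mul_add, ← Matrix.add_mul]; congr 2; abel
      rw [e]
      refine (fro_add_le _ _).trans (add_le_add ?_ ?_)
      · exact block_le_sqrt_h X A n
      · refine (proj_fro_le (hA n) _).trans ((fro_mul_le _ _).trans ?_)
        exact mul_le_mul hSd hRn (fro_nonneg _) (by positivity)
    refine h1.trans ?_
    have t1 : 2 * fro ((1 - A n * (A n)ᵀ) * (S * A n)) * fro (B n - A n) ≤
        2 * (q + L * d * R) * (κ * d) :=
      mul_le_mul (by linarith) hE (fro_nonneg _) (by positivity)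
    have t2 : (fro (A n) ^ 2 + 1) * fro S * fro (B n - A n) ^ 2 ≤ (R ^ 2 + 1) * L * (κ * d) ^ 2 := by
      refine mul_le_mul (mul_le_mul ?_ hSL (fro_nonneg _) (by positivity))
        (pow_le_pow_left₀ (fro_nonneg _) hE 2) (sq_nonneg _) (by positivity)
      have := pow_le_pow_left₀ (fro_nonneg _) hRn 2
      linarith
    have t3 : 0 ≤ q * d := by positivity
    have t4 : 0 ≤ d ^ 2 := by positivity
    have t5 : c * (q * d + d ^ 2) - (2 * (q + L * d * R) * (κ * d) + (R ^ 2 + 1) * L * (κ * d) ^ 2) =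
        2 * κ * d ^ 2 + (2 * (L * R * κ) + (R ^ 2 + 1) * L * κ ^ 2) * (q * d) := by rw [hc]; ring
    have t6 : 0 ≤ 2 * κ * d ^ 2 + (2 * (L * R * κ) + (R ^ 2 + 1) * L * κ ^ 2) * (q * d) := by positivity
    linarith
  rw [telescope]
  refine (Finset.abs_sum_le_sum_abs _ _).trans ((Finset.sum_le_sum fun n _ => hterm n).trans ?_)
  simp only [Finset.sum_const, Finset.card_univ, Fintype.card_fin, nsmul_eq_mul]
  have : 0 ≤ q * d + d ^ 2 := by positivity
  nlinarith

theorem sqrt_h_le (X : ((n : Fin N) → Fin (I n)) → ℝ) :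
    ∃ C > 0, ∀ A B : (n : Fin N) → Matrix (Fin (I n)) (Fin (r n)) ℝ, TFeas A → TFeas B →
      (∀ n, ∀ C : Matrix (Fin (I n)) (Fin (r n)) ℝ, Cᵀ * C = 1 →
        phi (Sn X (hyb A B n) n) C ≤ phi (Sn X (hyb A B n) n) (B n)) →
      Real.sqrt (hval X B) ≤ C * ‖flat A - flat B‖ := by
  obtain ⟨L, hL0, hL⟩ := Sn_lip (r := r) X
  obtain ⟨R, hR0, hR⟩ := fro_bound (I := I) (r := r)
  refine ⟨N * (L * R) + 1, by positivity, fun A B hA hB hmax => ?_⟩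
  set d := ‖flat A - flat B‖ with hd
  have hd0 : 0 ≤ d := norm_nonneg _
  have hterm : ∀ n, froSq ((1 - B n * (B n)ᵀ) * (Sn X B n * B n)) ≤ (L * d * R) ^ 2 := by
    intro n
    have h1 := first_order (Sn_symm X (hyb A B n) n) (hB n) (hmax n)
    have e : (1 - B n * (B n)ᵀ) * (Sn X B n * B n) =
        (1 - B n * (B n)ᵀ) * ((Sn X B n - Sn X (hyb A B n) n) * B n) := by
      rw [Matrix.sub_mul (Sn X B n), Matrix.mul_sub _ (Sn X B n * B n), h1, sub_zero]
    rw [e, ← fro_sq]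
    refine pow_le_pow_left₀ (fro_nonneg _) ?_ 2
    refine (proj_fro_le (hB n) _).trans ((fro_mul_le _ _).trans ?_)
    refine mul_le_mul ?_ (hR B hB n) (fro_nonneg _) (by positivity)
    exact ((hL B hB n).2 _ (hyb_feas hA hB n)).trans (mul_le_mul_of_nonneg_left (hyb_dist_right A B n) hL0)
  have hs : hval X B ≤ N * (L * d * R) ^ 2 := by
    refine (Finset.sum_le_sum fun n _ => hterm n).trans ?_
    simp
  apply Real.sqrt_le_iff.2 ⟨by positivity, ?_⟩
  refine hs.trans ?_
  have h2 : (N : ℝ) ≤ (N : ℝ) ^ 2 := by exact_mod_cast Nat.le_self_pow two_ne_zero _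
  have h3 : (N : ℝ) * (L * d * R) ^ 2 ≤ (N * (L * R) * d) ^ 2 := by
    have := mul_le_mul_of_nonneg_right h2 (sq_nonneg (L * d * R))
    nlinarith
  refine h3.trans (pow_le_pow_left₀ (by positivity) ?_ 2)
  nlinarith

theorem exists_pos_le (f : Fin N → ℝ) (hf : ∀ n, 0 < f n) : ∃ ε > 0, ∀ n, ε ≤ f n := by
  rcases isEmpty_or_nonempty (Fin N) with h | h
  · exact ⟨1, one_pos, fun n => h.elim n⟩
  · obtain ⟨n, hn⟩ := Finite.exists_min f
    exact ⟨f n, hf n, hn⟩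

theorem descent (hr : ∀ n, r n ≤ I n) (X : ((n : Fin N) → Fin (I n)) → ℝ)
    (As : (n : Fin N) → Matrix (Fin (I n)) (Fin (r n)) ℝ) (hs : GlobalMax X As) (hnd : NonDeg X As) :
    ∃ c > 0, ∃ ρ > 0, ∃ η > 0, ∀ A B : (n : Fin N) → Matrix (Fin (I n)) (Fin (r n)) ℝ,
      TFeas A → TFeas B →
      (∀ n, ∀ C : Matrix (Fin (I n)) (Fin (r n)) ℝ, Cᵀ * C = 1 →
        phi (Sn X (hyb A B n) n) C ≤ phi (Sn X (hyb A B n) n) (B n)) →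
      (∀ n, ∀ D : Matrix (Fin (I n)) (Fin (r n)) ℝ, Dᵀ * D = 1 →
        (∀ C : Matrix (Fin (I n)) (Fin (r n)) ℝ, Cᵀ * C = 1 →
          phi (Sn X (hyb A B n) n) C ≤ phi (Sn X (hyb A B n) n) D) →
        fro (B n - A n) ≤ fro (D - A n)) →
      ‖flat A - flat As‖ ≤ ρ → fval X As - fval X A ≤ η →
      c * ‖flat B - flat A‖ ^ 2 ≤ fval X B - fval X A := by
  obtain ⟨L, hL0, hL⟩ := Sn_lip (r := r) X
  choose ρn hρn cn hcn hbd using fun n => block_descent (Gmat X As n) (hr n) (hnd n)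
  obtain ⟨ρ0, hρ0, hρ0le⟩ := exists_pos_le ρn hρn
  obtain ⟨c0, hc0, hc0le⟩ := exists_pos_le cn hcn
  obtain ⟨ρ1, hρ1, hLρ⟩ : ∃ ρ1 > 0, L * ρ1 ≤ ρ0 := by
    refine ⟨ρ0 / (L + 1), by positivity, ?_⟩
    rw [mul_div_assoc', div_le_iff₀ (by positivity)]; nlinarith
  refine ⟨c0, hc0, ρ1 / 2, by positivity, c0 * (ρ1 / 2) ^ 2, by positivity, ?_⟩
  intro A B hA hB hmax hgr hd hη
  set Δ : Fin N → ℝ := fun n => phi (Sn X (hyb A B n) n) (B n) - phi (Sn X (hyb A B n) n) (A n) with hΔ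
  have hΔ0 : ∀ n, 0 ≤ Δ n := fun n => sub_nonneg.2 (hmax n (A n) (hA n))
  have htel : fval X B - fval X A = ∑ n, Δ n := telescope X A B
  have hΔη : ∀ n, Δ n ≤ c0 * (ρ1 / 2) ^ 2 := by
    intro n
    have h1 : Δ n ≤ ∑ n, Δ n := Finset.single_le_sum (fun n _ => hΔ0 n) (Finset.mem_univ n)
    have h2 := hs.2 B hB
    linarith
  have hstep : ∀ k : ℕ, ∀ n : Fin N, n.val = k → c0 * froSq (B n - A n) ≤ Δ n := by
    intro k
    induction k using Nat.strong_induction_on with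
    | _ k ih =>
      intro n hn
      have hball : ‖flat (hyb A B n) - flat A‖ ≤ ρ1 / 2 := by
        apply flat_le_of_fro (by positivity)
        intro i
        unfold hyb
        split_ifs with hi
        · have h1 := (ih i.val (by rw [← hn]; exact hi) i rfl).trans (hΔη i)
          have h2 := le_of_mul_le_mul_left h1 hc0
          exact Real.sqrt_le_iff.2 ⟨by positivity, h2⟩
        · have : fro (A i - A i) = 0 := by simp [fro, froSq]
          rw [this]; positivity
      have hball2 : ‖flat (hyb A B n) - flat As‖ ≤ ρ1 := by
        have := norm_sub_le_norm_sub_add_norm_sub (flat (hyb A B n)) (flat A) (flat As)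
        linarith
      have hS : fro (Sn X (hyb A B n) n - Sn X As n) ≤ ρn n :=
        ((hL _ (hyb_feas hA hB n) n).2 As hs.1).trans
          ((mul_le_mul_of_nonneg_left hball2 hL0).trans (hLρ.trans (hρ0le n)))
      have h3 := hbd n (Sn X (hyb A B n) n) (Sn_symm _ _ _) hS (A n) (B n) (hA n) (hB n) (hmax n) (hgr n)
      exact (mul_le_mul_of_nonneg_right (hc0le n) (froSq_nonneg _)).trans h3
  have hsum : c0 * ∑ n, froSq (B n - A n) ≤ ∑ n, Δ n := by
    rw [Finset.mul_sum]; exact Finset.sum_le_sum fun n _ => hstep _ n rfl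
  have hfl : ‖flat B - flat A‖ ^ 2 ≤ ∑ n, froSq (B n - A n) := by
    have h := pow_le_pow_left₀ (norm_nonneg _) (flat_le_tdist B A) 2
    rwa [tdist, Real.sq_sqrt (Finset.sum_nonneg fun _ _ => froSq_nonneg _)] at h
  rw [htel]
  exact (mul_le_mul_of_nonneg_left hfl hc0.le).trans hsum

end hooi
end QE
end Chunk11

/-- Every greedy HOOI sequence starting sufficiently close to a
block-nondegenerate globally optimal solution converges to a globally optimal
solution. -/
theorem stmt14 {N : ℕ} {I r : Fin N → ℕ} (hr : ∀ n, r n ≤ I n)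
    (X : ((n : Fin N) → Fin (I n)) → ℝ)
    (Astar : (n : Fin N) → Matrix (Fin (I n)) (Fin (r n)) ℝ)
    (hstar : GlobalMax X Astar) (hnd : NonDeg X Astar) :
    ∃ δ > (0 : ℝ), ∀ A : ℕ → (n : Fin N) → Matrix (Fin (I n)) (Fin (r n)) ℝ,
      IsGreedyHOOI X A → tdist (A 0) Astar ≤ δ →
      ∃ Abar : (n : Fin N) → Matrix (Fin (I n)) (Fin (r n)) ℝ,
        TFeas Abar ∧ GlobalMax X Abar ∧
        ∀ n, Filter.Tendsto (fun k => fro (A k n - Abar n)) Filter.atTop (nhds 0) := by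
  obtain ⟨C, hC, hst⟩ := QE.star_all (r := r) X
  obtain ⟨C₁, hC₁, hsq⟩ := QE.sqrt_h_le (r := r) X
  obtain ⟨c, hc, ρ, hρ, η, hη, hdesc⟩ := QE.descent hr X Astar hstar hnd
  obtain ⟨κ, hκ0, hκ⟩ := QE.fro_le_flat (I := I) (r := r)
  obtain ⟨δ, hδ, hconv⟩ := QE.KL_conv (QE.MM_compact (I := I) (r := r)) QE.SA_MM
    (g := fun x => fval X Astar - fval X (QE.unf x)) (h := fun x => QE.hval X (QE.unf x))
    ((QE.PolyFun.const _).sub (QE.poly_fval X)) (QE.poly_hval X)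
    (fun x hx => sub_nonneg.2 (hstar.2 _ hx)) (fun x _ => QE.hval_nonneg _ _) C hC
    (by
      intro x hx y hy
      have h := hst (QE.unf x) (QE.unf y) hx hy
      rw [QE.flat_unf, QE.flat_unf] at h
      refine le_trans (le_of_eq ?_) h
      congr 1; ring)
    c C₁ ρ η hc hC₁ hρ hη (QE.flat Astar) (by rw [QE.unf_flat]; exact sub_self _)
  refine ⟨δ, hδ, fun A hA hd => ?_⟩
  obtain ⟨⟨hfeas, hmax⟩, hgr⟩ := hA
  simp only [Gseq, QE.froSq_phi] at hmax hgr
  obtain ⟨xb, hxb, hlim, hgb⟩ := hconv (fun k => QE.flat (A k)) hfeas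
    ((QE.flat_le_tdist _ _).trans hd)
    (by
      intro k h1 h2
      have h := hdesc (A k) (A (k + 1)) (hfeas k) (hfeas _) (hmax k) (hgr k) h1 h2
      refine h.trans (le_of_eq ?_)
      simp only [QE.unf_flat]
      ring)
    (by
      intro k
      have h := hsq (A k) (A (k + 1)) (hfeas k) (hfeas _) (hmax k)
      rw [norm_sub_rev] at h
      exact h)
  have hval : fval X (QE.unf xb) = fval X Astar := (sub_eq_zero.1 hgb).symm
  refine ⟨QE.unf xb, hxb, ⟨hxb, fun B hB => ?_⟩, fun n => ?_⟩
  · rw [hval]; exact hstar.2 B hB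
  · have h1 : Filter.Tendsto (fun k => κ * ‖QE.flat (A k) - xb‖) Filter.atTop (nhds 0) := by
      have := (tendsto_iff_norm_sub_tendsto_zero.1 hlim).const_mul κ
      simpa using this
    refine squeeze_zero (fun k => QE.fro_nonneg _) (fun k => ?_) h1
    exact hκ (A k) (QE.unf xb) n
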